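/- arXiv:1304.2649 — 2 statements merged into one kernel-verified Lean document; each statement's English description precedes it below -/
import Mathlib

section
/- Let K be a field equipped with two commuting ring endomorphisms φ and σ, set k := K^φ = {a ∈ K | φ(a) = a} (a subfield stable under σ), and assume k is σ-closed: for every commutative k-algebra B equipped with a ring endomorphism σ_B satisfying σ_B(algebraMap k B c) = algebraMap k B (σ(c)) for all c ∈ k, which is an integral domain with σ_B injective and which is finitely σ-generated over k (B is generated as a k-algebra by the σ_B-orbits of a finite set), there exists a k-algebra homomorphism B → k commuting with the σ's. Let R be a σ-PV ring over K for some equation φ(y) = A y with A ∈ GL_n(K). Then R has no new Φ-constants: every r ∈ R with Φ(r) = r lies in the image of k under the algebra map K → R. -/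
/-- A `φ`-ring `R` is `φ`-simple if the zero ideal and the whole ring are its only
`φ`-ideals (ideals `I` with `φ(I) ⊆ I`). -/
def DiffSimple {R : Type*} [CommRing R] (φ : R →+* R) : Prop :=
  (⊥ : Ideal R) ≠ ⊤ ∧ ∀ I : Ideal R, (∀ x ∈ I, φ x ∈ I) → I = ⊥ ∨ I = ⊤

/-- An ideal `p` of a ring with endomorphism `σ` is `σ`-pseudo prime if
`p = q ∩ σ⁻¹(q) ∩ … ∩ σ^{-(d-1)}(q)` for some `d ≥ 1` and some `σ^d`-prime ideal `q`. -/
def PseudoPrime {R : Type*} [CommRing R] (σ : R →+* R) (p : Ideal R) : Prop :=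
  ∃ d : ℕ, 1 ≤ d ∧ ∃ q : Ideal R, q.IsPrime ∧ Ideal.comap (σ ^ d) q = q ∧
    p = ⨅ i ∈ Finset.range d, Ideal.comap (σ ^ i) q

/-- A ring with endomorphism `φ` is a `φ`-pseudo domain if its zero ideal is
`φ`-pseudo prime. -/
def PseudoDomain {R : Type*} [CommRing R] (φ : R →+* R) : Prop :=
  PseudoPrime φ (⊥ : Ideal R)

/-- The subfield of `φ`-constants of a field `K` with endomorphism `φ`. -/
def constSubfield (K : Type*) [Field K] (φ : K →+* K) : Subfield K where
  carrier := {a : K | φ a = a}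
  mul_mem' := by intro a b ha hb; simp only [Set.mem_setOf_eq, map_mul] at *; rw [ha, hb]
  one_mem' := by simp
  add_mem' := by intro a b ha hb; simp only [Set.mem_setOf_eq, map_add] at *; rw [ha, hb]
  zero_mem' := by simp
  neg_mem' := by intro a ha; simp only [Set.mem_setOf_eq, map_neg] at *; rw [ha]
  inv_mem' := by intro a ha; simp only [Set.mem_setOf_eq, map_inv₀] at *; rw [ha]

theorem mem_constSubfield {K : Type*} [Field K] (φ : K →+* K) (a : K) :
    a ∈ constSubfield K φ ↔ φ a = a := Iff.rfl

/-- The restriction of `σ` to the subfield of `φ`-constants, for commuting `φ`, `σ`. -/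
def sigmaRes {K : Type*} [Field K] (φ σ : K →+* K)
    (hcomm : ∀ a : K, φ (σ a) = σ (φ a)) :
    ↥(constSubfield K φ) →+* ↥(constSubfield K φ) where
  toFun a := ⟨σ ↑a, (hcomm ↑a).trans (congrArg σ a.2)⟩
  map_one' := by ext; simp
  map_mul' a b := by ext; simp
  map_zero' := by ext; simp
  map_add' a b := by ext; simp

/-
Replacing a fundamental matrix `Y` by `U_j = diag(σ^j Y, det (σ^j Y)⁻¹)` makes all matrices
unimodular: `Φ U_j = A_j U_j`, `σ U_j = U_{j+1}`, and `R` is the union of the algebras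
`K[U_0, …, U_{n-1}]`. The constants of `R` form a field `C`. If `Ω` is an algebraic closure of `C`
to which `σ` is extended, then `S = R ⊗_C Ω` is `Φ`-simple with constants `Ω`, so it suffices to
show that a constant `c ∈ Ω` with the following property lies in `k = K^φ`: for `a ∈ k` different
from `c`, the element `c - a` is invertible in some `K[U_0, …, U_{n-1}]`.

There are `z_j ∈ SL(Ω)` such that `K[y_0, …, y_{i-1}]`, `y_j = U_j z_j`, is `Φ`-simple for `i = e`
and `i = e + 1`, where `e` is so large that the relations of `U_e` over `ΩK[U_0, …, U_{e-1}]`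
determine those of `U_{e+i}` over `ΩK[U_0, …, U_{e+i-1}]` by applying `σ^i`. As `k` is
`σ`-closed, the finitely `σ`-generated `k`-algebra `B ⊆ Ω` containing `c` and the entries of the
`z_j` has a `σ`-point `g : B → k`. By linear disjointness `g` induces a retraction of
`K[y_0, …, y_{e-1}] B = K[y_0, …, y_{e-1}] ⊗_k B`, whose kernel is a proper `Φ`-ideal containing
`c - g(c)`. Over a `Φ`-simple ring the `Φ`-stable modules of relations are direct summands, hence
the ideals of relations are compatible with base change; this allows the kernel to be prolonged, by
amalgamation with its `σ`-translates, to proper ideals of `BK[U_0, …, U_{n-1}]` for all `n`. So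
`c - g(c)` is not invertible in any of these rings, and `c = g(c)`.
-/

section

open Module MvPolynomial

section DiffSimple

variable {R : Type*} [CommRing R] {Φ : R →+* R}

theorem diffSimple_of_field {K : Type*} [Field K] (φ : K →+* K) : DiffSimple φ :=
  ⟨bot_ne_top, fun I _ => eq_bot_or_eq_top I⟩

namespace DiffSimple

theorem nontrivial (h : DiffSimple Φ) : Nontrivial R := by
  by_contra hR
  rw [not_nontrivial_iff_subsingleton] at hR
  exact h.1 (Subsingleton.elim _ _)

theorem isUnit_of_fixed (h : DiffSimple Φ) {c : R} (hc : Φ c = c) (h0 : c ≠ 0) : IsUnit c := by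
  have hst : ∀ x ∈ Ideal.span {c}, Φ x ∈ Ideal.span {c} := fun x hx => by
    obtain ⟨a, rfl⟩ := Ideal.mem_span_singleton'.1 hx
    rw [map_mul, hc]
    exact Ideal.mul_mem_left _ _ (Ideal.mem_span_singleton_self c)
  exact Ideal.span_singleton_eq_top.1 ((h.2 _ hst).resolve_left
    fun hI => h0 (Ideal.span_singleton_eq_bot.1 hI))

-- A nonzero element of minimal support is, up to a scalar, fixed: by minimality it is determined
-- by any one of its nonzero coefficients, which simplicity allows to be `1`.
theorem exists_fixed_of_stable (h : DiffSimple Φ) {κ : Type*} {N : Submodule R (κ →₀ R)}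
    (hN : ∀ x ∈ N, x.mapRange Φ (map_zero Φ) ∈ N) {x : κ →₀ R} (hx : x ∈ N) (hx0 : x ≠ 0) :
    ∃ y ∈ N, y.mapRange Φ (map_zero Φ) = y ∧ y.support ⊆ x.support ∧ ∃ i, x i ≠ 0 ∧ y i = 1 := by
  classical
  obtain ⟨z, ⟨hzN, hz0, hzx⟩, hmin⟩ := WellFounded.has_min
    (measure fun z : κ →₀ R => z.support.card).wf
    {z | z ∈ N ∧ z ≠ 0 ∧ z.support ⊆ x.support} ⟨x, hx, hx0, subset_rfl⟩
  obtain ⟨i, hi⟩ := Finsupp.support_nonempty_iff.2 hz0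
  have eq_zero : ∀ w ∈ N, w.support ⊆ z.support → w i = 0 → w = 0 := fun w hwN hwz hwi => by
    by_contra hw0
    exact hmin w ⟨hwN, hw0, hwz.trans hzx⟩ (Finset.card_lt_card
      ((Finset.ssubset_iff_of_subset hwz).2 ⟨i, hi, Finsupp.notMem_support_iff.2 hwi⟩))
  let I : Ideal R := (N ⊓ Finsupp.supported R R (z.support : Set κ)).map (Finsupp.lapply i)
  have mem_I : ∀ r, r ∈ I ↔ ∃ y ∈ N, y.support ⊆ z.support ∧ y i = r := fun r => by
    simp [I, Submodule.mem_map, Finsupp.mem_supported, and_assoc]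
  have hI : I = ⊤ := by
    refine (h.2 I fun r hr => ?_).resolve_left fun hbot => ?_
    · obtain ⟨y, hyN, hys, rfl⟩ := (mem_I r).1 hr
      exact (mem_I _).2 ⟨_, hN y hyN, Finsupp.support_mapRange.trans hys, by simp⟩
    · exact Finsupp.mem_support_iff.1 hi
        (Ideal.mem_bot.1 (hbot ▸ (mem_I _).2 ⟨z, hzN, subset_rfl, rfl⟩))
  obtain ⟨y, hyN, hys, hyi⟩ := (mem_I 1).1 (hI ▸ Submodule.mem_top)
  refine ⟨y, hyN, sub_eq_zero.1 (eq_zero _ (N.sub_mem (hN y hyN) hyN) ?_ ?_), hys.trans hzx,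
    i, Finsupp.mem_support_iff.1 (hzx hi), hyi⟩
  · exact Finsupp.support_sub.trans (Finset.union_subset (Finsupp.support_mapRange.trans hys) hys)
  · simp [hyi]

theorem le_span_fixed_finsupp (h : DiffSimple Φ) {κ : Type*} {N : Submodule R (κ →₀ R)}
    (hN : ∀ x ∈ N, x.mapRange Φ (map_zero Φ) ∈ N) :
    N ≤ Submodule.span R {y | y ∈ N ∧ y.mapRange Φ (map_zero Φ) = y} := by
  classical
  intro x hx
  induction hn : x.support.card using Nat.strong_induction_on generalizing x with
  | _ n ih =>
  by_cases hx0 : x = 0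
  · exact hx0 ▸ Submodule.zero_mem _
  obtain ⟨y, hyN, hyf, hyx, i, hxi, hyi⟩ := h.exists_fixed_of_stable hN hx hx0
  have hsupp : (x - x i • y).support ⊂ x.support :=
    (Finset.ssubset_iff_of_subset (Finsupp.support_sub.trans
      (Finset.union_subset subset_rfl (Finsupp.support_smul.trans hyx)))).2
      ⟨i, Finsupp.mem_support_iff.2 hxi, Finsupp.notMem_support_iff.2 (by simp [hyi])⟩
  have hmem := ih _ (hn ▸ Finset.card_lt_card hsupp) (N.sub_mem hx (N.smul_mem _ hyN)) rfl
  rw [← sub_add_cancel x (x i • y)]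
  exact Submodule.add_mem _ hmem (Submodule.smul_mem _ _ (Submodule.subset_span ⟨hyN, hyf⟩))

theorem le_span_fixed (h : DiffSimple Φ) {M κ : Type*} [AddCommGroup M] [Module R M]
    (b : Basis κ R M) {f : M → M} (hf : ∀ x i, b.repr (f x) i = Φ (b.repr x i))
    {N : Submodule R M} (hN : ∀ x ∈ N, f x ∈ N) :
    N ≤ Submodule.span R {y | y ∈ N ∧ f y = y} := by
  have hrepr : ∀ x, b.repr (f x) = (b.repr x).mapRange Φ (map_zero Φ) := fun x =>
    Finsupp.ext fun i => by rw [hf, Finsupp.mapRange_apply]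
  have hle := h.le_span_fixed_finsupp (N := N.map b.repr.toLinearMap) (by
    rintro _ ⟨x, hx, rfl⟩
    exact ⟨f x, hN x hx, hrepr x⟩)
  have hmap : N.map b.repr.toLinearMap ≤
      (Submodule.span R {y | y ∈ N ∧ f y = y}).map b.repr.toLinearMap := by
    refine hle.trans ?_
    rw [Submodule.map_span]
    refine Submodule.span_mono ?_
    rintro _ ⟨⟨y, hy, rfl⟩, hyf⟩
    exact ⟨y, ⟨hy, b.repr.injective ((hrepr y).trans hyf)⟩, rfl⟩
  exact (Submodule.map_le_map_iff_of_injective b.repr.injective _ _).1 hmap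

theorem mem_span_fixed_of_linearCombination_eq_zero (h : DiffSimple Φ) {S κ : Type*} [CommRing S]
    [Algebra R S] {F : S →+* S} (hF : ∀ r, F (algebraMap R S r) = algebraMap R S (Φ r))
    {c : κ → S} (hc : ∀ i, F (c i) = c i) {x : κ →₀ R} (hx : Finsupp.linearCombination R c x = 0) :
    x ∈ Submodule.span R {y : κ →₀ R | Finsupp.linearCombination R c y = 0 ∧
      ∀ i, Φ (y i) = y i} := by
  have hN : ∀ y ∈ LinearMap.ker (Finsupp.linearCombination R c),
      y.mapRange Φ (map_zero Φ) ∈ LinearMap.ker (Finsupp.linearCombination R c) := fun y hy => by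
    rw [LinearMap.mem_ker, Finsupp.linearCombination_apply] at hy ⊢
    rw [Finsupp.sum_mapRange_index fun i => zero_smul R (c i), ← map_zero F, ← hy,
      map_finsuppSum]
    simp only [Algebra.smul_def, map_mul, hF, hc]
  refine Submodule.span_mono ?_ (h.le_span_fixed_finsupp hN (LinearMap.mem_ker.2 hx))
  exact fun y ⟨hy, hf⟩ => ⟨hy, fun i => by simpa using DFunLike.congr_fun hf i⟩

end DiffSimple

/-- An ideal maximal among the proper `τ`-ideals, that is, a kernel of a `τ`-compatible surjection
onto a `τ`-simple ring. -/
def IsDiffMaximal {A : Type*} [CommRing A] (τ : A →+* A) (M : Ideal A) : Prop :=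
  M ≠ ⊤ ∧ (∀ x ∈ M, τ x ∈ M) ∧ ∀ I : Ideal A, M ≤ I → (∀ x ∈ I, τ x ∈ I) → I = M ∨ I = ⊤

theorem exists_le_isDiffMaximal {A : Type*} [CommRing A] {τ : A →+* A} {I : Ideal A} (hI : I ≠ ⊤)
    (hst : ∀ x ∈ I, τ x ∈ I) : ∃ M, I ≤ M ∧ IsDiffMaximal τ M := by
  obtain ⟨M, hIM, hM⟩ := zorn_le_nonempty₀ {J : Ideal A | J ≠ ⊤ ∧ ∀ x ∈ J, τ x ∈ J} (by
    intro c hc hchain J hJ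
    have hdir : DirectedOn (· ≤ ·) c := hchain.directedOn
    refine ⟨sSup c, ⟨?_, fun x hx => ?_⟩, fun z hz => le_sSup hz⟩
    · rw [Ne, Ideal.eq_top_iff_one, Submodule.mem_sSup_of_directed ⟨J, hJ⟩ hdir]
      rintro ⟨L, hL, h1⟩
      exact (hc hL).1 ((Ideal.eq_top_iff_one _).2 h1)
    · rw [Submodule.mem_sSup_of_directed ⟨J, hJ⟩ hdir] at hx ⊢
      obtain ⟨L, hL, hxL⟩ := hx
      exact ⟨L, hL, (hc hL).2 x hxL⟩) I ⟨hI, hst⟩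
  exact ⟨M, hIM, hM.prop.1, hM.prop.2, fun J hMJ hJ => or_iff_not_imp_right.2 fun hne =>
    le_antisymm (hM.le_of_ge ⟨hne, hJ⟩ hMJ) hMJ⟩

section Comap

variable {A B : Type*} [CommRing A] [CommRing B] {τ : A →+* A} {τ' : B →+* B} {f : A →+* B}

theorem IsDiffMaximal.comap_eq (hf : ∀ a, f (τ a) = τ' (f a)) {M : Ideal A}
    (hM : IsDiffMaximal τ M) {M' : Ideal B} (hM' : IsDiffMaximal τ' M')
    (h : ∀ x ∈ M, f x ∈ M') : M'.comap f = M := by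
  refine (hM.2.2 (M'.comap f) h fun x hx => ?_).resolve_right (Ideal.comap_ne_top _ hM'.1)
  rw [Ideal.mem_comap, hf]
  exact hM'.2.1 _ hx

theorem DiffSimple.isDiffMaximal_ker (hf : ∀ a, f (τ a) = τ' (f a)) (hsurj : Function.Surjective f)
    (h : DiffSimple τ') : IsDiffMaximal τ (RingHom.ker f) := by
  have := h.nontrivial
  refine ⟨RingHom.ker_ne_top f, fun x hx => ?_, fun I hI hst => ?_⟩
  · rw [RingHom.mem_ker] at hx ⊢
    rw [hf, hx, map_zero]
  · have hc : (I.map f).comap f = I := by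
      rw [Ideal.comap_map_of_surjective f hsurj, sup_eq_left]
      exact hI
    have hst' : ∀ x ∈ I.map f, τ' x ∈ I.map f := fun x hx => by
      obtain ⟨a, ha, rfl⟩ := (Ideal.mem_map_iff_of_surjective f hsurj).1 hx
      exact hf a ▸ Ideal.mem_map_of_mem f (hst a ha)
    rcases h.2 (I.map f) hst' with hbot | htop
    · exact Or.inl (hc ▸ hbot ▸ rfl)
    · exact Or.inr (hc ▸ htop ▸ rfl)

theorem IsDiffMaximal.diffSimple (hf : ∀ a, f (τ a) = τ' (f a)) (hsurj : Function.Surjective f)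
    (h : IsDiffMaximal τ (RingHom.ker f)) : DiffSimple τ' := by
  refine ⟨fun hbot => h.1 ?_, fun I hst => ?_⟩
  · rw [Ideal.eq_top_iff_one, RingHom.mem_ker, ← Ideal.mem_bot, hbot]
    trivial
  · rw [← Ideal.map_comap_of_surjective f hsurj I]
    rcases h.2.2 (I.comap f) (Ideal.ker_le_comap f) (fun x hx => by
      rw [Ideal.mem_comap, hf]; exact hst _ hx) with hker | htop
    · exact Or.inl (hker ▸ (Ideal.map_eq_bot_iff_le_ker f).2 le_rfl)
    · exact Or.inr (htop ▸ Ideal.map_top f)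

end Comap

end DiffSimple

section GenericMatrices

variable {ι m S B D : Type*} [CommRing S] [CommRing B] [CommRing D]

/-- The entries of a family of matrices, as a family indexed by the variables of the polynomial
ring in which the algebraic relations between these entries live. -/
def entries {ι m S : Type*} (W : ι → Matrix m m S) (x : ι × m × m) : S := W x.1 x.2.1 x.2.2

/-- The matrices `X_j` whose entries are the variables of a polynomial ring. -/
noncomputable def genericMatrix (ι m S : Type*) [CommRing S] (j : ι) :
    Matrix m m (MvPolynomial (ι × m × m) S) :=
  Matrix.of fun p q => X (j, p, q)

/-- The substitution `X_j ↦ W_j`, acting on the coefficients by `f`. -/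
noncomputable def evalMatrix (f : S →+* B) (W : ι → Matrix m m B) :
    MvPolynomial (ι × m × m) S →+* B :=
  eval₂Hom f (entries W)

@[simp] theorem evalMatrix_C (f : S →+* B) (W : ι → Matrix m m B) (s : S) :
    evalMatrix f W (C s) = f s :=
  eval₂_C f _ s

@[simp] theorem evalMatrix_X (f : S →+* B) (W : ι → Matrix m m B) (x : ι × m × m) :
    evalMatrix f W (X x) = entries W x :=
  eval₂_X f _ x

theorem evalMatrix_comp_C (f : S →+* B) (W : ι → Matrix m m B) : (evalMatrix f W).comp C = f :=
  RingHom.ext (evalMatrix_C f W)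

theorem map_C_map_evalMatrix (f : S →+* B) (W : ι → Matrix m m B) (M : Matrix m m S) :
    (M.map C).map (evalMatrix f W) = M.map f := by
  ext; simp

@[simp] theorem genericMatrix_map_evalMatrix (f : S →+* B) (W : ι → Matrix m m B) (j : ι) :
    (genericMatrix ι m S j).map (evalMatrix f W) = W j := by
  ext p q; simp [genericMatrix, entries]

theorem comp_evalMatrix (g : B →+* D) (f : S →+* B) (W : ι → Matrix m m B) :
    g.comp (evalMatrix f W) = evalMatrix (g.comp f) fun j => (W j).map g :=
  MvPolynomial.ringHom_ext (by simp) (by simp [entries])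

theorem evalMatrix_comp_map (g : B →+* D) (f : S →+* B) (W : ι → Matrix m m D) :
    (evalMatrix g W).comp (MvPolynomial.map f) = evalMatrix (g.comp f) W :=
  MvPolynomial.ringHom_ext (by simp) (by simp)

theorem map_eq_evalMatrix (f : S →+* B) :
    (MvPolynomial.map f : MvPolynomial (ι × m × m) S →+* _) =
      evalMatrix (C.comp f) (genericMatrix ι m B) :=
  MvPolynomial.ringHom_ext (by simp) (by simp [genericMatrix, entries])

variable [Fintype m]

/-- The substitution `X_j ↦ A_j X_j`, acting on the coefficients by `φ`. Applying it to the
relations between the columns of solutions of `φ(y_j) = A_j y_j` gives relations again. -/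
noncomputable def twist (φ : S →+* B) (A : ι → Matrix m m B) :
    MvPolynomial (ι × m × m) S →+* MvPolynomial (ι × m × m) B :=
  evalMatrix (C.comp φ) fun j => (A j).map C * genericMatrix ι m B j

/-- The substitution `X_j ↦ X_j Z_j`. -/
noncomputable def rightMul (Z : ι → Matrix m m S) :
    MvPolynomial (ι × m × m) S →+* MvPolynomial (ι × m × m) S :=
  evalMatrix C fun j => genericMatrix ι m S j * (Z j).map C

theorem evalMatrix_comp_twist (f : B →+* D) (W : ι → Matrix m m D) (φ : S →+* B)
    (A : ι → Matrix m m B) :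
    (evalMatrix f W).comp (twist φ A) = evalMatrix (f.comp φ) fun j => (A j).map f * W j := by
  rw [twist, comp_evalMatrix, ← RingHom.comp_assoc, evalMatrix_comp_C]
  simp only [Matrix.map_mul, genericMatrix_map_evalMatrix, map_C_map_evalMatrix]

theorem evalMatrix_comp_rightMul (f : S →+* B) (W : ι → Matrix m m B) (Z : ι → Matrix m m S) :
    (evalMatrix f W).comp (rightMul Z) = evalMatrix f fun j => W j * (Z j).map f := by
  rw [rightMul, comp_evalMatrix, evalMatrix_comp_C]
  simp only [Matrix.map_mul, genericMatrix_map_evalMatrix, map_C_map_evalMatrix]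

theorem twist_comp_twist (ψ : B →+* D) (M : ι → Matrix m m D) (φ : S →+* B)
    (A : ι → Matrix m m B) :
    (twist ψ M).comp (twist φ A) = twist (ψ.comp φ) fun j => (A j).map ψ * M j := by
  have hmap : ∀ P : Matrix m m B, P.map (C.comp ψ) = (P.map ψ).map (C (σ := ι × m × m)) :=
    fun P => by rw [Matrix.map_map]; rfl
  rw [twist, evalMatrix_comp_twist, twist, RingHom.comp_assoc]
  simp only [hmap, Matrix.map_mul, Matrix.mul_assoc]

theorem twist_comp_map (ψ : B →+* D) (M : ι → Matrix m m D) (φ : S →+* B) :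
    (twist ψ M).comp (MvPolynomial.map φ) = twist (ψ.comp φ) M := by
  rw [twist, evalMatrix_comp_map, twist, RingHom.comp_assoc]

theorem map_comp_twist (ψ : B →+* D) (φ : S →+* B) (A : ι → Matrix m m B) :
    (MvPolynomial.map ψ).comp (twist φ A) = twist (ψ.comp φ) fun j => (A j).map ψ := by
  rw [map_eq_evalMatrix, evalMatrix_comp_twist, twist, RingHom.comp_assoc]
  simp only [Matrix.map_map, RingHom.coe_comp]

theorem map_comp_rightMul (f : S →+* B) (Z : ι → Matrix m m S) :
    (MvPolynomial.map f).comp (rightMul Z) =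
      (rightMul fun j => (Z j).map f).comp (MvPolynomial.map f) := by
  rw [map_eq_evalMatrix, evalMatrix_comp_rightMul, ← map_eq_evalMatrix, rightMul,
    evalMatrix_comp_map]
  simp only [Matrix.map_map, RingHom.coe_comp]

theorem evalMatrix_comp_twist_of_map_eq {F : S →+* S} {f : B →+* S} {φ : B →+* B}
    (hF : F.comp f = f.comp φ) {A : ι → Matrix m m B} {U : ι → Matrix m m S}
    (hU : ∀ j, (U j).map F = (A j).map f * U j) :
    (evalMatrix f U).comp (twist φ A) = F.comp (evalMatrix f U) := by
  rw [evalMatrix_comp_twist, comp_evalMatrix, hF, funext hU]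

variable [DecidableEq m]

theorem twist_comp_twist_of_mul_eq_one {U V : ι → Matrix m m S} (h : ∀ j, U j * V j = 1) :
    (twist (RingHom.id S) V).comp (twist (RingHom.id S) U) = RingHom.id _ := by
  rw [twist_comp_twist]
  refine MvPolynomial.ringHom_ext (by simp [twist]) fun x => by
    simp [twist, h, Matrix.map_one C C_0 C_1, genericMatrix, entries]

theorem rightMul_comp_rightMul_of_mul_eq_one {Z W : ι → Matrix m m S} (h : ∀ j, W j * Z j = 1) :
    (rightMul W).comp (rightMul Z) = RingHom.id _ := by
  rw [rightMul, evalMatrix_comp_rightMul]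
  refine MvPolynomial.ringHom_ext (by simp) fun x => ?_
  rw [evalMatrix_X, entries, Matrix.mul_assoc, ← Matrix.map_mul, h, Matrix.map_one C C_0 C_1,
    Matrix.mul_one]
  rfl

/-- A family of fundamental solution matrices of determinant one for the systems
`F(y) = A_j y`. -/
structure IsFundamental (F : S →+* S) (A U : ι → Matrix m m S) : Prop where
  det_eq_one : ∀ j, (U j).det = 1
  map_eq : ∀ j, (U j).map F = A j * U j

end GenericMatrices

section Zeros

theorem exists_eval₂_eq_zero {V K E : Type*} [Finite V] [Field K] [Field E] [IsAlgClosed E]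
    (f : K →+* E) {I : Ideal (MvPolynomial V K)} (hI : I ≠ ⊤) :
    ∃ z : V → E, ∀ p ∈ I, eval₂ f z p = 0 := by
  algebraize [f]
  obtain ⟨M, hM, hIM⟩ := Ideal.exists_le_maximal I hI
  obtain ⟨z, hz⟩ := MvPolynomial.eq_vanishingIdeal_singleton_of_isMaximal E hM
  refine ⟨z, fun p hp => ?_⟩
  have hpz := hIM hp
  rw [hz, MvPolynomial.mem_vanishingIdeal_singleton_iff] at hpz
  exact hpz

theorem DiffSimple.le_map_comap {V S Ω : Type*} [CommRing S] [Field Ω] [Algebra Ω S] {F : S →+* S}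
    (hs : DiffSimple F) (hconst : ∀ t, F t = t → t ∈ (algebraMap Ω S).range)
    {a : Ideal (MvPolynomial V S)} (ha : ∀ x ∈ a, MvPolynomial.map F x ∈ a) :
    a ≤ (a.comap (MvPolynomial.map (algebraMap Ω S))).map (MvPolynomial.map (algebraMap Ω S)) := by
  have hspan := hs.le_span_fixed (MvPolynomial.basisMonomials V S) (f := MvPolynomial.map F)
    (fun x i => MvPolynomial.coeff_map F x i) (N := a.restrictScalars S) ha
  refine hspan.trans (Submodule.span_le (p := (Ideal.map _ _).restrictScalars S) |>.2 ?_)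
  rintro y ⟨hy, hfix⟩
  obtain ⟨y, rfl⟩ : y ∈ Set.range (MvPolynomial.map (algebraMap Ω S)) := by
    rw [MvPolynomial.mem_range_map_iff_coeffs_subset]
    intro c hc
    obtain ⟨i, -, rfl⟩ := MvPolynomial.mem_coeffs_iff.1 hc
    exact hconst _ (by rw [← MvPolynomial.coeff_map, hfix])
  exact Ideal.mem_map_of_mem _ hy

variable {K T Ω ι m : Type*} [Field K] [CommRing T] [Finite ι] [Fintype m] [DecidableEq m]

theorem map_twist_ne_top [Nontrivial T] (f : K →+* T) {U : ι → Matrix m m T}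
    (hU : ∀ j, (U j).det = 1) {I : Ideal (MvPolynomial (ι × m × m) K)} (hI : I ≠ ⊤) :
    I.map (twist f U) ≠ ⊤ := by
  obtain ⟨M, hM⟩ := Ideal.exists_maximal T
  let := Ideal.Quotient.field M
  let π : T →+* AlgebraicClosure (T ⧸ M) := (algebraMap (T ⧸ M) _).comp (Ideal.Quotient.mk M)
  obtain ⟨z, hz⟩ := exists_eval₂_eq_zero (π.comp f) hI
  let Z : ι → Matrix m m (AlgebraicClosure (T ⧸ M)) := fun j => Matrix.of fun p q => z (j, p, q)
  let ev := evalMatrix π fun j => (U j).adjugate.map π * Z j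
  have hev : ev.comp (twist f U) = evalMatrix (π.comp f) Z := by
    rw [evalMatrix_comp_twist]
    simp only [← Matrix.mul_assoc, ← Matrix.map_mul, Matrix.mul_adjugate, hU, one_smul,
      Matrix.map_one π (map_zero π) (map_one π), one_mul]
  have hker : I.map (twist f U) ≤ RingHom.ker ev := Ideal.map_le_iff_le_comap.2 fun p hp => by
    rw [Ideal.mem_comap, RingHom.mem_ker, ← RingHom.comp_apply, hev]
    exact hz p hp
  exact fun htop => RingHom.ker_ne_top ev (top_le_iff.1 (htop ▸ hker))

-- The substitution `X_j ↦ U_j X_j` trivialises the twisted action, so that the image of `I`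
-- becomes generated by polynomials with constant coefficients, which have a common zero.
theorem exists_zero_of_twist_stable [Field Ω] [IsAlgClosed Ω] [Algebra K T] [Algebra Ω T]
    {φ : K →+* K} {F : T →+* T} (hF : F.comp (algebraMap K T) = (algebraMap K T).comp φ)
    (hs : DiffSimple F) (hconst : ∀ t, F t = t → t ∈ (algebraMap Ω T).range)
    {A : ι → Matrix m m K} {U : ι → Matrix m m T}
    (hU : IsFundamental F (fun j => (A j).map (algebraMap K T)) U)
    {I : Ideal (MvPolynomial (ι × m × m) K)} (hI : I ≠ ⊤) (hst : ∀ p ∈ I, twist φ A p ∈ I) :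
    ∃ z : ι → Matrix m m Ω, ∀ p ∈ I,
      evalMatrix (algebraMap K T) (fun j => U j * (z j).map (algebraMap Ω T)) p = 0 := by
  have := hs.nontrivial
  let θ := twist (algebraMap K T) U
  have hθ : (MvPolynomial.map F).comp θ = θ.comp (twist φ A) := by
    rw [map_comp_twist, twist_comp_twist, hF, funext hU.map_eq]
  have hstable : ∀ x ∈ I.map θ, MvPolynomial.map F x ∈ I.map θ := by
    suffices I.map θ ≤ (I.map θ).comap (MvPolynomial.map F) from this
    refine Ideal.map_le_iff_le_comap.2 fun p hp => ?_
    rw [Ideal.mem_comap, Ideal.mem_comap, ← RingHom.comp_apply, hθ]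
    exact Ideal.mem_map_of_mem θ (hst p hp)
  let ω := MvPolynomial.map (σ := ι × m × m) (algebraMap Ω T)
  obtain ⟨z, hz⟩ := exists_eval₂_eq_zero (RingHom.id Ω) (I := (I.map θ).comap ω)
    (Ideal.comap_ne_top _ (map_twist_ne_top _ hU.det_eq_one hI))
  let Z : ι → Matrix m m Ω := fun j => Matrix.of fun p q => z (j, p, q)
  let ev := evalMatrix (RingHom.id T) fun j => (Z j).map (algebraMap Ω T)
  have hevθ : ev.comp θ =
      evalMatrix (algebraMap K T) (fun j => U j * (Z j).map (algebraMap Ω T)) := by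
    rw [evalMatrix_comp_twist, RingHom.id_comp]
    simp only [RingHom.coe_id, Matrix.map_id]
  have hevω : ev.comp ω = (algebraMap Ω T).comp (evalMatrix (RingHom.id Ω) Z) := by
    rw [evalMatrix_comp_map, comp_evalMatrix, RingHom.id_comp, RingHom.comp_id]
  have hker : I.map θ ≤ RingHom.ker ev := by
    refine (hs.le_map_comap hconst hstable).trans (Ideal.map_le_iff_le_comap.2 fun p hp => ?_)
    have hp0 : evalMatrix (RingHom.id Ω) Z p = 0 := hz p hp
    rw [Ideal.mem_comap, RingHom.mem_ker, ← RingHom.comp_apply, hevω, RingHom.comp_apply, hp0,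
      map_zero]
  refine ⟨Z, fun p hp => ?_⟩
  rw [← hevθ]
  exact hker (Ideal.mem_map_of_mem θ hp)

end Zeros

section SigmaClosed

variable {k Ω : Type*} [Field k] [CommRing Ω] [Algebra k Ω] {σ : k →+* k} {τ : Ω →+* Ω}

/-- The union of the forward `τ`-orbits of the elements of `T`; a `σ`-algebra is finitely
`σ`-generated if it is generated by the orbits of a finite set. -/
def orbits {Ω : Type*} [CommRing Ω] (τ : Ω →+* Ω) (T : Set Ω) : Set Ω :=
  {x | ∃ t ∈ T, ∃ m : ℕ, τ^[m] t = x}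

/-- A field `k` with endomorphism `σ` is `σ`-closed if every finitely `σ`-generated `σ`-domain over
`k` has a `k`-rational `σ`-point. -/
def SigmaClosed {k : Type u} [Field k] (σ : k →+* k) : Prop :=
  ∀ (B : Type u) (_ : CommRing B) (_ : IsDomain B) (_ : Algebra k B) (σB : B →+* B),
    (∀ c : k, σB (algebraMap k B c) = algebraMap k B (σ c)) → Function.Injective σB →
    (∃ T : Finset B, Algebra.adjoin k (orbits σB T) = ⊤) →
    ∃ g : B →ₐ[k] k, ∀ x : B, g (σB x) = σ (g x)

theorem subset_orbits (T : Set Ω) : T ⊆ orbits τ T := fun t ht => ⟨t, ht, 0, rfl⟩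

theorem map_mem_adjoin_orbits (hτ : ∀ c, τ (algebraMap k Ω c) = algebraMap k Ω (σ c)) {T : Set Ω}
    {x : Ω} (hx : x ∈ Algebra.adjoin k (orbits τ T)) : τ x ∈ Algebra.adjoin k (orbits τ T) := by
  induction hx using Algebra.adjoin_induction with
  | mem x hx =>
    obtain ⟨t, ht, m, rfl⟩ := hx
    exact Algebra.subset_adjoin ⟨t, ht, m + 1, Function.iterate_succ_apply' _ _ _⟩
  | algebraMap r => exact hτ r ▸ Subalgebra.algebraMap_mem _ _
  | add x y _ _ hx hy => exact map_add τ x y ▸ add_mem hx hy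
  | mul x y _ _ hx hy => exact map_mul τ x y ▸ mul_mem hx hy

theorem orbits_restrict {B : Subalgebra k Ω} (hB : ∀ x ∈ B, τ x ∈ B) {T : Set Ω} (hT : T ⊆ B) :
    orbits (τ.restrict B B hB) ((↑) ⁻¹' T) = ((↑) ⁻¹' orbits τ T : Set B) := by
  have hcoe : ∀ (m : ℕ) (x : B), (((τ.restrict B B hB)^[m] x : B) : Ω) = τ^[m] x := fun m =>
    (Function.Semiconj.iterate_right (f := ((↑) : B → Ω)) (fun _ => rfl) m).eq
  ext x
  constructor
  · rintro ⟨t, ht, m, rfl⟩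
    exact ⟨t, ht, m, (hcoe m t).symm⟩
  · rintro ⟨t, ht, m, htx⟩
    exact ⟨⟨t, hT ht⟩, ht, m, Subtype.ext ((hcoe m _).trans htx)⟩

theorem SigmaClosed.exists_point {k Ω : Type u} [Field k] [Field Ω] [Algebra k Ω] {σ : k →+* k}
    (h : SigmaClosed σ) {τ : Ω →+* Ω}
    (hτ : ∀ c, τ (algebraMap k Ω c) = algebraMap k Ω (σ c)) (T : Finset Ω) :
    ∃ (B : Subalgebra k Ω) (hB : ∀ x ∈ B, τ x ∈ B) (g : B →ₐ[k] k), (T : Set Ω) ⊆ B ∧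
      ∀ x : B, g ⟨τ x, hB x x.2⟩ = σ (g x) := by
  classical
  let B := Algebra.adjoin k (orbits τ T)
  have hB : ∀ x ∈ B, τ x ∈ B := fun _ hx => map_mem_adjoin_orbits hτ hx
  have hTB : (T : Set Ω) ⊆ B := (subset_orbits _).trans Algebra.subset_adjoin
  have hgen : Algebra.adjoin k (orbits (τ.restrict B B hB) (T.subtype (· ∈ B))) = ⊤ := by
    have hpre : (T.subtype (· ∈ B) : Set B) = (↑) ⁻¹' (T : Set Ω) := by ext; simp
    rw [hpre, orbits_restrict hB hTB]
    exact Algebra.adjoin_adjoin_coe_preimage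
  obtain ⟨g, hg⟩ := h B inferInstance inferInstance inferInstance (τ.restrict B B hB)
    (fun c => Subtype.ext (hτ c))
    (fun x y hxy => Subtype.ext (τ.injective (congrArg Subtype.val hxy))) ⟨_, hgen⟩
  exact ⟨B, hB, g, hTB, hg⟩

theorem exists_ringHom_extension {k E Ω : Type*} [Field k] [Field E] [Field Ω] [Algebra k E]
    [Algebra.IsAlgebraic k E] [IsAlgClosed Ω] (h : k →+* Ω) :
    ∃ g : E →+* Ω, ∀ a, g (algebraMap k E a) = h a := by
  algebraize [h]
  exact ⟨(IsAlgClosed.lift : E →ₐ[k] Ω).toRingHom, (IsAlgClosed.lift : E →ₐ[k] Ω).commutes⟩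

theorem SigmaClosed.isAlgClosed {k : Type u} [Field k] {σ : k →+* k} (h : SigmaClosed σ) :
    IsAlgClosed k := by
  obtain ⟨τ, hτ⟩ := exists_ringHom_extension (E := AlgebraicClosure k)
    ((algebraMap k (AlgebraicClosure k)).comp σ)
  refine IsAlgClosed.of_exists_root _ fun p _ hp => ?_
  obtain ⟨x, hx⟩ := IsAlgClosed.exists_aeval_eq_zero (AlgebraicClosure k) p
    (Polynomial.degree_pos_of_irreducible hp).ne'
  obtain ⟨B, hB, g, hTB, -⟩ := h.exists_point hτ {x}
  let y : B := ⟨x, hTB (by simp)⟩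
  have hy : Polynomial.aeval y p = 0 :=
    Subtype.val_injective ((Polynomial.aeval_algHom_apply B.val y p).symm.trans hx)
  refine ⟨g y, ?_⟩
  rw [← Polynomial.coe_aeval_eq_eval, Polynomial.aeval_algHom_apply, hy, map_zero]

end SigmaClosed

section Constants

theorem isUnit_aeval_of_spectrum_eq_empty {k P : Type*} [Field k] [IsAlgClosed k] [CommRing P]
    [Algebra k P] {c : P} (hc : spectrum k c = ∅) {q : Polynomial k} (hq : q ≠ 0) :
    IsUnit (Polynomial.aeval c q) := by
  rcases le_or_gt q.degree 0 with hdeg | hdeg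
  · rw [Polynomial.eq_C_of_degree_le_zero hdeg, Polynomial.aeval_C]
    refine (IsUnit.mk0 _ fun h0 => hq ?_).map _
    rw [Polynomial.eq_C_of_degree_le_zero hdeg, h0, Polynomial.C_0]
  · refine spectrum.isUnit_of_zero_notMem (R := k) ?_
    rw [spectrum.map_polynomial_aeval_of_degree_pos c q hdeg, hc, Set.image_empty]
    exact Set.notMem_empty 0

theorem linearIndependent_pow_iff_transcendental {R S : Type*} [CommRing R] [CommRing S]
    [Algebra R S] {c : S} : (LinearIndependent R fun i : ℕ => c ^ i) ↔ Transcendental R c := by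
  have hcomp : ⇑(Finsupp.linearCombination R fun i : ℕ => c ^ i) =
      Polynomial.aeval c ∘ (Polynomial.basisMonomials R).repr.symm := by
    suffices h : (Finsupp.linearCombination R fun i : ℕ => c ^ i) =
        (Polynomial.aeval (R := R) c).toLinearMap ∘ₗ
          (Polynomial.basisMonomials R).repr.symm.toLinearMap from congrArg DFunLike.coe h
    ext i
    simp [Polynomial.aeval_monomial]
  rw [LinearIndependent, hcomp, EquivLike.injective_comp, transcendental_iff_injective]

theorem exists_basicOpen_subset_of_isConstructible {A : Type*} [CommRing A] [IsDomain A]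
    {s : Set (PrimeSpectrum A)} (hs : Topology.IsConstructible s)
    (hbot : (⊥ : PrimeSpectrum A) ∈ s) :
    ∃ f : A, f ≠ 0 ∧ (PrimeSpectrum.basicOpen f : Set (PrimeSpectrum A)) ⊆ s := by
  obtain ⟨D, rfl⟩ := PrimeSpectrum.exists_constructibleSetData_iff.2 hs
  simp only [PrimeSpectrum.ConstructibleSetData.toSet,
    PrimeSpectrum.BasicConstructibleSetData.toSet, Set.mem_iUnion, Set.mem_sdiff,
    PrimeSpectrum.mem_zeroLocus, Set.singleton_subset_iff] at hbot
  obtain ⟨C, hC, hg, hf⟩ := hbot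
  refine ⟨C.f, by simpa using hf, fun x hx => Set.mem_iUnion₂_of_mem hC ⟨fun a ha => ?_, ?_⟩⟩
  swap
  · simpa [PrimeSpectrum.mem_zeroLocus] using hx
  have ha0 : a = 0 := by simpa using hg ha
  exact ha0 ▸ x.asIdeal.zero_mem

-- By Chevalley's theorem the image of the dominant map `Spec P → 𝔸¹` defined by `c` contains a
-- nonempty open set, and `c - a` vanishes somewhere whenever `a` lies in the image.
theorem exists_forall_eval_ne_zero_not_isUnit {K P : Type*} [Field K] [CommRing P] [Algebra K P]
    [Algebra.FiniteType K P] {c : P} (hc : Transcendental K c) :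
    ∃ f : Polynomial K, f ≠ 0 ∧ ∀ a, f.eval a ≠ 0 → ¬IsUnit (c - algebraMap K P a) := by
  let θ : Polynomial K →+* P := (Polynomial.aeval (R := K) c).toRingHom
  have hθ : Function.Injective θ := transcendental_iff_injective.1 hc
  have hfp : θ.FinitePresentation := by
    refine RingHom.FinitePresentation.of_finiteType.1
      (RingHom.FiniteType.of_comp_finiteType (f := Polynomial.C) ?_)
    rw [show θ.comp Polynomial.C = algebraMap K P from RingHom.ext (Polynomial.aeval_C c)]
    exact RingHom.finiteType_algebraMap.2 inferInstance
  obtain ⟨p, hp, hpbot⟩ := Ideal.exists_comap_eq_of_mem_minimalPrimes_of_injective hθ ⊥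
    (by rw [IsDomain.minimalPrimes_eq_singleton_bot]; rfl)
  obtain ⟨f, hf0, hf⟩ := exists_basicOpen_subset_of_isConstructible
    (PrimeSpectrum.isConstructible_range_comap hfp) ⟨⟨p, hp⟩, PrimeSpectrum.ext hpbot⟩
  refine ⟨f, hf0, fun a ha hu => ?_⟩
  let x : PrimeSpectrum (Polynomial K) :=
    ⟨Ideal.span {Polynomial.X - Polynomial.C a}, (Ideal.span_singleton_prime
      (Polynomial.X_sub_C_ne_zero a)).2 (Polynomial.prime_X_sub_C a)⟩
  obtain ⟨q, hq⟩ : x ∈ Set.range (PrimeSpectrum.comap θ) := hf (by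
    rwa [SetLike.mem_coe, PrimeSpectrum.mem_basicOpen, Ideal.mem_span_singleton,
      Polynomial.dvd_iff_isRoot])
  have hmem : Polynomial.X - Polynomial.C a ∈ q.asIdeal.comap θ := by
    rw [← PrimeSpectrum.comap_asIdeal, hq]
    exact Ideal.mem_span_singleton_self _
  refine q.2.ne_top (Ideal.eq_top_of_isUnit_mem _ hmem ?_)
  simpa [θ] using hu

variable {K P : Type*} [Field K] [CommRing P] [Algebra K P] {φ : K →+* K} {F : P →+* P}

theorem linearIndependent_of_fixed (hF : ∀ a, F (algebraMap K P a) = algebraMap K P (φ a))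
    {κ : Type*} {c : κ → P} (hc : ∀ i, F (c i) = c i)
    (h : LinearIndependent (constSubfield K φ) c) : LinearIndependent K c := by
  rw [linearIndependent_iff] at h ⊢
  intro x hx
  have hmem := (diffSimple_of_field φ).mem_span_fixed_of_linearCombination_eq_zero hF hc hx
  rw [Submodule.span_eq_bot.2, Submodule.mem_bot] at hmem
  · exact hmem
  rintro y ⟨hy, hfix⟩
  let y₀ : κ →₀ constSubfield K φ := Finsupp.onFinset y.support (fun i => ⟨y i, hfix i⟩)
    fun i hi => Finsupp.mem_support_iff.2 fun h0 => hi (Subtype.ext h0)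
  have hy₀ : y₀ = 0 := h y₀ (by
    rw [← hy, Finsupp.linearCombination_apply, Finsupp.onFinset_sum _ fun i => zero_smul _ (c i)]
    rfl)
  ext i
  exact congrArg Subtype.val (DFunLike.congr_fun hy₀ i)

theorem DiffSimple.fixed_mem_of_finiteType [IsAlgClosed (constSubfield K φ)]
    [Algebra.FiniteType K P] (hF : ∀ a, F (algebraMap K P a) = algebraMap K P (φ a))
    (hs : DiffSimple F) {c : P} (hc : F c = c) : ∃ a : K, φ a = a ∧ algebraMap K P a = c := by
  by_contra! hcon
  have := hs.nontrivial
  have hunit : ∀ a : constSubfield K φ, IsUnit (c - algebraMap K P a) := fun a =>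
    hs.isUnit_of_fixed (by rw [map_sub, hc, hF, a.2]) (sub_ne_zero.2 (hcon a a.2).symm)
  have hspec : spectrum (constSubfield K φ) c = ∅ := Set.eq_empty_of_forall_notMem fun a ha =>
    (spectrum.mem_iff.1 ha) (IsUnit.sub_iff.1 (hunit a))
  have htr : Transcendental (constSubfield K φ) c := transcendental_iff.2 fun q hq =>
    by_contra fun hq0 => (isUnit_aeval_of_spectrum_eq_empty hspec hq0).ne_zero hq
  obtain ⟨f, hf0, hf⟩ := exists_forall_eval_ne_zero_not_isUnit (K := K)
    (linearIndependent_pow_iff_transcendental.1 (linearIndependent_of_fixed hF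
      (fun i => by rw [map_pow, hc]) (linearIndependent_pow_iff_transcendental.2 htr)))
  have hinf : (Set.range ((↑) : constSubfield K φ → K)).Infinite :=
    Set.infinite_range_of_injective Subtype.val_injective
  refine hf0 (Polynomial.eq_zero_of_infinite_isRoot f (hinf.mono ?_))
  rintro _ ⟨a, rfl⟩
  exact by_contra fun ha => hf a ha (hunit a)

end Constants

section Minors

open Matrix

theorem det_mul_eq_zero_of_card_lt {A m n : Type*} [CommRing A] [Fintype m] [Fintype n]
    [DecidableEq m] (L : Matrix m n A) (R : Matrix n m A)
    (h : Fintype.card n < Fintype.card m) : (L * R).det = 0 := by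
  classical
  have hchar := congrArg (Polynomial.eval 0) (Matrix.charpoly_mul_comm_of_le L R h.le)
  rw [Matrix.det_eq_sign_charpoly_coeff, Polynomial.coeff_zero_eq_eval_zero, hchar]
  simp [(Nat.sub_pos_of_lt h).ne']

theorem det_bordered_mul_det {A n : Type*} [CommRing A] [Fintype n] [DecidableEq n]
    (L : Matrix n n A) (a : A) (r c : n → A) :
    (fromBlocks (of fun _ _ => a) (replicateRow Unit r) (replicateCol Unit c) L).det * L.det =
      (L.det * a - r ⬝ᵥ L.adjugate *ᵥ c) * L.det := by
  have hmul : fromBlocks (of fun _ _ => a) (replicateRow Unit r) (replicateCol Unit c) L *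
      fromBlocks (of fun _ _ => L.det) 0 (-replicateCol Unit (L.adjugate *ᵥ c)) 1 =
      fromBlocks (of fun _ _ => L.det * a - r ⬝ᵥ L.adjugate *ᵥ c) (replicateRow Unit r) 0 L := by
    rw [fromBlocks_multiply]
    congr 1
    · ext
      simp [Matrix.mul_apply, dotProduct, sub_eq_add_neg, mul_comm a]
    · simp
    · rw [Matrix.mul_neg, ← replicateCol_mulVec, mulVec_mulVec, mul_adjugate,
        smul_mulVec, one_mulVec]
      ext
      simp [Matrix.mul_apply, mul_comm]
    · simp
  have hdet := congrArg Matrix.det hmul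
  rwa [Matrix.det_mul, det_fromBlocks_zero₁₂, det_one, mul_one, det_fromBlocks_zero₂₁,
    det_unique (of fun _ _ : Unit => L.det), det_unique (n := Unit)] at hdet

variable {A M : Type*} [CommRing A] [AddCommGroup M] [Module A M]

/-- The ideal generated by the minors of size `r` of the pairing of a submodule `N` of `M` with the
dual of `M`; for `M` free of finite rank and a matrix whose columns generate `N` these are the
determinantal ideals of the matrix. -/
def minorIdeal (N : Submodule A M) (r : ℕ) : Ideal A :=
  Ideal.span {d | ∃ (l : Fin r → Dual A M) (v : Fin r → N),
    (of fun i j => l i (v j)).det = d}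

theorem det_mem_minorIdeal {N : Submodule A M} {κ : Type*} [Fintype κ] [DecidableEq κ] {r : ℕ}
    (e : Fin r ≃ κ) (l : κ → Dual A M) (v : κ → N) :
    (of fun i j => l i (v j)).det ∈ minorIdeal N r := by
  rw [← det_submatrix_equiv_self e]
  exact Ideal.subset_span ⟨l ∘ e, v ∘ e, rfl⟩

theorem minorIdeal_zero (N : Submodule A M) : minorIdeal N 0 = ⊤ :=
  (Ideal.eq_top_iff_one _).2 (Ideal.subset_span ⟨Fin.elim0, Fin.elim0, det_isEmpty⟩)

theorem minorIdeal_eq_bot_of_le_span {N : Submodule A M} {t : Finset M}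
    (ht : N ≤ Submodule.span A t) : minorIdeal N (t.card + 1) = ⊥ := by
  classical
  rw [eq_bot_iff, minorIdeal, Ideal.span_le]
  rintro _ ⟨l, v, rfl⟩
  choose c hc using fun j => Submodule.mem_span_finset'.1 (ht (v j).2)
  have hfactor : (of fun i j => l i (v j)) =
      (of fun i (k : t) => l i k) * of fun k j => c j k := by
    ext i j
    simp [← hc, Matrix.mul_apply, mul_comm]
  rw [SetLike.mem_coe, Ideal.mem_bot, hfactor]
  exact det_mul_eq_zero_of_card_lt _ _ (by simp)

theorem map_mem_minorIdeal {Φ : A →+* A} {f : M → M}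
    (hf : ∀ l : Dual A M, ∃ l' : Dual A M, ∀ v, l' (f v) = Φ (l v)) {N : Submodule A M}
    (hN : ∀ x ∈ N, f x ∈ N) {r : ℕ} {d : A} (hd : d ∈ minorIdeal N r) : Φ d ∈ minorIdeal N r := by
  suffices minorIdeal N r ≤ (minorIdeal N r).comap Φ from this hd
  rw [minorIdeal, Ideal.span_le]
  rintro _ ⟨l, v, rfl⟩
  choose l' hl' using hf
  refine Ideal.subset_span ⟨fun i => l' (l i), fun j => ⟨f (v j), hN _ (v j).2⟩, ?_⟩
  rw [RingHom.map_det]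
  congr 1
  ext i j
  simp [hl']

theorem det_sq_smul_eq_of_minorIdeal_eq_bot [Projective A M] {N : Submodule A M} {r : ℕ}
    (h : minorIdeal N (r + 1) = ⊥) (l : Fin r → Dual A M) (v : Fin r → N) {x : M} (hx : x ∈ N) :
    (of fun i j => l i (v j)).det ^ 2 • x = (of fun i j => l i (v j)).det •
      ∑ j, ((of fun i j => l i (v j)).adjugate *ᵥ fun i => l i x) j • (v j : M) := by
  set L : Matrix (Fin r) (Fin r) A := of fun i j => l i (v j)
  rw [← sub_eq_zero, ← forall_dual_apply_eq_zero_iff A]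
  intro μ
  have hmem := det_mem_minorIdeal (N := N)
    (Fintype.equivOfCardEq (by simp [add_comm]) : Fin (r + 1) ≃ Unit ⊕ Fin r)
    (Sum.elim (fun _ => μ) l) (Sum.elim (fun _ => ⟨x, hx⟩) v)
  have hblock : (of fun i j => Sum.elim (fun _ : Unit => μ) l i
      (Sum.elim (fun _ : Unit => (⟨x, hx⟩ : N)) v j : N)) = fromBlocks (of fun _ _ => μ x)
        (replicateRow Unit fun j => μ (v j)) (replicateCol Unit fun i => l i x) L := by
    ext (i | i) (j | j) <;> rfl
  rw [h, Ideal.mem_bot, hblock] at hmem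
  have hdet := det_bordered_mul_det L (μ x) (fun j => μ (v j)) fun i => l i x
  rw [hmem, zero_mul, dotProduct] at hdet
  simp only [map_sub, map_smul, map_sum, smul_eq_mul, mul_comm _ (μ _)]
  linear_combination -hdet

/-- The ideal of scalars `c` such that multiplication by `c` on `N` extends to a linear map
`M → N`; it is the unit ideal if and only if `N` is a direct summand. -/
def retractionIdeal (N : Submodule A M) : Ideal A where
  carrier := {c | ∃ π : M →ₗ[A] M, (∀ x, π x ∈ N) ∧ ∀ x ∈ N, π x = c • x}
  zero_mem' := ⟨0, by simp, by simp⟩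
  add_mem' := by
    rintro c d ⟨π, h1, h2⟩ ⟨π', h1', h2'⟩
    exact ⟨π + π', fun x => N.add_mem (h1 x) (h1' x), fun x hx => by
      rw [LinearMap.add_apply, h2 x hx, h2' x hx, add_smul]⟩
  smul_mem' := by
    rintro c d ⟨π, h1, h2⟩
    exact ⟨c • π, fun x => N.smul_mem _ (h1 x), fun x hx => by
      rw [LinearMap.smul_apply, h2 x hx, smul_smul, smul_eq_mul]⟩

theorem retractionIdeal_eq_top [Projective A M] {N : Submodule A M} {r : ℕ}
    (htop : minorIdeal N r = ⊤) (hbot : minorIdeal N (r + 1) = ⊥) : retractionIdeal N = ⊤ := by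
  rw [← top_le_iff, ← Ideal.span_pow_eq_top _ htop 2, Ideal.span_le]
  rintro _ ⟨_, ⟨l, v, rfl⟩, rfl⟩
  let L : Matrix (Fin r) (Fin r) A := of fun i j => l i (v j)
  refine ⟨L.det • ∑ j, (LinearMap.proj j ∘ₗ L.adjugate.mulVecLin ∘ₗ
    LinearMap.pi l).smulRight (v j : M), fun x => ?_, fun x hx => ?_⟩
  · simp only [LinearMap.smul_apply, LinearMap.sum_apply, LinearMap.smulRight_apply]
    exact N.smul_mem _ (N.sum_mem fun j _ => N.smul_mem _ (v j).2)
  · simp only [LinearMap.smul_apply, LinearMap.sum_apply, LinearMap.smulRight_apply]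
    exact (det_sq_smul_eq_of_minorIdeal_eq_bot hbot l v hx).symm

-- The ideals of minors of `N` are `Φ`-ideals, hence each of them is `⊥` or `⊤`, as for a vector
-- subspace.
theorem DiffSimple.exists_projection [Projective A M] {Φ : A →+* A} (hs : DiffSimple Φ) {f : M → M}
    (hf : ∀ l : Dual A M, ∃ l' : Dual A M, ∀ v, l' (f v) = Φ (l v)) {N P : Submodule A M}
    (hN : ∀ x ∈ N, f x ∈ N) (hP : P.FG) (hNP : N ≤ P) :
    ∃ π : M →ₗ[A] M, (∀ x, π x ∈ N) ∧ ∀ x ∈ N, π x = x := by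
  obtain ⟨t, rfl⟩ := hP
  obtain ⟨r, hr, hr1⟩ : ∃ r, minorIdeal N r ≠ ⊥ ∧ minorIdeal N (r + 1) = ⊥ := by
    by_contra! hcon
    have hne : ∀ n, minorIdeal N n ≠ ⊥ := fun n =>
      Nat.rec (minorIdeal_zero N ▸ hs.1.symm) hcon n
    exact hne _ (minorIdeal_eq_bot_of_le_span hNP)
  have htop := (hs.2 _ fun _ => map_mem_minorIdeal hf hN).resolve_left hr
  obtain ⟨π, h1, h2⟩ : (1 : A) ∈ retractionIdeal N :=
    retractionIdeal_eq_top htop hr1 ▸ Submodule.mem_top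
  exact ⟨π, h1, fun x hx => by rw [h2 x hx, one_smul]⟩

end Minors

section LocallyRetract

/-- Every finite subset of the ideal `J` is fixed by a linear endomorphism with image in `J`. This
is the equational criterion for flatness of the quotient by `J` over `A`. -/
def LocallyRetract {V A : Type*} [CommRing A] (J : Ideal (MvPolynomial V A)) : Prop :=
  ∀ s : Finset (MvPolynomial V A), (∀ p ∈ s, p ∈ J) →
    ∃ π : MvPolynomial V A →ₗ[A] MvPolynomial V A, (∀ p, π p ∈ J) ∧ ∀ p ∈ s, π p = p

section BaseChange

variable {V A A' N N' : Type*} [CommRing A] [CommRing A'] {s : A →+* A'}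

theorem exists_linearMap_map_eq [AddCommGroup N] [Module A N] [AddCommGroup N'] [Module A' N']
    (g : N →ₛₗ[s] N') (l : MvPolynomial V A →ₗ[A] N) :
    ∃ l' : MvPolynomial V A' →ₗ[A'] N', (∀ p, l' (MvPolynomial.map s p) = g (l p)) ∧
      ∀ p, l' p ∈ Submodule.span A' (Set.range (g ∘ l)) := by
  refine ⟨(basisMonomials V A').constr A' fun n => g (l (monomial n 1)), fun p => ?_, fun p => ?_⟩
  · induction p using MvPolynomial.induction_on' with
    | monomial n a =>
      have hs : monomial n (s a) = s a • basisMonomials V A' n := by simp [smul_monomial]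
      have ha : monomial n a = a • (monomial n 1 : MvPolynomial V A) := by simp [smul_monomial]
      rw [map_monomial, hs, map_smul, Basis.constr_basis, ha, map_smul, map_smulₛₗ]
    | add p q hp hq => simp only [map_add, hp, hq]
  · rw [Basis.constr_apply]
    exact Submodule.sum_mem _ fun n _ =>
      Submodule.smul_mem _ _ (Submodule.subset_span (Set.mem_range_self _))

theorem exists_linearMap_map_eq_map (s : A →+* A')
    (π : MvPolynomial V A →ₗ[A] MvPolynomial V A) {J : Ideal (MvPolynomial V A)}
    (hπ : ∀ p, π p ∈ J) : ∃ π' : MvPolynomial V A' →ₗ[A'] MvPolynomial V A',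
      (∀ p, π' (MvPolynomial.map s p) = MvPolynomial.map s (π p)) ∧
      ∀ p, π' p ∈ J.map (MvPolynomial.map s) := by
  let g : MvPolynomial V A →ₛₗ[s] MvPolynomial V A' :=
    { MvPolynomial.map s with
      map_smul' := fun a p => by simp [smul_eq_C_mul] }
  obtain ⟨π', h1, h2⟩ := exists_linearMap_map_eq g π
  have hle : Submodule.span A' (Set.range (g ∘ π)) ≤
      (J.map (MvPolynomial.map s)).restrictScalars A' := by
    refine Submodule.span_le.2 ?_
    rintro _ ⟨p, rfl⟩
    exact Ideal.mem_map_of_mem _ (hπ p)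
  exact ⟨π', h1, fun p => hle (h2 p)⟩

theorem mem_span_of_mem_map {J : Ideal (MvPolynomial V A)} {p : MvPolynomial V A'}
    (hp : p ∈ J.map (MvPolynomial.map s)) :
    p ∈ Submodule.span A' (MvPolynomial.map s '' (J : Set (MvPolynomial V A))) := by
  let N := Submodule.span A' (MvPolynomial.map s '' (J : Set (MvPolynomial V A)))
  have hmonomial : ∀ n, N ≤ N.comap (LinearMap.mulLeft A' (monomial n 1)) := fun n => by
    refine Submodule.span_le.2 ?_
    rintro _ ⟨q, hq, rfl⟩
    refine Submodule.subset_span ⟨monomial n 1 * q, J.mul_mem_left _ hq, ?_⟩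
    rw [map_mul, map_monomial, map_one, LinearMap.mulLeft_apply]
  have hmul : ∀ q, N ≤ N.comap (LinearMap.mulLeft A' q) := fun q x hx => by
    induction q using MvPolynomial.induction_on' with
    | monomial n c =>
      have hc : monomial n c = c • (monomial n 1 : MvPolynomial V A') := by simp [smul_monomial]
      rw [Submodule.mem_comap, LinearMap.mulLeft_apply, hc, smul_mul_assoc]
      exact N.smul_mem c (hmonomial n hx)
    | add q r hq hr =>
      rw [Submodule.mem_comap, LinearMap.mulLeft_apply, add_mul]
      exact N.add_mem hq hr
  induction hp using Submodule.span_induction with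
  | mem x hx => exact Submodule.subset_span hx
  | zero => exact N.zero_mem
  | add x y _ _ hx hy => exact N.add_mem hx hy
  | smul q x _ hx => exact hmul q hx

theorem exists_finset_of_mem_map {J : Ideal (MvPolynomial V A)} {p : MvPolynomial V A'}
    (hp : p ∈ J.map (MvPolynomial.map s)) :
    ∃ t : Finset (MvPolynomial V A), (∀ q ∈ t, q ∈ J) ∧
      p ∈ Submodule.span A' (MvPolynomial.map s '' (t : Set (MvPolynomial V A))) := by
  classical
  obtain ⟨u, hu, hpu⟩ := Submodule.mem_span_finite_of_mem_span (mem_span_of_mem_map hp)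
  obtain ⟨t, ht, rfl⟩ := Finset.subset_set_image_iff.1 hu
  exact ⟨t, fun q hq => ht hq, by simpa only [Finset.coe_image] using hpu⟩

theorem eq_of_mem_span_map {π : MvPolynomial V A →ₗ[A] MvPolynomial V A}
    {π' : MvPolynomial V A' →ₗ[A'] MvPolynomial V A'}
    (h : ∀ p, π' (MvPolynomial.map s p) = MvPolynomial.map s (π p)) {t : Set (MvPolynomial V A)}
    (ht : ∀ q ∈ t, π q = q) {p : MvPolynomial V A'}
    (hp : p ∈ Submodule.span A' (MvPolynomial.map s '' t)) : π' p = p := by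
  suffices Submodule.span A' (MvPolynomial.map s '' t) ≤ LinearMap.eqLocus π' LinearMap.id from
    this hp
  rw [Submodule.span_le]
  rintro _ ⟨q, hq, rfl⟩
  exact (h q).trans (congrArg _ (ht q hq))

variable {J : Ideal (MvPolynomial V A)}

theorem LocallyRetract.map (h : LocallyRetract J) (s : A →+* A') :
    LocallyRetract (J.map (MvPolynomial.map s)) := by
  classical
  intro u hu
  choose! t ht htp using fun p (hp : p ∈ u) => exists_finset_of_mem_map (hu p hp)
  obtain ⟨π, h1, h2⟩ := h (u.biUnion t) fun q hq => by
    obtain ⟨p, hp, hq⟩ := Finset.mem_biUnion.1 hq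
    exact ht p hp q hq
  obtain ⟨π', h1', h2'⟩ := exists_linearMap_map_eq_map s π h1
  exact ⟨π', h2', fun p hp => eq_of_mem_span_map h1'
    (fun q hq => h2 q (Finset.mem_biUnion.2 ⟨p, hp, hq⟩)) (htp p hp)⟩

theorem LocallyRetract.mem_of_map_mem (h : LocallyRetract J) {i : A →+* A'}
    (hi : Function.Injective i) {p : MvPolynomial V A}
    (hp : MvPolynomial.map i p ∈ J.map (MvPolynomial.map i)) : p ∈ J := by
  obtain ⟨t, ht, hpt⟩ := exists_finset_of_mem_map hp
  obtain ⟨π, h1, h2⟩ := h t ht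
  obtain ⟨π', h1', -⟩ := exists_linearMap_map_eq_map i π h1
  have hπp : π p = p :=
    MvPolynomial.map_injective i hi ((h1' p).symm.trans (eq_of_mem_span_map h1' h2 hpt))
  exact hπp ▸ h1 p

end BaseChange

theorem totalDegree_evalMatrix_C_comp_le {ι m S A V : Type*} [CommRing S] [CommRing A]
    (φ : S →+* A) {W : ι → Matrix m m (MvPolynomial V A)}
    (hW : ∀ x, (entries W x).totalDegree ≤ 1) (p : MvPolynomial (ι × m × m) S) :
    (evalMatrix (C.comp φ) W p).totalDegree ≤ p.totalDegree := by
  rw [evalMatrix, coe_eval₂Hom, eval₂_eq]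
  refine (totalDegree_finsetSum _ _).trans (Finset.sup_le fun n hn => ?_)
  refine (totalDegree_mul _ _).trans ?_
  rw [RingHom.comp_apply, totalDegree_C, zero_add]
  refine (totalDegree_finsetProd _ _).trans (le_trans ?_ (le_totalDegree hn))
  rw [Finsupp.sum]
  refine Finset.sum_le_sum fun x _ => (totalDegree_pow _ _).trans ?_
  exact (Nat.mul_le_mul_left _ (hW x)).trans (by simp)

theorem totalDegree_twist_le {ι m S A : Type*} [CommRing S] [CommRing A] [Fintype m] (φ : S →+* A)
    (D : ι → Matrix m m A) (p : MvPolynomial (ι × m × m) S) :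
    (twist φ D p).totalDegree ≤ p.totalDegree := by
  refine totalDegree_evalMatrix_C_comp_le φ (fun x => ?_) p
  rw [entries, Matrix.mul_apply]
  refine (totalDegree_finsetSum _ _).trans (Finset.sup_le fun r _ => ?_)
  refine (totalDegree_mul _ _).trans ?_
  rw [Matrix.map_apply, totalDegree_C, zero_add]
  exact (totalDegree_monomial_le _ _).trans (by simp)

theorem exists_dual_twist_eq {A ι m : Type*} [CommRing A] [Fintype m] [DecidableEq m] {Φ : A →+* A}
    {D D' : ι → Matrix m m A} (hD : ∀ j, D j * D' j = 1)
    (l : Dual A (MvPolynomial (ι × m × m) A)) :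
    ∃ l' : Dual A (MvPolynomial (ι × m × m) A), ∀ p, l' (twist Φ D p) = Φ (l p) := by
  obtain ⟨l', hl', -⟩ := exists_linearMap_map_eq Φ.toSemilinearMap l
  let ρ : MvPolynomial (ι × m × m) A →ₗ[A] MvPolynomial (ι × m × m) A :=
    { twist (RingHom.id A) D' with
      map_smul' := fun a p => by simp [smul_eq_C_mul, twist] }
  have hρ : (twist (RingHom.id A) D').comp (twist Φ D) = MvPolynomial.map Φ := by
    have hid : twist Φ D = (twist (RingHom.id A) D).comp (MvPolynomial.map Φ) := by
      rw [twist_comp_map, RingHom.id_comp]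
    rw [hid, ← RingHom.comp_assoc, twist_comp_twist_of_mul_eq_one hD, RingHom.id_comp]
  exact ⟨l' ∘ₗ ρ, fun p => (congrArg l' (RingHom.congr_fun hρ p)).trans (hl' p)⟩

theorem DiffSimple.locallyRetract {A ι m : Type*} [CommRing A] [Finite ι] [Fintype m]
    [DecidableEq m] {Φ : A →+* A} (hs : DiffSimple Φ) {D D' : ι → Matrix m m A}
    (hD : ∀ j, D j * D' j = 1) {J : Ideal (MvPolynomial (ι × m × m) A)}
    (hJ : ∀ p ∈ J, twist Φ D p ∈ J) : LocallyRetract J := by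
  intro s hsJ
  let P := restrictTotalDegree (ι × m × m) A (s.sup totalDegree)
  have hstable : ∀ p ∈ J.restrictScalars A ⊓ P, twist Φ D p ∈ J.restrictScalars A ⊓ P :=
    fun p ⟨hpJ, hpP⟩ => ⟨hJ p hpJ, (mem_restrictTotalDegree _ _ _).2
      ((totalDegree_twist_le Φ D p).trans ((mem_restrictTotalDegree _ _ _).1 hpP))⟩
  obtain ⟨π, h1, h2⟩ := hs.exists_projection (exists_dual_twist_eq hD) hstable
    (Module.Finite.iff_fg.1 inferInstance) inf_le_right
  exact ⟨π, fun p => (h1 p).1, fun p hp => h2 p ⟨hsJ p hp,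
    (mem_restrictTotalDegree _ _ _).2 (Finset.le_sup (f := totalDegree) hp)⟩⟩

end LocallyRetract

section Amalgam

theorem exists_amalgam_of_field.{u, v, w} {E : Type u} {T : Type v} {Q : Type w} [Field E]
    [CommRing T] [CommRing Q] [Nontrivial T] [Nontrivial Q] (f : E →+* T) (g : E →+* Q) :
    ∃ (W : Type (max v w)) (_ : CommRing W) (_ : Nontrivial W) (l : T →+* W) (r : Q →+* W),
      l.comp f = r.comp g := by
  let _ := f.toAlgebra
  let _ := g.toAlgebra
  have hinj := Algebra.TensorProduct.includeRight_injective (A := T) (B := Q) f.injective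
  exact ⟨TensorProduct E T Q, inferInstance, hinj.nontrivial,
    Algebra.TensorProduct.includeLeftRingHom, Algebra.TensorProduct.includeRight.toRingHom,
    RingHom.ext fun x => (Algebra.TensorProduct.includeRight.commutes x).symm⟩

theorem exists_fractionRing_ringHom {q Q : Type*} [CommRing q] [CommRing Q] (γ : q →+* Q)
    {P : Ideal q} [P.IsPrime] {P' : Ideal Q} [P'.IsPrime] (h : P'.comap γ = P) :
    ∃ g : FractionRing (q ⧸ P) →+* FractionRing (Q ⧸ P'), ∀ x : q,
      g (algebraMap (q ⧸ P) _ (Ideal.Quotient.mk P x)) =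
        algebraMap (Q ⧸ P') _ (Ideal.Quotient.mk P' (γ x)) := by
  have hinj : Function.Injective (Ideal.quotientMap P' γ h.ge) := Ideal.quotientMap_injective' h.le
  refine ⟨IsFractionRing.map hinj, fun x => ?_⟩
  rw [IsFractionRing.map, IsLocalization.map_eq, Ideal.quotientMap_mk]

theorem exists_amalgam_of_injective.{u, v, w} {q : Type u} {Q : Type v} {Q' : Type w} [CommRing q]
    [CommRing Q] [CommRing Q'] [Nontrivial q] {α : q →+* Q} {β : q →+* Q'}
    (hα : Function.Injective α) (hβ : Function.Injective β) :
    ∃ (W : Type (max v w)) (_ : CommRing W) (_ : Nontrivial W) (f : Q →+* W) (f' : Q' →+* W),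
      f.comp α = f'.comp β := by
  obtain ⟨P, hP⟩ := Ideal.nonempty_minimalPrimes (I := (⊥ : Ideal q)) bot_ne_top
  obtain ⟨P₁, hP₁, h₁⟩ := Ideal.exists_comap_eq_of_mem_minimalPrimes_of_injective hα P hP
  obtain ⟨P₂, hP₂, h₂⟩ := Ideal.exists_comap_eq_of_mem_minimalPrimes_of_injective hβ P hP
  have := hP.1.1
  obtain ⟨g₁, hg₁⟩ := exists_fractionRing_ringHom α h₁
  obtain ⟨g₂, hg₂⟩ := exists_fractionRing_ringHom β h₂
  obtain ⟨W, _, _, l, r, hlr⟩ := exists_amalgam_of_field g₁ g₂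
  refine ⟨W, inferInstance, inferInstance,
    l.comp ((algebraMap (Q ⧸ P₁) _).comp (Ideal.Quotient.mk P₁)),
    r.comp ((algebraMap (Q' ⧸ P₂) _).comp (Ideal.Quotient.mk P₂)), RingHom.ext fun x => ?_⟩
  have := RingHom.congr_fun hlr (algebraMap (q ⧸ P) _ (Ideal.Quotient.mk P x))
  simpa only [RingHom.comp_apply, hg₁, hg₂] using this

end Amalgam

section Prolongation

variable {V A₀ A₁ A₂ : Type*} [CommRing A₀] [CommRing A₁] [CommRing A₂]
  {Φ₀ : A₀ →+* A₀} {Φ₁ : A₁ →+* A₁} {Φ₂ : A₂ →+* A₂} {i₀ s₀ : A₀ →+* A₁} {i₁ s₁ : A₁ →+* A₂}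
  {t : V → A₁}

-- `A₂` is the quotient of `A₁[V]` by the `s₀`-transported relations of `t` over `A₀`, so a ring map
-- out of `A₂` is a pair of maps out of `A₁` agreeing on `A₀`.
theorem exists_ringHom_of_ker_le {W : Type*} [CommRing W] (hcomm : i₁.comp s₀ = s₁.comp i₀)
    (ht : Function.Surjective (eval₂Hom i₀ t))
    (ht' : Function.Surjective (eval₂Hom i₁ (s₁ ∘ t)))
    (hker : RingHom.ker (eval₂Hom i₁ (s₁ ∘ t)) ≤ (RingHom.ker (eval₂Hom i₀ t)).map (map s₀))
    {f f' : A₁ →+* W} (hf : f.comp s₀ = f'.comp i₀) :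
    ∃ χ : A₂ →+* W, χ.comp i₁ = f ∧ χ.comp s₁ = f' := by
  let ψ : MvPolynomial V A₁ →+* W := eval₂Hom f (f' ∘ t)
  have hψ : ψ.comp (map s₀) = f'.comp (eval₂Hom i₀ t) :=
    ringHom_ext (fun a => by simpa [ψ] using RingHom.congr_fun hf a) fun v => by simp [ψ]
  have hψker : RingHom.ker (eval₂Hom i₁ (s₁ ∘ t)) ≤ RingHom.ker ψ := by
    refine hker.trans (Ideal.map_le_iff_le_comap.2 fun p hp => ?_)
    rw [RingHom.mem_ker] at hp
    rw [Ideal.mem_comap, RingHom.mem_ker, ← RingHom.comp_apply, hψ, RingHom.comp_apply, hp,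
      map_zero]
  let χ : A₂ →+* W := RingHom.liftOfSurjective _ ht' ⟨ψ, hψker⟩
  have hχ : χ.comp (eval₂Hom i₁ (s₁ ∘ t)) = ψ :=
    RingHom.ext fun p => RingHom.liftOfRightInverse_comp_apply _ _
      (Function.rightInverse_surjInv ht') ⟨ψ, hψker⟩ p
  have hs₁ : s₁.comp (eval₂Hom i₀ t) = (eval₂Hom i₁ (s₁ ∘ t)).comp (map s₀) :=
    ringHom_ext (fun a => by simpa using (RingHom.congr_fun hcomm a).symm) (by simp)
  refine ⟨χ, RingHom.ext fun a => ?_, RingHom.ext fun a => ?_⟩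
  · simpa [ψ] using RingHom.congr_fun hχ (C a)
  · obtain ⟨p, rfl⟩ := ht a
    calc χ (s₁ (eval₂Hom i₀ t p)) = (χ.comp (eval₂Hom i₁ (s₁ ∘ t))) (map s₀ p) :=
          congrArg χ (RingHom.congr_fun hs₁ p)
      _ = f' (eval₂Hom i₀ t p) := by rw [hχ]; exact RingHom.congr_fun hψ p

theorem IsDiffMaximal.map_sup_map_ne_top (hi₀ : ∀ a, i₀ (Φ₀ a) = Φ₁ (i₀ a))
    (hs₀ : ∀ a, s₀ (Φ₀ a) = Φ₁ (s₀ a)) (hcomm : i₁.comp s₀ = s₁.comp i₀)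
    (ht : Function.Surjective (eval₂Hom i₀ t))
    (ht' : Function.Surjective (eval₂Hom i₁ (s₁ ∘ t)))
    (hker : RingHom.ker (eval₂Hom i₁ (s₁ ∘ t)) ≤ (RingHom.ker (eval₂Hom i₀ t)).map (map s₀))
    {M₀ : Ideal A₀} {M₁ : Ideal A₁} (hM₀ : IsDiffMaximal Φ₀ M₀) (hM₁ : IsDiffMaximal Φ₁ M₁)
    (hiM : ∀ x ∈ M₀, i₀ x ∈ M₁) (hsM : ∀ x ∈ M₀, s₀ x ∈ M₁) :
    M₁.map i₁ ⊔ M₁.map s₁ ≠ ⊤ := by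
  have hα := Ideal.quotientMap_injective' (f := i₀) (H := hiM) (hM₀.comap_eq hi₀ hM₁ hiM).le
  have hβ := Ideal.quotientMap_injective' (f := s₀) (H := hsM) (hM₀.comap_eq hs₀ hM₁ hsM).le
  have : Nontrivial (A₀ ⧸ M₀) := Ideal.Quotient.nontrivial_iff.2 hM₀.1
  obtain ⟨W, _, _, f, f', hff⟩ := exists_amalgam_of_injective hβ hα
  obtain ⟨χ, hχi, hχs⟩ := exists_ringHom_of_ker_le hcomm ht ht' hker
    (f := f.comp (Ideal.Quotient.mk M₁)) (f' := f'.comp (Ideal.Quotient.mk M₁))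
    (RingHom.ext fun a => RingHom.congr_fun hff (Ideal.Quotient.mk M₀ a))
  have hle : M₁.map i₁ ⊔ M₁.map s₁ ≤ RingHom.ker χ := by
    refine sup_le (Ideal.map_le_iff_le_comap.2 fun a ha => ?_)
      (Ideal.map_le_iff_le_comap.2 fun a ha => ?_)
    · rw [Ideal.mem_comap, RingHom.mem_ker, ← RingHom.comp_apply, hχi, RingHom.comp_apply,
        Ideal.Quotient.eq_zero_iff_mem.2 ha, map_zero]
    · rw [Ideal.mem_comap, RingHom.mem_ker, ← RingHom.comp_apply, hχs, RingHom.comp_apply,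
        Ideal.Quotient.eq_zero_iff_mem.2 ha, map_zero]
  exact fun h => RingHom.ker_ne_top χ (top_le_iff.1 (h ▸ hle))

theorem IsDiffMaximal.exists_prolongation (hi₀ : ∀ a, i₀ (Φ₀ a) = Φ₁ (i₀ a))
    (hs₀ : ∀ a, s₀ (Φ₀ a) = Φ₁ (s₀ a)) (hi₁ : ∀ a, i₁ (Φ₁ a) = Φ₂ (i₁ a))
    (hs₁ : ∀ a, s₁ (Φ₁ a) = Φ₂ (s₁ a)) (hcomm : i₁.comp s₀ = s₁.comp i₀)
    (ht : Function.Surjective (eval₂Hom i₀ t))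
    (ht' : Function.Surjective (eval₂Hom i₁ (s₁ ∘ t)))
    (hker : RingHom.ker (eval₂Hom i₁ (s₁ ∘ t)) ≤ (RingHom.ker (eval₂Hom i₀ t)).map (map s₀))
    {M₀ : Ideal A₀} {M₁ : Ideal A₁} (hM₀ : IsDiffMaximal Φ₀ M₀) (hM₁ : IsDiffMaximal Φ₁ M₁)
    (hiM : ∀ x ∈ M₀, i₀ x ∈ M₁) (hsM : ∀ x ∈ M₀, s₀ x ∈ M₁) :
    ∃ M₂ : Ideal A₂, IsDiffMaximal Φ₂ M₂ ∧ (∀ x ∈ M₁, i₁ x ∈ M₂) ∧ ∀ x ∈ M₁, s₁ x ∈ M₂ := by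
  have hst : M₁.map i₁ ⊔ M₁.map s₁ ≤ (M₁.map i₁ ⊔ M₁.map s₁).comap Φ₂ := by
    refine sup_le (Ideal.map_le_iff_le_comap.2 fun a ha => ?_)
      (Ideal.map_le_iff_le_comap.2 fun a ha => ?_)
    · rw [Ideal.mem_comap, Ideal.mem_comap, ← hi₁]
      exact Ideal.mem_sup_left (Ideal.mem_map_of_mem _ (hM₁.2.1 a ha))
    · rw [Ideal.mem_comap, Ideal.mem_comap, ← hs₁]
      exact Ideal.mem_sup_right (Ideal.mem_map_of_mem _ (hM₁.2.1 a ha))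
  obtain ⟨M₂, hle, hM₂⟩ := exists_le_isDiffMaximal
    (hM₀.map_sup_map_ne_top hi₀ hs₀ hcomm ht ht' hker hM₁ hiM hsM) hst
  exact ⟨M₂, hM₂, fun x hx => hle (Ideal.mem_sup_left (Ideal.mem_map_of_mem _ hx)),
    fun x hx => hle (Ideal.mem_sup_right (Ideal.mem_map_of_mem _ hx))⟩

end Prolongation

section LeadingMonomials

variable {V Ω : Type*} [Field Ω] {o : MonomialOrder V}

/-- The monomial ideal generated by the leading monomials of the nonzero elements of `I`. -/
noncomputable def leadingMonomialIdeal (o : MonomialOrder V) (I : Ideal (MvPolynomial V Ω)) :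
    Ideal (MvPolynomial V Ω) :=
  Ideal.span ((fun d => monomial d (1 : Ω)) '' {d | ∃ p ∈ I, p ≠ 0 ∧ o.degree p = d})

theorem eq_of_le_of_leadingMonomialIdeal_le {I J : Ideal (MvPolynomial V Ω)} (hIJ : I ≤ J)
    (h : leadingMonomialIdeal o J ≤ leadingMonomialIdeal o I) : I = J := by
  refine le_antisymm hIJ fun p hp => ?_
  obtain ⟨g, r, hg, -, hr⟩ := o.div_set (B := {q | q ∈ I ∧ q ≠ 0}) (fun q hq => by
    rw [isUnit_iff_ne_zero, Ne, MonomialOrder.leadingCoeff_eq_zero_iff]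
    exact hq.2) p
  have hcomb : Finsupp.linearCombination _ (fun b : {q | q ∈ I ∧ q ≠ 0} => b.1) g ∈ I :=
    Submodule.sum_mem _ fun b _ => Submodule.smul_mem _ _ b.2.1
  suffices hr0 : r = 0 by rwa [hg, hr0, add_zero]
  by_contra hr0
  have hrJ : r ∈ J := by rwa [← Ideal.add_mem_iff_right _ (hIJ hcomb), ← hg]
  have hmem : monomial (o.degree r) (1 : Ω) ∈ leadingMonomialIdeal o I :=
    h (Ideal.subset_span ⟨_, ⟨r, hrJ, hr0, rfl⟩, rfl⟩)
  obtain ⟨_, ⟨q, hq, hq0, rfl⟩, hle⟩ :=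
    mem_ideal_span_monomial_image.1 hmem (o.degree r) (by classical simp [coeff_monomial])
  exact hr _ (o.degree_mem_support hr0) q ⟨hq, hq0⟩ hle

theorem leadingMonomialIdeal_le_of_map_mem {σ : Ω →+* Ω} {I J : Ideal (MvPolynomial V Ω)}
    (h : ∀ p ∈ I, map σ p ∈ J) : leadingMonomialIdeal o I ≤ leadingMonomialIdeal o J := by
  refine Ideal.span_mono (Set.image_mono ?_)
  rintro _ ⟨p, hp, hp0, rfl⟩
  refine ⟨_, h p hp, (map_ne_zero_iff _ (map_injective σ σ.injective)).2 hp0, ?_⟩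
  simp only [MonomialOrder.degree, support_map_of_injective p σ.injective]

-- The leading monomial ideals of `I i` form an ascending chain, since applying `σ` to the
-- coefficients does not change leading monomials.
theorem exists_map_eq_of_map_mem [Finite V] {σ : Ω →+* Ω} {I : ℕ → Ideal (MvPolynomial V Ω)}
    (hI : ∀ i, ∀ p ∈ I i, map σ p ∈ I (i + 1)) :
    ∃ e, ∀ i, e ≤ i → (I i).map (map σ) = I (i + 1) := by
  have := Fintype.ofFinite V
  let _ : LinearOrder V := LinearOrder.lift' (Fintype.equivFin V) (Fintype.equivFin V).injective
  let o : MonomialOrder V := MonomialOrder.lex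
  let N : ℕ →o Ideal (MvPolynomial V Ω) :=
    ⟨fun i => leadingMonomialIdeal o (I i),
      monotone_nat_of_le_succ fun i => leadingMonomialIdeal_le_of_map_mem (hI i)⟩
  obtain ⟨e, he⟩ := monotone_stabilizes_iff_noetherian.2
    (inferInstance : IsNoetherian (MvPolynomial V Ω) (MvPolynomial V Ω)) N
  refine ⟨e, fun i hi => eq_of_le_of_leadingMonomialIdeal_le (o := o)
    (Ideal.map_le_iff_le_comap.2 (hI i)) ?_⟩
  calc leadingMonomialIdeal o (I (i + 1)) = leadingMonomialIdeal o (I i) :=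
        (he _ (hi.trans i.le_succ)).symm.trans (he i hi)
    _ ≤ leadingMonomialIdeal o ((I i).map (map σ)) :=
        leadingMonomialIdeal_le_of_map_mem fun p hp => Ideal.mem_map_of_mem _ hp

end LeadingMonomials

section Tower

variable {V S : Type*} [CommRing S]

/-- The ideal of algebraic relations of a family `t` of elements of a ring over a subring `A`. -/
noncomputable def relIdeal (A : Subring S) (t : V → S) : Ideal (MvPolynomial V A) :=
  RingHom.ker (eval₂Hom A.subtype t)

theorem mem_relIdeal {A : Subring S} {t : V → S} {p : MvPolynomial V A} :
    p ∈ relIdeal A t ↔ eval₂ A.subtype t p = 0 := Iff.rfl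

/-- The ideal generated by the algebraic relations of `t` over `A` after extension of scalars to the
ambient ring. -/
noncomputable def relSpan (A : Subring S) (t : V → S) : Ideal (MvPolynomial V S) :=
  (relIdeal A t).map (map A.subtype)

/-- An increasing sequence of `F`-stable subrings `C i`, each generated over its predecessor by a
family `t i`, together with an endomorphism `G` commuting with `F` that moves `C i` into `C (i + 1)`
and `t i` to `t (i + 1)`. -/
structure IsShiftTower (F G : S →+* S) (C : ℕ → Subring S) (t : ℕ → V → S) : Prop where
  comm : ∀ x, F (G x) = G (F x)
  map_mem : ∀ i, ∀ x ∈ C i, F x ∈ C i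
  shift_mem : ∀ i, ∀ x ∈ C i, G x ∈ C (i + 1)
  le_succ : ∀ i, C i ≤ C (i + 1)
  gen_mem : ∀ i v, t i v ∈ C (i + 1)
  shift_gen : ∀ i v, G (t i v) = t (i + 1) v
  exists_eval₂_eq : ∀ i, ∀ x ∈ C (i + 1), ∃ p, eval₂ (C i).subtype (t i) p = x

namespace IsShiftTower

variable {F G : S →+* S} {C : ℕ → Subring S} {t : ℕ → V → S} (h : IsShiftTower F G C t)

theorem map_relIdeal_le (i : ℕ) :
    (relIdeal (C i) (t i)).map (map (G.restrict (C i) (C (i + 1)) (h.shift_mem i))) ≤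
      relIdeal (C (i + 1)) (t (i + 1)) := by
  refine Ideal.map_le_iff_le_comap.2 fun p hp => ?_
  have hcomp : (eval₂Hom (C (i + 1)).subtype (t (i + 1))).comp
      (map (G.restrict (C i) (C (i + 1)) (h.shift_mem i))) =
        G.comp (eval₂Hom (C i).subtype (t i)) :=
    ringHom_ext (by simp) (by simp [h.shift_gen])
  have := RingHom.congr_fun hcomp p
  rw [RingHom.comp_apply, RingHom.comp_apply, RingHom.mem_ker.1 hp, map_zero] at this
  exact this

theorem map_map_subtype (i : ℕ) (I : Ideal (MvPolynomial V (C i))) :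
    (I.map (map (C i).subtype)).map (map G) =
      (I.map (map (G.restrict (C i) (C (i + 1)) (h.shift_mem i)))).map
        (map (C (i + 1)).subtype) := by
  rw [Ideal.map_map, Ideal.map_map]
  congr 1
  exact ringHom_ext (by simp) (by simp)

-- Descent: over `S` the inclusion holds up to extension of scalars, and local retracts are exactly
-- what allows one to contract an extended ideal along a non-flat inclusion.
theorem relIdeal_succ_eq {r : ℕ → Ideal (MvPolynomial V S)}
    (hr : ∀ i, relSpan (C i) (t i) ≤ r i) (hrG : ∀ i, r (i + 1) ≤ (r i).map (map G))
    (hr₀ : r 0 ≤ relSpan (C 0) (t 0))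
    (h₀ : LocallyRetract (relIdeal (C 0) (t 0))) (i : ℕ) :
    relIdeal (C (i + 1)) (t (i + 1)) =
      (relIdeal (C i) (t i)).map (map (G.restrict (C i) (C (i + 1)) (h.shift_mem i))) := by
  have descend (i) (hret : LocallyRetract (relIdeal (C i) (t i)))
      (hri : r i ≤ relSpan (C i) (t i)) :
      relIdeal (C (i + 1)) (t (i + 1)) =
        (relIdeal (C i) (t i)).map (map (G.restrict (C i) (C (i + 1)) (h.shift_mem i))) := by
    refine le_antisymm (fun p hp => ?_) (h.map_relIdeal_le i)
    refine (hret.map _).mem_of_map_mem (i := (C (i + 1)).subtype) Subtype.val_injective ?_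
    rw [← h.map_map_subtype]
    exact Ideal.map_mono hri (hrG i (hr (i + 1) (Ideal.mem_map_of_mem _ hp)))
  have hind : LocallyRetract (relIdeal (C i) (t i)) ∧ r i ≤ relSpan (C i) (t i) := by
    induction i with
    | zero => exact ⟨h₀, hr₀⟩
    | succ i ih =>
      rw [relSpan, descend i ih.1 ih.2]
      refine ⟨ih.1.map _, ?_⟩
      rw [← h.map_map_subtype]
      exact (hrG i).trans (Ideal.map_mono ih.2)
  exact descend i hind.1 hind.2

theorem coe_eval₂Hom_inclusion {i : ℕ} {t' : V → C (i + 1)} (ht' : ∀ v, (t' v : S) = t i v) (p) :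
    (eval₂Hom (Subring.inclusion (h.le_succ i)) t' p : S) = eval₂ (C i).subtype (t i) p := by
  have : (C (i + 1)).subtype.comp (eval₂Hom (Subring.inclusion (h.le_succ i)) t') =
      eval₂Hom (C i).subtype (t i) := ringHom_ext (by simp) (by simp [ht'])
  exact RingHom.congr_fun this p

theorem eval₂Hom_inclusion_surjective {i : ℕ} {t' : V → C (i + 1)}
    (ht' : ∀ v, (t' v : S) = t i v) :
    Function.Surjective (eval₂Hom (Subring.inclusion (h.le_succ i)) t') := fun x => by
  obtain ⟨p, hp⟩ := h.exists_eval₂_eq i x x.2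
  exact ⟨p, Subtype.ext ((h.coe_eval₂Hom_inclusion ht' p).trans hp)⟩

theorem ker_eval₂Hom_inclusion {i : ℕ} {t' : V → C (i + 1)} (ht' : ∀ v, (t' v : S) = t i v) :
    RingHom.ker (eval₂Hom (Subring.inclusion (h.le_succ i)) t') = relIdeal (C i) (t i) := by
  ext p
  rw [mem_relIdeal, ← h.coe_eval₂Hom_inclusion ht', RingHom.mem_ker, ZeroMemClass.coe_eq_zero]

theorem exists_ne_top_of_isDiffMaximal
    (hrel : ∀ i, relIdeal (C (i + 1)) (t (i + 1)) =
      (relIdeal (C i) (t i)).map (map (G.restrict (C i) (C (i + 1)) (h.shift_mem i))))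
    {M₀ : Ideal (C 0)} {M₁ : Ideal (C 1)}
    (hM₀ : IsDiffMaximal (F.restrict (C 0) (C 0) (h.map_mem 0)) M₀)
    (hM₁ : IsDiffMaximal (F.restrict (C 1) (C 1) (h.map_mem 1)) M₁)
    (hiM : ∀ x ∈ M₀, Subring.inclusion (h.le_succ 0) x ∈ M₁)
    (hsM : ∀ x ∈ M₀, G.restrict (C 0) (C 1) (h.shift_mem 0) x ∈ M₁)
    {x : C 0} (hx : x ∈ M₀) (n : ℕ) : ∃ M : Ideal (C n), M ≠ ⊤ ∧ ∃ y ∈ M, (y : S) = x := by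
  suffices hpair : ∃ (M : Ideal (C n)) (M' : Ideal (C (n + 1))),
      IsDiffMaximal (F.restrict (C n) (C n) (h.map_mem n)) M ∧
      IsDiffMaximal (F.restrict (C (n + 1)) (C (n + 1)) (h.map_mem (n + 1))) M' ∧
      (∀ x ∈ M, Subring.inclusion (h.le_succ n) x ∈ M') ∧
      (∀ x ∈ M, G.restrict (C n) (C (n + 1)) (h.shift_mem n) x ∈ M') ∧ ∃ y ∈ M, (y : S) = x by
    obtain ⟨M, M', hM, -, -, -, hy⟩ := hpair
    exact ⟨M, hM.1, hy⟩
  induction n with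
  | zero => exact ⟨M₀, M₁, hM₀, hM₁, hiM, hsM, x, hx, rfl⟩
  | succ n ih =>
    obtain ⟨M, M', hM, hM', hi, hs, y, hy, hyx⟩ := ih
    let t' : V → C (n + 1) := fun v => ⟨t n v, h.gen_mem n v⟩
    let s := G.restrict (C (n + 1)) (C (n + 2)) (h.shift_mem (n + 1))
    have hker : RingHom.ker (eval₂Hom (Subring.inclusion (h.le_succ (n + 1))) (s ∘ t')) ≤
        (RingHom.ker (eval₂Hom (Subring.inclusion (h.le_succ n)) t')).map
          (map (G.restrict (C n) (C (n + 1)) (h.shift_mem n))) := by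
      rw [h.ker_eval₂Hom_inclusion (t' := t') fun v => rfl,
        h.ker_eval₂Hom_inclusion (t' := s ∘ t') (h.shift_gen n), hrel n]
    obtain ⟨M'', hM'', hi', hs'⟩ := hM.exists_prolongation
      (Φ₁ := F.restrict (C (n + 1)) (C (n + 1)) (h.map_mem (n + 1)))
      (Φ₂ := F.restrict (C (n + 2)) (C (n + 2)) (h.map_mem (n + 2)))
      (i₀ := Subring.inclusion (h.le_succ n)) (i₁ := Subring.inclusion (h.le_succ (n + 1)))
      (s₁ := s) (t := t') (fun a => rfl)
      (fun a => Subtype.ext (h.comm a).symm) (fun a => rfl) (fun a => Subtype.ext (h.comm a).symm)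
      (by ext; rfl) (h.eval₂Hom_inclusion_surjective fun v => rfl)
      (h.eval₂Hom_inclusion_surjective (h.shift_gen n)) hker hM' hi hs
    exact ⟨M', M'', hM', hM'', hi', hs', _, hi y hy, hyx⟩

end IsShiftTower

end Tower

section RelSpan

theorem relSpan_mono {V S : Type*} [CommRing S] {A A' : Subring S} (h : A ≤ A') (t : V → S) :
    relSpan A t ≤ relSpan A' t := by
  refine Ideal.map_le_iff_le_comap.2 fun p hp => ?_
  have hmap : map A.subtype p = map A'.subtype (map (Subring.inclusion h) p) := by
    rw [map_map]; rfl
  rw [Ideal.mem_comap, hmap]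
  refine Ideal.mem_map_of_mem _ ?_
  rw [mem_relIdeal, eval₂_map]
  exact hp

theorem relSpan_map_le {V V' S S' : Type*} [CommRing S] [CommRing S'] {A : Subring S}
    {A' : Subring S'} {t : V → S} {t' : V' → S'} {θ : MvPolynomial V S →+* MvPolynomial V' S'}
    {θ' : MvPolynomial V A →+* MvPolynomial V' A'}
    (hθ : (map A'.subtype).comp θ' = θ.comp (map A.subtype)) {E : S →+* S'}
    (hE : (eval₂Hom (RingHom.id S') t').comp θ = E.comp (eval₂Hom (RingHom.id S) t)) :
    (relSpan A t).map θ ≤ relSpan A' t' := by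
  rw [relSpan, Ideal.map_map, ← hθ, ← Ideal.map_map]
  refine Ideal.map_mono (Ideal.map_le_iff_le_comap.2 fun p hp => ?_)
  rw [Ideal.mem_comap, mem_relIdeal]
  calc eval₂ A'.subtype t' (θ' p) = eval₂Hom (RingHom.id S') t' (map A'.subtype (θ' p)) := by
        rw [coe_eval₂Hom, eval₂_map, RingHom.id_comp]
    _ = eval₂Hom (RingHom.id S') t' (θ (map A.subtype p)) :=
        congrArg _ (RingHom.congr_fun hθ p)
    _ = E (eval₂ (RingHom.id S) t (map A.subtype p)) := RingHom.congr_fun hE _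
    _ = 0 := by rw [eval₂_map, RingHom.id_comp, mem_relIdeal.1 hp, map_zero]

variable {ι m S : Type*} [CommRing S] {T T' : Subring S} {F G : S →+* S}

theorem relSpan_map_map_le (hGT : ∀ x ∈ T, G x ∈ T') (U : ι → Matrix m m S) :
    (relSpan T (entries U)).map (map G) ≤ relSpan T' (entries fun j => (U j).map G) :=
  relSpan_map_le (θ' := map (G.restrict T T' hGT)) (ringHom_ext (by simp) (by simp)) (E := G)
    (ringHom_ext (by simp) (by simp [entries]))

variable [Fintype m]

theorem relSpan_map_twist_le (hFT : ∀ x ∈ T, F x ∈ T) {A U : ι → Matrix m m S}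
    (hA : ∀ j p q, A j p q ∈ T) (hU : ∀ j, (U j).map F = A j * U j) :
    (relSpan T (entries U)).map (twist F A) ≤ relSpan T (entries U) := by
  refine relSpan_map_le (E := F)
    (θ' := twist (F.restrict T T hFT) fun j => Matrix.of fun p q => ⟨A j p q, hA j p q⟩) ?_ ?_
  · rw [map_comp_twist, twist_comp_map]
    rfl
  · exact evalMatrix_comp_twist_of_map_eq (RingHom.comp_id F) (by simpa using hU)

theorem relSpan_map_rightMul_le {Z : ι → Matrix m m S} (hZ : ∀ j p q, Z j p q ∈ T)
    (U : ι → Matrix m m S) :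
    (relSpan T (entries fun j => U j * Z j)).map (rightMul Z) ≤ relSpan T (entries U) := by
  refine relSpan_map_le (E := RingHom.id S)
    (θ' := rightMul fun j => Matrix.of fun p q => ⟨Z j p q, hZ j p q⟩) ?_ ?_
  · rw [map_comp_rightMul]
    rfl
  · refine (evalMatrix_comp_rightMul (RingHom.id S) U Z).trans ?_
    simp only [RingHom.coe_id, Matrix.map_id, RingHom.id_comp]
    rfl

-- In the coordinates `U_j⁻¹ X_j` a twist-stable ideal becomes an `F`-stable one, which is generated
-- by polynomials with constant coefficients.
theorem DiffSimple.map_comap_relSpan_twist {Ω : Type*} [Field Ω] [Algebra Ω S]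
    (hs : DiffSimple F) (hconst : ∀ t, F t = t → t ∈ (algebraMap Ω S).range)
    (hFT : ∀ x ∈ T, F x ∈ T) {A U : ι → Matrix m m S} (hA : ∀ j p q, A j p q ∈ T)
    (hU : ∀ j, (U j).map F = A j * U j) :
    (((relSpan T (entries U)).map (twist (RingHom.id S) U)).comap
        (map (σ := ι × m × m) (algebraMap Ω S))).map (map (algebraMap Ω S)) =
      (relSpan T (entries U)).map (twist (RingHom.id S) U) := by
  have hcomp :
      (map F).comp (twist (RingHom.id S) U) = (twist (RingHom.id S) U).comp (twist F A) := by
    rw [map_comp_twist, twist_comp_twist, RingHom.comp_id, RingHom.id_comp, funext hU]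
    simp only [RingHom.coe_id, Matrix.map_id]
  have hstable : ((relSpan T (entries U)).map (twist (RingHom.id S) U)).map (map F) ≤
      (relSpan T (entries U)).map (twist (RingHom.id S) U) := by
    rw [Ideal.map_map, hcomp, ← Ideal.map_map]
    exact Ideal.map_mono (relSpan_map_twist_le hFT hA hU)
  exact le_antisymm Ideal.map_comap_le
    (hs.le_map_comap hconst fun p hp => hstable (Ideal.mem_map_of_mem _ hp))

variable [DecidableEq m]

theorem relSpan_mul {Z Z' : ι → Matrix m m S} (hZ : ∀ j p q, Z j p q ∈ T)
    (hZ' : ∀ j p q, Z' j p q ∈ T) (hZZ' : ∀ j, Z j * Z' j = 1) (U : ι → Matrix m m S) :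
    relSpan T (entries fun j => U j * Z j) = (relSpan T (entries U)).map (rightMul Z') := by
  refine le_antisymm ?_ ?_
  · calc relSpan T (entries fun j => U j * Z j)
        = ((relSpan T (entries fun j => U j * Z j)).map (rightMul Z)).map (rightMul Z') := by
          rw [Ideal.map_map,
            rightMul_comp_rightMul_of_mul_eq_one fun j => mul_eq_one_comm.1 (hZZ' j), Ideal.map_id]
      _ ≤ (relSpan T (entries U)).map (rightMul Z') :=
          Ideal.map_mono (relSpan_map_rightMul_le hZ U)
  · have := relSpan_map_rightMul_le hZ' fun j => U j * Z j
    simpa only [Matrix.mul_assoc, hZZ', Matrix.mul_one] using this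

theorem relSpan_mul_le_map {U U' Z Z' : ι → Matrix m m S}
    (h : relSpan T' (entries U') ≤ (relSpan T (entries U)).map (map G))
    (hGT : ∀ x ∈ T, G x ∈ T') (hZ : ∀ j p q, Z j p q ∈ T) (hZ' : ∀ j p q, Z' j p q ∈ T)
    (hZZ' : ∀ j, Z j * Z' j = 1) :
    relSpan T' (entries fun j => U' j * (Z j).map G) ≤
      (relSpan T (entries fun j => U j * Z j)).map (map G) := by
  have hZZ'G : ∀ j, (Z j).map G * (Z' j).map G = 1 := fun j => by
    rw [← Matrix.map_mul, hZZ', Matrix.map_one _ (map_zero _) (map_one _)]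
  rw [relSpan_mul (Z := fun j => (Z j).map G) (fun j p q => hGT _ (hZ j p q))
    (fun j p q => hGT _ (hZ' j p q)) hZZ'G, relSpan_mul hZ hZ' hZZ', Ideal.map_map,
    map_comp_rightMul, ← Ideal.map_map]
  exact Ideal.map_mono h

theorem DiffSimple.exists_relSpan_le {Ω : Type*} [Finite ι] [Field Ω] [Algebra Ω S]
    {σΩ : Ω →+* Ω} (hs : DiffSimple F) (hconst : ∀ t, F t = t → t ∈ (algebraMap Ω S).range)
    (hGσ : G.comp (algebraMap Ω S) = (algebraMap Ω S).comp σΩ)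
    {T : ℕ → Subring S} (hFT : ∀ i, ∀ x ∈ T i, F x ∈ T i) (hGT : ∀ i, ∀ x ∈ T i, G x ∈ T (i + 1))
    {A U : ℕ → ι → Matrix m m S} (hA : ∀ i j p q, A i j p q ∈ T i)
    (hU : ∀ i, IsFundamental F (A i) (U i)) (hGU : ∀ i j, (U i j).map G = U (i + 1) j) :
    ∃ e, ∀ i, e ≤ i →
      relSpan (T (i + 1)) (entries (U (i + 1))) ≤ (relSpan (T i) (entries (U i))).map (map G) := by
  let J i := (relSpan (T i) (entries (U i))).map (twist (RingHom.id S) (U i))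
  let I i := (J i).comap (map (algebraMap Ω S))
  have hIJ i : (I i).map (map (algebraMap Ω S)) = J i :=
    hs.map_comap_relSpan_twist hconst (hFT i) (hA i) (hU i).map_eq
  have hGtwist i : (map G).comp (twist (RingHom.id S) (U i)) =
      (twist (RingHom.id S) (U (i + 1))).comp (map G) := by
    rw [map_comp_twist, twist_comp_map, RingHom.comp_id, RingHom.id_comp, funext (hGU i)]
  have hGalg : (map (σ := ι × m × m) (algebraMap Ω S)).comp (map σΩ) =
      (map G).comp (map (algebraMap Ω S)) :=
    ringHom_ext (fun a => by simpa using (RingHom.congr_fun hGσ a).symm) (by simp)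
  have hJG i : (J i).map (map G) ≤ J (i + 1) := by
    rw [Ideal.map_map, hGtwist, ← Ideal.map_map]
    refine Ideal.map_mono ((relSpan_map_map_le (hGT i) (U i)).trans_eq ?_)
    rw [funext (hGU i)]
  obtain ⟨e, he⟩ := exists_map_eq_of_map_mem (σ := σΩ) (I := I) fun i p hp => by
    rw [Ideal.mem_comap, ← RingHom.comp_apply, hGalg]
    exact hJG i (Ideal.mem_map_of_mem (map G) hp)
  refine ⟨e, fun i hi => ?_⟩
  have hJ : J (i + 1) =
      ((relSpan (T i) (entries (U i))).map (map G)).map (twist (RingHom.id S) (U (i + 1))) := by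
    rw [← hIJ, ← he i hi, Ideal.map_map, hGalg, ← Ideal.map_map, hIJ, Ideal.map_map, hGtwist,
      ← Ideal.map_map]
  have hinv := twist_comp_twist_of_mul_eq_one (U := U (i + 1))
    (V := fun j => (U (i + 1) j).adjugate) fun j => by
      rw [Matrix.mul_adjugate, (hU (i + 1)).det_eq_one, one_smul]
  have := congrArg (Ideal.map (twist (RingHom.id S) fun j => (U (i + 1) j).adjugate)) hJ
  rw [Ideal.map_map, Ideal.map_map, hinv, Ideal.map_id, Ideal.map_id] at this
  exact this.le

end RelSpan

section MatrixRelations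

variable {K S Ω ι m : Type*} [Field K] [CommRing S] [Field Ω] [Algebra K S] [Algebra Ω S]

/-- The ideal of algebraic relations over `K` between the entries of a family of matrices. -/
noncomputable def matrixRelations (K : Type*) [Field K] [Algebra K S] (U : ι → Matrix m m S) :
    Ideal (MvPolynomial (ι × m × m) K) :=
  RingHom.ker (evalMatrix (algebraMap K S) U)

theorem mem_matrixRelations_comp {ι' : Type*} (f : ι' → ι) {U : ι → Matrix m m S}
    {p : MvPolynomial (ι' × m × m) K} :
    p ∈ matrixRelations K (U ∘ f) ↔ rename (Prod.map f id) p ∈ matrixRelations K U := by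
  rw [matrixRelations, matrixRelations, RingHom.mem_ker, RingHom.mem_ker, evalMatrix, evalMatrix,
    coe_eval₂Hom, coe_eval₂Hom, eval₂_rename]
  rfl

/-- The first `n` matrices of a sequence. -/
abbrev truncate {α : Type*} (U : ℕ → α) (n : ℕ) (j : Fin n) : α := U j

theorem matrixRelations_truncate_mono {U V : ℕ → Matrix m m S} {n : ℕ}
    (h : matrixRelations K (truncate U (n + 1)) ≤ matrixRelations K (truncate V (n + 1))) :
    matrixRelations K (truncate U n) ≤ matrixRelations K (truncate V n) := fun _ hp =>
  (mem_matrixRelations_comp (U := truncate V (n + 1)) Fin.castSucc).2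
    (h ((mem_matrixRelations_comp (U := truncate U (n + 1)) Fin.castSucc).1 hp))

variable [Fintype m] [DecidableEq m] {φ : K →+* K} {F : S →+* S} {A : ι → Matrix m m K}
  {U : ι → Matrix m m S}

theorem det_map_eq_one {R : Type*} [CommRing R] (f : R →+* S) {z : Matrix m m R} (hz : z.det = 1) :
    (z.map f).det = 1 := by
  rw [← RingHom.mapMatrix_apply, ← RingHom.map_det, hz, map_one]

theorem det_map_iterate_eq_one {R : Type*} [CommRing R] (f : R →+* R) {z : Matrix m m R}
    (hz : z.det = 1) (i : ℕ) : (z.map f^[i]).det = 1 := by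
  rw [← RingHom.coe_pow]
  exact det_map_eq_one (f ^ i) hz

theorem IsFundamental.twist_mem_matrixRelations
    (hU : IsFundamental F (fun j => (A j).map (algebraMap K S)) U)
    (hF : F.comp (algebraMap K S) = (algebraMap K S).comp φ) {p : MvPolynomial (ι × m × m) K}
    (hp : p ∈ matrixRelations K U) : twist φ A p ∈ matrixRelations K U := by
  rw [matrixRelations, RingHom.mem_ker] at hp ⊢
  rw [← RingHom.comp_apply, evalMatrix_comp_twist_of_map_eq hF hU.map_eq, RingHom.comp_apply, hp,
    map_zero]

theorem IsFundamental.mul_map {A : ι → Matrix m m S} (hU : IsFundamental F A U)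
    (hFΩ : F.comp (algebraMap Ω S) = algebraMap Ω S) {z : ι → Matrix m m Ω}
    (hz : ∀ j, (z j).det = 1) : IsFundamental F A fun j => U j * (z j).map (algebraMap Ω S) where
  det_eq_one j := by rw [Matrix.det_mul, hU.det_eq_one, det_map_eq_one _ (hz j), one_mul]
  map_eq j := by
    rw [Matrix.map_mul, hU.map_eq, Matrix.mul_assoc, Matrix.map_map, ← RingHom.coe_comp, hFΩ]

theorem IsFundamental.det_eq_one_of_matrixRelations_le {A : ι → Matrix m m S}
    (hU : IsFundamental F A U) [Nontrivial S] {z : ι → Matrix m m Ω}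
    (hle : matrixRelations K U ≤ matrixRelations K fun j => U j * (z j).map (algebraMap Ω S))
    (j : ι) : (z j).det = 1 := by
  have hrel : (genericMatrix ι m K j).det - 1 ∈ matrixRelations K U := by
    rw [matrixRelations, RingHom.mem_ker, map_sub, map_one, RingHom.map_det,
      RingHom.mapMatrix_apply, genericMatrix_map_evalMatrix, hU.det_eq_one, sub_self]
  have hrel' := hle hrel
  rw [matrixRelations, RingHom.mem_ker, map_sub, map_one, RingHom.map_det, RingHom.mapMatrix_apply,
    genericMatrix_map_evalMatrix, Matrix.det_mul, hU.det_eq_one, one_mul, sub_eq_zero,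
    ← RingHom.mapMatrix_apply, ← RingHom.map_det] at hrel'
  exact (algebraMap Ω S).injective (hrel'.trans (map_one _).symm)

theorem IsFundamental.exists_isDiffMaximal [IsAlgClosed Ω] [Finite ι]
    (hU : IsFundamental F (fun j => (A j).map (algebraMap K S)) U)
    (hF : F.comp (algebraMap K S) = (algebraMap K S).comp φ) (hs : DiffSimple F)
    (hFΩ : F.comp (algebraMap Ω S) = algebraMap Ω S)
    (hconst : ∀ t, F t = t → t ∈ (algebraMap Ω S).range) :
    ∃ z : ι → Matrix m m Ω, (∀ j, (z j).det = 1) ∧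
      matrixRelations K U ≤ matrixRelations K (fun j => U j * (z j).map (algebraMap Ω S)) ∧
      IsDiffMaximal (twist φ A) (matrixRelations K fun j => U j * (z j).map (algebraMap Ω S)) := by
  have := hs.nontrivial
  obtain ⟨M, hle, hM⟩ := exists_le_isDiffMaximal (RingHom.ker_ne_top _)
    fun p hp => hU.twist_mem_matrixRelations hF hp
  obtain ⟨z, hz⟩ := exists_zero_of_twist_stable hF hs hconst hU hM.1 hM.2.1
  have hdet := hU.det_eq_one_of_matrixRelations_le (K := K) fun p hp => hz p (hle hp)
  have heq : matrixRelations K (fun j => U j * (z j).map (algebraMap Ω S)) = M :=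
    (hM.2.2 _ hz fun p hp => (hU.mul_map hFΩ hdet).twist_mem_matrixRelations hF hp).resolve_right
      (RingHom.ker_ne_top _)
  exact ⟨z, hdet, heq ▸ hle, heq ▸ hM⟩

theorem exists_nat_extension_det_eq_one {n : ℕ} {z : Fin n → Matrix m m Ω}
    (hz : ∀ j, (z j).det = 1) :
    ∃ w : ℕ → Matrix m m Ω, (∀ j, (w j).det = 1) ∧ ∀ j : Fin n, w j = z j := by
  refine ⟨fun j => if h : j < n then z ⟨j, h⟩ else 1, fun j => ?_, fun j => dif_pos j.2⟩
  dsimp only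
  split_ifs
  exacts [hz _, Matrix.det_one]

theorem isFundamental_truncate {A U : ℕ → Matrix m m S} (hU : IsFundamental F A U) (n : ℕ) :
    IsFundamental F (truncate A n) (truncate U n) :=
  ⟨fun j => hU.det_eq_one j, fun j => hU.map_eq j⟩

theorem IsFundamental.exists_isDiffMaximal_truncate [IsAlgClosed Ω] {A : ℕ → Matrix m m K}
    {U : ℕ → Matrix m m S} (hU : IsFundamental F (fun j => (A j).map (algebraMap K S)) U)
    (hF : F.comp (algebraMap K S) = (algebraMap K S).comp φ) (hs : DiffSimple F)
    (hFΩ : F.comp (algebraMap Ω S) = algebraMap Ω S)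
    (hconst : ∀ t, F t = t → t ∈ (algebraMap Ω S).range) (e : ℕ) :
    ∃ z : ℕ → Matrix m m Ω, (∀ j, (z j).det = 1) ∧ ∀ n, n = e ∨ n = e + 1 →
      IsDiffMaximal (twist φ (truncate A n))
        (matrixRelations K (truncate (fun j => U j * (z j).map (algebraMap Ω S)) n)) := by
  have := hs.nontrivial
  obtain ⟨u₀, hu₀, -, hmax₀⟩ := (isFundamental_truncate hU e).exists_isDiffMaximal hF hs hFΩ hconst
  obtain ⟨z₀, hz₀, hzu₀⟩ := exists_nat_extension_det_eq_one hu₀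
  simp only [← hzu₀] at hmax₀
  obtain ⟨u₁, hu₁, hle, hmax₁⟩ :=
    (isFundamental_truncate (hU.mul_map hFΩ hz₀) (e + 1)).exists_isDiffMaximal hF hs hFΩ hconst
  obtain ⟨z₁, hz₁, hzu₁⟩ := exists_nat_extension_det_eq_one hu₁
  simp only [← hzu₁, Matrix.mul_assoc, ← Matrix.map_mul] at hle hmax₁
  have hz : ∀ j, (z₀ j * z₁ j).det = 1 := fun j => by rw [Matrix.det_mul, hz₀, hz₁, one_mul]
  refine ⟨fun j => z₀ j * z₁ j, hz, ?_⟩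
  rintro n (rfl | rfl)
  · have hle₀ := matrixRelations_truncate_mono
      (V := fun j => U j * (z₀ j * z₁ j).map (algebraMap Ω S)) hle
    have heq := (hmax₀.2.2 _ hle₀ fun p hp =>
      (isFundamental_truncate (hU.mul_map hFΩ hz) n).twist_mem_matrixRelations hF hp).resolve_right
        (RingHom.ker_ne_top _)
    rwa [heq]
  · exact hmax₁

end MatrixRelations

section LinearDisjoint

variable {k S : Type*} [Field k] [CommRing S] [Algebra k S] {P P' B : Subalgebra k S}

theorem DiffSimple.linearDisjoint {F : S →+* S} {hF : ∀ x ∈ P, F x ∈ P}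
    (hs : DiffSimple (F.restrict P P hF))
    (hconst : ∀ x ∈ P, F x = x → x ∈ (algebraMap k S).range) (hB : ∀ b ∈ B, F b = b) :
    P.LinearDisjoint B := by
  let b := Basis.ofVectorSpace k B
  have hb : LinearIndependent k (B.val ∘ b) :=
    b.linearIndependent.map' B.val.toLinearMap (LinearMap.ker_eq_bot.2 Subtype.val_injective)
  refine .of_basis_right P B b (linearIndependent_iff.2 fun x hx => ?_)
  have hspan := hs.mem_span_fixed_of_linearCombination_eq_zero (F := F) (fun _ => rfl)
    (fun i => hB _ (b i).2) hx
  refine (Submodule.span_eq_bot.2 ?_).le hspan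
  rintro y ⟨hy, hfix⟩
  choose c hc using fun i => hconst (y i) (y i).2 (congrArg Subtype.val (hfix i))
  ext i
  rw [Finsupp.linearCombination_apply, Finsupp.sum] at hy
  by_cases hi : i ∈ y.support
  · have := linearIndependent_iff'.1 hb y.support c
      ((Finset.sum_congr rfl fun j _ => by rw [Algebra.smul_def, hc]; rfl).trans hy) i hi
    rw [← hc, this, map_zero, Finsupp.zero_apply, ZeroMemClass.coe_zero]
  · rw [Finsupp.notMem_support_iff.1 hi, Finsupp.zero_apply]

theorem exists_sum_mul_eq_of_mem_sup {ι : Type*} (b : Basis ι k B) {x : S} (hx : x ∈ P ⊔ B) :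
    ∃ c : ι →₀ P, c.sum (fun i a => (a : S) * b i) = x := by
  rw [← Subalgebra.mem_toSubmodule, ← Subalgebra.mul_toSubmodule] at hx
  have hle : B.toSubmodule ≤ (Submodule.span P (Set.range (B.val ∘ b))).restrictScalars k := by
    refine le_trans (le_of_eq ?_) (Submodule.span_le_restrictScalars k P _)
    rw [Set.range_comp, ← AlgHom.coe_toLinearMap, Submodule.span_image, b.span_eq]
    exact (Submodule.map_subtype_top B.toSubmodule).symm
  exact Finsupp.mem_span_range_iff_exists_finsupp.1 (Submodule.mul_induction_on hx
    (fun p hp β hβ => Submodule.smul_mem _ (⟨p, hp⟩ : P) (hle hβ)) fun _ _ => add_mem)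

/-- The inclusion of `P` into `P ⊔ B`. -/
abbrev inclusionSup (P B : Subalgebra k S) : P.toSubring →+* (P ⊔ B).toSubring :=
  Subring.inclusion (show P.toSubring ≤ (P ⊔ B).toSubring from le_sup_left (a := P))

theorem exists_sum_map_mul_C_eq {ι V : Type*} (b : Basis ι k B)
    (p : MvPolynomial V (P ⊔ B).toSubring) : ∃ r : ι →₀ MvPolynomial V P.toSubring,
      r.sum (fun i q => map (inclusionSup P B) q * C ⟨b i, le_sup_right (a := P) (b i).2⟩) = p := by
  induction p using MvPolynomial.induction_on' with
  | monomial d a =>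
    obtain ⟨c, hc⟩ := exists_sum_mul_eq_of_mem_sup b a.2
    refine ⟨c.mapRange (monomial d) (map_zero _), ?_⟩
    have hca : c.sum (fun i a => inclusionSup P B a * ⟨b i, le_sup_right (a := P) (b i).2⟩) = a :=
      Subtype.ext (by rw [← hc, Finsupp.sum, Finsupp.sum, AddSubmonoidClass.coe_finsetSum]; rfl)
    rw [Finsupp.sum_mapRange_index (by simp), ← hca, Finsupp.sum, Finsupp.sum, map_sum]
    refine Finset.sum_congr rfl fun i _ => ?_
    rw [map_monomial, mul_comm, C_mul_monomial, mul_comm]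
  | add p q hp hq =>
    obtain ⟨r, rfl⟩ := hp
    obtain ⟨s, rfl⟩ := hq
    exact ⟨r + s, Finsupp.sum_add_index' (by simp) (by simp [add_mul])⟩

-- A basis of `B` over `k` is linearly independent over `P'`, so a relation over `P ⊔ B` can be
-- separated into relations over `P`.
theorem relIdeal_sup_le (hPP : P ≤ P') (h : P'.LinearDisjoint B) {V : Type*} {t : V → S}
    (ht : ∀ v, t v ∈ P') :
    relIdeal (P ⊔ B).toSubring t ≤ (relIdeal P.toSubring t).map (map (inclusionSup P B)) := by
  let b := Basis.ofVectorSpace k B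
  let ev : MvPolynomial V P.toSubring →+* P' :=
    eval₂Hom (Subring.inclusion (show P.toSubring ≤ P'.toSubring from hPP)) fun v => ⟨t v, ht v⟩
  have hev p : (ev p : S) = eval₂ P.toSubring.subtype t p :=
    RingHom.congr_fun (f := P'.toSubring.subtype.comp ev) (g := eval₂Hom P.toSubring.subtype t)
      (ringHom_ext (fun a => by simp only [ev, RingHom.comp_apply, eval₂Hom_C]; rfl)
        fun v => by simp only [ev, RingHom.comp_apply, eval₂Hom_X']; rfl) p
  intro p hp
  obtain ⟨r, rfl⟩ := exists_sum_map_mul_C_eq b p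
  have hsum : Finsupp.linearCombination P' (B.val ∘ b) (r.mapRange ev (map_zero _)) = 0 := by
    rw [Finsupp.linearCombination_apply, Finsupp.sum_mapRange_index (by simp)]
    rw [mem_relIdeal, ← coe_eval₂Hom, map_finsuppSum] at hp
    refine (Finsupp.sum_congr fun i _ => ?_).trans hp
    rw [map_mul, coe_eval₂Hom, coe_eval₂Hom, eval₂_map, eval₂_C]
    exact congrArg (· * (b i : S)) (hev (r i))
  have hzero := linearIndependent_iff.1 (h.linearIndependent_right_of_flat b.linearIndependent) _
    hsum
  refine Ideal.sum_mem _ fun j _ => Ideal.mul_mem_right _ _ (Ideal.mem_map_of_mem _ ?_)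
  rw [mem_relIdeal, ← hev]
  exact congrArg Subtype.val (DFunLike.congr_fun hzero j)

end LinearDisjoint

section Retraction

variable {k S : Type*} [Field k] [CommRing S] [Algebra k S] {P P' B : Subalgebra k S}
  {F G : S →+* S}

theorem ringHom_ext_sup {A : Type*} [Semiring A] {f g : (P ⊔ B).toSubring →+* A}
    (hP : ∀ x (hx : x ∈ P), f ⟨x, le_sup_left (b := B) hx⟩ = g ⟨x, le_sup_left (b := B) hx⟩)
    (hB : ∀ x (hx : x ∈ B), f ⟨x, le_sup_right (a := P) hx⟩ = g ⟨x, le_sup_right (a := P) hx⟩) :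
    f = g := by
  have hmul (y : TensorProduct k P B) :
      f (Subalgebra.mulMap' P B y) = g (Subalgebra.mulMap' P B y) := by
    induction y using TensorProduct.induction_on with
    | zero => rw [map_zero]; exact (map_zero f).trans (map_zero g).symm
    | add y z hy hz =>
      rw [map_add]
      exact (map_add f _ _).trans ((congrArg₂ _ hy hz).trans (map_add g _ _).symm)
    | tmul p b =>
      exact (map_mul f ⟨p, le_sup_left (b := B) p.2⟩ ⟨b, le_sup_right (a := P) b.2⟩).trans
        ((congrArg₂ _ (hP p p.2) (hB b b.2)).trans (map_mul g _ _).symm)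
  ext x
  obtain ⟨y, hy⟩ := Subalgebra.mulMap'_surjective P B x
  exact hy ▸ hmul y

/-- The extension of a `k`-point `g` of `B` to a retraction of `P ⊔ B ≅ P ⊗ B` onto `P`. -/
noncomputable def retraction (h : P.LinearDisjoint B) (g : B →ₐ[k] k) :
    (P ⊔ B).toSubring →+* P.toSubring :=
  ((Algebra.TensorProduct.lift (AlgHom.id k P) ((Algebra.ofId k P).comp g)
    fun _ _ => Commute.all _ _).comp h.mulMap.symm.toAlgHom).toRingHom

variable {h : P.LinearDisjoint B} {g : B →ₐ[k] k}

theorem retraction_mul {p b : S} (hp : p ∈ P) (hb : b ∈ B) (hx : p * b ∈ P ⊔ B) :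
    (retraction h g ⟨p * b, hx⟩ : S) = p * algebraMap k S (g ⟨b, hb⟩) := by
  have : h.mulMap.symm ⟨p * b, hx⟩ = (⟨p, hp⟩ : P) ⊗ₜ (⟨b, hb⟩ : B) :=
    h.mulMap.symm_apply_eq.2 (Subtype.ext (h.val_mulMap_tmul ⟨p, hp⟩ ⟨b, hb⟩).symm)
  refine (congrArg (fun y => (Algebra.TensorProduct.lift (AlgHom.id k P)
    ((Algebra.ofId k P).comp g) (fun _ _ => Commute.all _ _) y : S)) this).trans ?_
  simp only [Algebra.TensorProduct.lift_tmul]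
  rfl

theorem retraction_left {x : S} (hx : x ∈ P) (hx' : x ∈ P ⊔ B) :
    (retraction h g ⟨x, hx'⟩ : S) = x := by
  have := retraction_mul (h := h) (g := g) hx (one_mem B) (by rwa [mul_one])
  rw [show (⟨1, one_mem B⟩ : B) = 1 from rfl] at this
  simpa only [map_one, mul_one] using this

theorem retraction_right {x : S} (hx : x ∈ B) (hx' : x ∈ P ⊔ B) :
    (retraction h g ⟨x, hx'⟩ : S) = algebraMap k S (g ⟨x, hx⟩) := by
  have := retraction_mul (h := h) (g := g) (one_mem P) hx (by rwa [one_mul])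
  simpa only [one_mul] using this

theorem retraction_surjective : Function.Surjective (retraction h g) := fun x =>
  ⟨inclusionSup P B x, Subtype.ext (retraction_left x.2 _)⟩

theorem DiffSimple.isDiffMaximal_ker_retraction {hF : ∀ x ∈ P, F x ∈ P}
    (hs : DiffSimple (F.restrict P.toSubring P.toSubring hF)) (hB : ∀ b ∈ B, F b = b)
    (hFsup : ∀ x ∈ P ⊔ B, F x ∈ P ⊔ B) :
    IsDiffMaximal (F.restrict (P ⊔ B).toSubring (P ⊔ B).toSubring hFsup)
      (RingHom.ker (retraction h g)) := by
  have hcomm : (retraction h g).comp (F.restrict (P ⊔ B).toSubring (P ⊔ B).toSubring hFsup) =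
      (F.restrict P.toSubring P.toSubring hF).comp (retraction h g) := by
    refine ringHom_ext_sup (fun x hx => Subtype.ext ?_) fun x hx => Subtype.ext ?_
    · change (retraction h g ⟨F x, _⟩ : S) = F (retraction h g ⟨x, _⟩)
      rw [retraction_left hx, retraction_left (hF x hx)]
    · change (retraction h g ⟨F x, _⟩ : S) = F (retraction h g ⟨x, _⟩)
      simp only [hB x hx, retraction_right hx]
      exact (hB _ (B.algebraMap_mem _)).symm
  exact hs.isDiffMaximal_ker (RingHom.congr_fun hcomm) retraction_surjective

theorem retraction_comp_inclusion {h' : P'.LinearDisjoint B}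
    (hPP : P.toSubring ≤ P'.toSubring) (hsup : (P ⊔ B).toSubring ≤ (P' ⊔ B).toSubring) :
    (retraction h' g).comp (Subring.inclusion hsup) =
      (Subring.inclusion hPP).comp (retraction h g) := by
  refine ringHom_ext_sup (fun x hx => Subtype.ext ?_) fun x hx => Subtype.ext ?_
  · change (retraction h' g ⟨x, _⟩ : S) = retraction h g ⟨x, _⟩
    rw [retraction_left hx]
    exact retraction_left (P := P') (hPP hx) _
  · change (retraction h' g ⟨x, _⟩ : S) = retraction h g ⟨x, _⟩
    rw [retraction_right hx]
    exact retraction_right hx _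

theorem retraction_comp_restrict {h' : P'.LinearDisjoint B} {σ : k →+* k}
    (hG : ∀ c, G (algebraMap k S c) = algebraMap k S (σ c)) {hGB : ∀ x ∈ B, G x ∈ B}
    (hg : ∀ x : B, g ⟨G x, hGB x x.2⟩ = σ (g x)) (hGsup : ∀ x ∈ P ⊔ B, G x ∈ P' ⊔ B) :
    (retraction h' g).comp (G.restrict (P ⊔ B).toSubring (P' ⊔ B).toSubring hGsup) =
      ((retraction h' g).comp (G.restrict (P ⊔ B).toSubring (P' ⊔ B).toSubring hGsup)).comp
        ((inclusionSup P B).comp (retraction h g)) := by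
  refine ringHom_ext_sup (fun x hx => Subtype.ext ?_) fun x hx => Subtype.ext ?_
  · change (retraction h' g ⟨G x, _⟩ : S) = retraction h' g ⟨G (retraction h g ⟨x, _⟩), _⟩
    simp only [retraction_left hx]
  · change (retraction h' g ⟨G x, _⟩ : S) = retraction h' g ⟨G (retraction h g ⟨x, _⟩), _⟩
    simp only [retraction_right hx, retraction_right (hGB x hx), hG,
      retraction_left (P'.algebraMap_mem _)]
    exact congrArg _ (hg ⟨x, hx⟩)

theorem exists_isDiffMaximal_pair (hPP : P ≤ P') {hF : ∀ x ∈ P, F x ∈ P}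
    (hs : DiffSimple (F.restrict P.toSubring P.toSubring hF)) {hF' : ∀ x ∈ P', F x ∈ P'}
    (hs' : DiffSimple (F.restrict P'.toSubring P'.toSubring hF')) (hB : ∀ b ∈ B, F b = b)
    (h' : P'.LinearDisjoint B)
    {σ : k →+* k} (hG : ∀ c, G (algebraMap k S c) = algebraMap k S (σ c))
    (hGB : ∀ x ∈ B, G x ∈ B) (g : B →ₐ[k] k) (hg : ∀ x : B, g ⟨G x, hGB x x.2⟩ = σ (g x))
    {C₀ C₁ : Subring S} (hC₀ : C₀ = (P ⊔ B).toSubring) (hC₁ : C₁ = (P' ⊔ B).toSubring)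
    (hFC₀ : ∀ x ∈ C₀, F x ∈ C₀) (hFC₁ : ∀ x ∈ C₁, F x ∈ C₁) (hCC : C₀ ≤ C₁)
    (hGC : ∀ x ∈ C₀, G x ∈ C₁) :
    ∃ M₀ M₁, IsDiffMaximal (F.restrict C₀ C₀ hFC₀) M₀ ∧ IsDiffMaximal (F.restrict C₁ C₁ hFC₁) M₁ ∧
      (∀ x ∈ M₀, Subring.inclusion hCC x ∈ M₁) ∧ (∀ x ∈ M₀, G.restrict C₀ C₁ hGC x ∈ M₁) ∧
      ∀ b : B, ∃ x ∈ M₀, (x : S) = b - algebraMap k S (g b) := by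
  subst hC₀ hC₁
  have h := h'.of_le_left_of_flat hPP
  have hincl := retraction_comp_inclusion (h := h) (h' := h') (g := g) hPP hCC
  have hshift := retraction_comp_restrict (h := h) (h' := h') hG hg hGC
  refine ⟨RingHom.ker (retraction h g), RingHom.ker (retraction h' g),
    hs.isDiffMaximal_ker_retraction hB hFC₀, hs'.isDiffMaximal_ker_retraction hB hFC₁,
    fun x hx => ?_, fun x hx => ?_, fun b => ?_⟩
  · refine (RingHom.congr_fun hincl x).trans ?_
    rw [RingHom.comp_apply, RingHom.mem_ker.1 hx, map_zero]
  · refine (RingHom.congr_fun hshift x).trans ?_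
    rw [RingHom.comp_apply _ ((inclusionSup P B).comp _), RingHom.comp_apply (inclusionSup P B),
      RingHom.mem_ker.1 hx, map_zero, map_zero]
  · have hb : (b : S) ∈ P ⊔ B := le_sup_right (a := P) b.2
    have hgb : algebraMap k S (g b) ∈ P ⊔ B := (P ⊔ B).algebraMap_mem _
    refine ⟨⟨b, hb⟩ - ⟨algebraMap k S (g b), hgb⟩, ?_, rfl⟩
    rw [RingHom.mem_ker, map_sub, sub_eq_zero]
    exact Subtype.ext
      ((retraction_right b.2 hb).trans (retraction_left (P.algebraMap_mem _) _).symm)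

end Retraction

section AdjoinEntries

variable {K S m : Type*} [CommRing S]

theorem mul_entry_mem [Fintype m] {T : Subring S} {U Z : Matrix m m S} (hU : ∀ p q, U p q ∈ T)
    (hZ : ∀ p q, Z p q ∈ T) (p q : m) : (U * Z) p q ∈ T :=
  sum_mem fun r _ => mul_mem (hU p r) (hZ r q)

theorem entry_mem_of_mul_entry_mem [Fintype m] [DecidableEq m] {T : Subring S} {U Z : Matrix m m S}
    (hZ : ∀ p q, Z p q ∈ T) (hdet : Z.det = 1) (hUZ : ∀ p q, (U * Z) p q ∈ T) (p q : m) :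
    U p q ∈ T := by
  have hadj : ∀ p q, Z.adjugate p q ∈ T := fun p q => by
    have : Z = T.subtype.mapMatrix (Matrix.of fun p q => ⟨Z p q, hZ p q⟩) := rfl
    rw [this, ← RingHom.map_adjugate]
    exact Subtype.prop _
  have hU : U = U * Z * Z.adjugate := by
    rw [Matrix.mul_assoc, Matrix.mul_adjugate, hdet, one_smul, Matrix.mul_one]
  rw [hU]
  exact mul_entry_mem hUZ hadj p q

variable [CommRing K] [Algebra K S] {E : Set S} {U : ℕ → Matrix m m S} {n : ℕ}

/-- The `K`-algebra generated by `E` and the entries of `U 0, …, U (n - 1)`. -/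
def adjoinEntries (K : Type*) [CommRing K] [Algebra K S] (E : Set S) (U : ℕ → Matrix m m S)
    (n : ℕ) : Subalgebra K S :=
  Algebra.adjoin K (E ∪ Set.range (entries (truncate U n)))

theorem subset_adjoinEntries : E ⊆ adjoinEntries K E U n :=
  Set.subset_union_left.trans Algebra.subset_adjoin

theorem entry_mem_adjoinEntries {j : ℕ} (hj : j < n) (p q : m) : U j p q ∈ adjoinEntries K E U n :=
  Algebra.subset_adjoin (Or.inr ⟨(⟨j, hj⟩, p, q), rfl⟩)

theorem adjoinEntries_le {Q : Subring S} (hK : ∀ a, algebraMap K S a ∈ Q) (hE : E ⊆ Q)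
    (hU : ∀ j < n, ∀ p q, U j p q ∈ Q) : (adjoinEntries K E U n).toSubring ≤ Q :=
  show adjoinEntries K E U n ≤ { Q with algebraMap_mem' := hK } from
    Algebra.adjoin_le (Set.union_subset hE
      (Set.range_subset_iff.2 fun v => hU v.1 v.1.2 v.2.1 v.2.2))

theorem adjoinEntries_le_adjoinEntries {E' : Set S} {U' : ℕ → Matrix m m S} {n' : ℕ}
    (hE : E ⊆ adjoinEntries K E' U' n') (hU : ∀ j < n, ∀ p q, U j p q ∈ adjoinEntries K E' U' n') :
    adjoinEntries K E U n ≤ adjoinEntries K E' U' n' :=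
  adjoinEntries_le (Q := (adjoinEntries K E' U' n').toSubring) (Subalgebra.algebraMap_mem _) hE hU

theorem adjoinEntries_mono {E' : Set S} {n' : ℕ} (hE : E ⊆ E') (hn : n ≤ n') :
    adjoinEntries K E U n ≤ adjoinEntries K E' U n' :=
  adjoinEntries_le_adjoinEntries (hE.trans subset_adjoinEntries) fun _ hj =>
    entry_mem_adjoinEntries (hj.trans_le hn)

theorem map_mem_adjoinEntries {S' : Type*} [CommRing S'] [Algebra K S'] {τ : S →+* S'}
    {Q : Subalgebra K S'}
    (hK : ∀ a, τ (algebraMap K S a) ∈ Q) (hE : ∀ x ∈ E, τ x ∈ Q)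
    (hU : ∀ j < n, ∀ p q, τ (U j p q) ∈ Q) : ∀ x ∈ adjoinEntries K E U n, τ x ∈ Q :=
  adjoinEntries_le (Q := Q.toSubring.comap τ) hK hE hU

variable [Fintype m] {φ : K →+* K} {F : S →+* S} {A : ℕ → Matrix m m K}

theorem map_mem_adjoinEntries_of_map_eq (hF : F.comp (algebraMap K S) = (algebraMap K S).comp φ)
    (hU : ∀ j, (U j).map F = (A j).map (algebraMap K S) * U j) (hE : ∀ x ∈ E, F x = x) :
    ∀ x ∈ adjoinEntries K E U n, F x ∈ adjoinEntries K E U n := by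
  refine map_mem_adjoinEntries (fun a => ?_) (fun x hx => ?_) fun j hj p q => ?_
  · rw [← RingHom.comp_apply, hF]
    exact Subalgebra.algebraMap_mem _ _
  · rw [hE x hx]
    exact subset_adjoinEntries hx
  · rw [← Matrix.map_apply (f := F), hU, Matrix.mul_apply]
    exact sum_mem fun r _ =>
      mul_mem (Subalgebra.algebraMap_mem _ _) (entry_mem_adjoinEntries hj _ _)

variable [DecidableEq m]

theorem exists_eval₂_eq_of_mem_adjoinEntries_succ {Z : Matrix m m S}
    (hZ : ∀ p q, Z p q ∈ adjoinEntries K E U n) (hdet : Z.det = 1) {x : S}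
    (hx : x ∈ adjoinEntries K E U (n + 1)) :
    ∃ p, eval₂ (adjoinEntries K E U n).toSubring.subtype (entries fun _ : Unit => U n * Z) p =
      x := by
  let f := eval₂Hom (adjoinEntries K E U n).toSubring.subtype (entries fun _ : Unit => U n * Z)
  have hf : ∀ a ∈ adjoinEntries K E U n, a ∈ f.range := fun a ha => ⟨C ⟨a, ha⟩, eval₂Hom_C _ _ _⟩
  suffices (adjoinEntries K E U (n + 1)).toSubring ≤ f.range from this hx
  refine adjoinEntries_le (fun a => hf _ (Subalgebra.algebraMap_mem _ a))
    (fun a ha => hf a (subset_adjoinEntries ha)) fun j hj => ?_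
  obtain hj | rfl := Nat.lt_succ_iff_lt_or_eq.1 hj
  · exact fun p q => hf _ (entry_mem_adjoinEntries hj p q)
  · exact entry_mem_of_mul_entry_mem (fun p q => hf _ (hZ p q)) hdet
      fun p q => ⟨X ((), p, q), eval₂Hom_X' _ _ _⟩

theorem adjoinEntries_eq_sup {k : Type*} [CommRing k] [Algebra k K] [Algebra k S]
    [IsScalarTower k K S] {B : Subalgebra k S} {Z : ℕ → Matrix m m S}
    (hZ : ∀ j < n, ∀ p q, Z j p q ∈ B) (hdet : ∀ j, (Z j).det = 1) :
    (adjoinEntries K (B : Set S) U n).restrictScalars k =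
      (adjoinEntries K ∅ (fun j => U j * Z j) n).restrictScalars k ⊔ B := by
  obtain ⟨P, hP⟩ : ∃ P, P = (adjoinEntries K ∅ (fun j => U j * Z j) n).restrictScalars k := ⟨_, rfl⟩
  rw [← hP]
  have hPQ : ∀ x ∈ adjoinEntries K ∅ (fun j => U j * Z j) n, x ∈ P ⊔ B := fun x hx =>
    (le_sup_left : P ≤ P ⊔ B) (hP ▸ hx)
  have hBPB : ∀ x ∈ B, x ∈ P ⊔ B := (le_sup_right : B ≤ P ⊔ B)
  have hB : ∀ x ∈ B, x ∈ adjoinEntries K (B : Set S) U n := fun x hx =>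
    subset_adjoinEntries (SetLike.mem_coe.2 hx)
  have hPB : adjoinEntries K ∅ (fun j => U j * Z j) n ≤ adjoinEntries K (B : Set S) U n :=
    adjoinEntries_le_adjoinEntries (Set.empty_subset _) fun j hj =>
      mul_entry_mem (T := (adjoinEntries K (B : Set S) U n).toSubring)
        (fun p q => entry_mem_adjoinEntries hj p q) fun p q => hB _ (hZ j hj p q)
  refine le_antisymm ?_ (sup_le (hP ▸ hPB) hB)
  exact adjoinEntries_le (Q := (P ⊔ B).toSubring) (fun a => hPQ _ (Subalgebra.algebraMap_mem _ a))
    hBPB fun j hj => entry_mem_of_mul_entry_mem (fun p q => hBPB _ (hZ j hj p q)) (hdet j)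
      fun p q => hPQ _ (entry_mem_adjoinEntries (U := fun j => U j * Z j) hj p q)

end AdjoinEntries

section AdjoinEntriesField

variable {K S m : Type*} [Field K] [CommRing S] [Algebra K S]
  {φ : K →+* K} {F : S →+* S} {A : ℕ → Matrix m m K} {U : ℕ → Matrix m m S} {n : ℕ}

theorem DiffSimple.fixed_mem_adjoinEntries [Finite m] [IsAlgClosed (constSubfield K φ)]
    (hF : F.comp (algebraMap K S) = (algebraMap K S).comp φ)
    {hst : ∀ x ∈ adjoinEntries K ∅ U n, F x ∈ adjoinEntries K ∅ U n}
    (hs : DiffSimple (F.restrict (adjoinEntries K ∅ U n) (adjoinEntries K ∅ U n) hst))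
    {c : S} (hc : c ∈ adjoinEntries K ∅ U n) (hFc : F c = c) :
    c ∈ (algebraMap (constSubfield K φ) S).range := by
  have : Algebra.FiniteType K (adjoinEntries K ∅ U n) := (Subalgebra.fg_iff_finiteType _).1
    (Subalgebra.fg_def.2 ⟨_, Set.finite_empty.union (Set.finite_range _), rfl⟩)
  obtain ⟨a, ha, hac⟩ := hs.fixed_mem_of_finiteType (fun a => Subtype.ext (RingHom.congr_fun hF a))
    (c := ⟨c, hc⟩) (Subtype.ext hFc)
  exact ⟨⟨a, ha⟩, congrArg Subtype.val hac⟩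

variable [Fintype m]

theorem IsDiffMaximal.diffSimple_adjoinEntries
    (hF : F.comp (algebraMap K S) = (algebraMap K S).comp φ)
    (hU : ∀ j, (U j).map F = (A j).map (algebraMap K S) * U j)
    (h : IsDiffMaximal (twist φ (truncate A n)) (matrixRelations K (truncate U n))) :
    DiffSimple (F.restrict (adjoinEntries K ∅ U n) (adjoinEntries K ∅ U n)
      (map_mem_adjoinEntries_of_map_eq hF hU fun _ hx => hx.elim)) := by
  have hr : adjoinEntries K ∅ U n = (aeval (entries (truncate U n))).range := by
    rw [adjoinEntries, Set.empty_union, Algebra.adjoin_range_eq_range_aeval]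
  let f : MvPolynomial (Fin n × m × m) K →+* adjoinEntries K ∅ U n :=
    (evalMatrix (algebraMap K S) (truncate U n)).codRestrict _ fun p => hr.ge ⟨p, rfl⟩
  have hker : RingHom.ker f = matrixRelations K (truncate U n) := Ideal.ext fun _ => Subtype.ext_iff
  refine IsDiffMaximal.diffSimple (f := f) (fun p => Subtype.ext ?_) (fun x => ?_) (hker ▸ h)
  · exact RingHom.congr_fun (evalMatrix_comp_twist_of_map_eq (A := truncate A n)
      (U := truncate U n) hF fun j => hU j) p
  · obtain ⟨p, hp⟩ := hr.le x.2
    exact ⟨p, Subtype.ext hp⟩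

variable [DecidableEq m]

theorem IsFundamental.locallyRetract_relIdeal {ι : Type*} [Finite ι] {P : Subring S}
    {hF : ∀ x ∈ P, F x ∈ P} (hs : DiffSimple (F.restrict P P hF)) {D W : ι → Matrix m m S}
    (hW : IsFundamental F D W) (hD : ∀ j p q, D j p q ∈ P) :
    LocallyRetract (relIdeal P (entries W)) := by
  let D' : ι → Matrix m m P := fun j => Matrix.of fun p q => ⟨D j p q, hD j p q⟩
  have hmap j : (W j).map F = (D' j).map P.subtype * W j := hW.map_eq j
  have hdet j : (D' j).det = 1 := by
    have := congrArg Matrix.det (hmap j)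
    rw [Matrix.det_mul, hW.det_eq_one, mul_one, det_map_eq_one F (hW.det_eq_one j),
      ← RingHom.mapMatrix_apply, ← RingHom.map_det] at this
    exact Subtype.ext this.symm
  refine hs.locallyRetract (D := D') (D' := fun j => (D' j).adjugate) (fun j => ?_) fun p hp => ?_
  · rw [Matrix.mul_adjugate, hdet, one_smul]
  · have h := RingHom.congr_fun (evalMatrix_comp_twist_of_map_eq
      (show F.comp P.subtype = P.subtype.comp (F.restrict P P hF) from rfl) hmap) p
    exact h.trans ((congrArg F hp).trans (map_zero F))

end AdjoinEntriesField

section RelIdealSup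

variable {k S V : Type*} [Field k] [CommRing S] [Algebra k S] {P P' B : Subalgebra k S} {t : V → S}

theorem relSpan_sup_le (hPP : P ≤ P') (h : P'.LinearDisjoint B) (ht : ∀ v, t v ∈ P') :
    relSpan (P ⊔ B).toSubring t ≤ relSpan P.toSubring t := by
  refine (Ideal.map_mono (relIdeal_sup_le hPP h ht)).trans_eq ?_
  rw [Ideal.map_map, relSpan]
  congr 1
  exact ringHom_ext (fun a => by simp; rfl) fun v => by simp

theorem LocallyRetract.relIdeal_sup (hP : LocallyRetract (relIdeal P.toSubring t)) (hPP : P ≤ P')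
    (h : P'.LinearDisjoint B) (ht : ∀ v, t v ∈ P') :
    LocallyRetract (relIdeal (P ⊔ B).toSubring t) := by
  have hmap : (relIdeal P.toSubring t).map (MvPolynomial.map (inclusionSup P B)) ≤
      relIdeal (P ⊔ B).toSubring t := by
    rw [Ideal.map_le_iff_le_comap]
    intro p hp
    rw [Ideal.mem_comap, mem_relIdeal, eval₂_map]
    exact hp
  rw [(relIdeal_sup_le hPP h ht).antisymm hmap]
  exact hP.map _

end RelIdealSup

section UnimodularSystem

variable {K Ω S m : Type*} [Field K] [Field Ω] [CommRing S] [Algebra K S] [Algebra Ω S]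
  [Fintype m] [DecidableEq m]

/-- An `F`-simple `K`-algebra `S` whose ring of `F`-constants is the field `Ω`, equipped with a
commuting endomorphism `G` and with matrices `U j = G ^ j (U 0)` of determinant one which solve the
systems `φ(y) = A j * y`. This is the situation to which a σ-PV ring is reduced by extending its
constants to an algebraically closed field. -/
structure IsUnimodularSystem (φ σ : K →+* K) (σΩ : Ω →+* Ω) (F G : S →+* S)
    (A : ℕ → Matrix m m K) (U : ℕ → Matrix m m S) : Prop where
  comm : ∀ x, F (G x) = G (F x)
  diffSimple : DiffSimple F
  fixed_mem_range : ∀ x, F x = x → x ∈ (algebraMap Ω S).range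
  comp_algebraMap : F.comp (algebraMap K S) = (algebraMap K S).comp φ
  shift_comp_algebraMap : G.comp (algebraMap K S) = (algebraMap K S).comp σ
  comp_algebraMap_const : F.comp (algebraMap Ω S) = algebraMap Ω S
  shift_comp_algebraMap_const : G.comp (algebraMap Ω S) = (algebraMap Ω S).comp σΩ
  isFundamental : IsFundamental F (fun j => (A j).map (algebraMap K S)) U
  shift_eq : ∀ j, (U j).map G = U (j + 1)

/-- From the index `e` on, the relations of a matrix `U (i + 1) * σ(Z)` over `ΩK[U_0, …, U_i]` come
from those of `U i * Z` over `ΩK[U_0, …, U_{i-1}]` by applying the shift. -/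
def RelationsStabilizeFrom (K : Type*) [Field K] [Algebra K S] (σΩ : Ω →+* Ω) (G : S →+* S)
    (U : ℕ → Matrix m m S) (e : ℕ) : Prop :=
  ∀ i, e ≤ i → ∀ Z : Matrix m m Ω, Z.det = 1 →
    relSpan (adjoinEntries K ((algebraMap Ω S).range : Set S) U (i + 1)).toSubring
        (entries fun _ : Unit => U (i + 1) * (Z.map σΩ).map (algebraMap Ω S)) ≤
      (relSpan (adjoinEntries K ((algebraMap Ω S).range : Set S) U i).toSubring
        (entries fun _ : Unit => U i * Z.map (algebraMap Ω S))).map (MvPolynomial.map G)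

namespace IsUnimodularSystem

variable {φ σ : K →+* K} {σΩ : Ω →+* Ω} {F G : S →+* S} {A : ℕ → Matrix m m K}
  {U : ℕ → Matrix m m S}

theorem map_eq_of_mem_range (h : IsUnimodularSystem φ σ σΩ F G A U) :
    ∀ x ∈ (algebraMap Ω S).range, F x = x := by
  rintro _ ⟨a, rfl⟩
  exact RingHom.congr_fun h.comp_algebraMap_const a

theorem map_mem_adjoinEntries (h : IsUnimodularSystem φ σ σΩ F G A U) {E : Set S}
    (hE : E ⊆ (algebraMap Ω S).range) {n : ℕ} :
    ∀ x ∈ adjoinEntries K E U n, F x ∈ adjoinEntries K E U n :=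
  map_mem_adjoinEntries_of_map_eq h.comp_algebraMap h.isFundamental.map_eq fun x hx =>
    h.map_eq_of_mem_range x (hE hx)

theorem shift_mem_adjoinEntries (h : IsUnimodularSystem φ σ σΩ F G A U) {E : Set S}
    (hE : ∀ x ∈ E, G x ∈ E) {n : ℕ} :
    ∀ x ∈ adjoinEntries K E U n, G x ∈ adjoinEntries K E U (n + 1) := by
  refine _root_.map_mem_adjoinEntries (fun a => ?_) (fun x hx => subset_adjoinEntries (hE x hx))
    fun j hj p q => ?_
  · rw [← RingHom.comp_apply, h.shift_comp_algebraMap]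
    exact Subalgebra.algebraMap_mem _ _
  · rw [← Matrix.map_apply (f := G), h.shift_eq]
    exact entry_mem_adjoinEntries (Nat.succ_lt_succ hj) _ _

theorem map_shift (h : IsUnimodularSystem φ σ σΩ F G A U) (Z : Matrix m m Ω) :
    (Z.map (algebraMap Ω S)).map G = (Z.map σΩ).map (algebraMap Ω S) := by
  rw [Matrix.map_map, ← RingHom.coe_comp, h.shift_comp_algebraMap_const, RingHom.coe_comp,
    Matrix.map_map]

theorem isShiftTower (h : IsUnimodularSystem φ σ σΩ F G A U) {E : Set S}
    (hE : E ⊆ (algebraMap Ω S).range) (hEG : ∀ x ∈ E, G x ∈ E) {Z : Matrix m m Ω}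
    (hZ : ∀ p q, algebraMap Ω S (Z p q) ∈ E) (hdet : Z.det = 1) (e : ℕ) :
    IsShiftTower F G (fun i => (adjoinEntries K E U (e + i)).toSubring)
      (fun i => entries fun _ : Unit => U (e + i) * (Z.map σΩ^[i]).map (algebraMap Ω S)) := by
  have hZE i : ∀ p q, (Z.map σΩ^[i]).map (algebraMap Ω S) p q ∈ E := by
    induction i with
    | zero => exact hZ
    | succ i ih =>
      rw [Function.iterate_succ', ← Matrix.map_map, ← h.map_shift]
      exact fun p q => hEG _ (ih p q)
  have hmono i : adjoinEntries K E U (e + i) ≤ adjoinEntries K E U (e + (i + 1)) :=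
    adjoinEntries_mono subset_rfl (Nat.le_succ _)
  exact
    { comm := h.comm
      map_mem := fun i => h.map_mem_adjoinEntries hE
      shift_mem := fun i => h.shift_mem_adjoinEntries hEG
      le_succ := hmono
      gen_mem := fun i v => mul_entry_mem (T := (adjoinEntries K E U (e + (i + 1))).toSubring)
        (fun p q => entry_mem_adjoinEntries (Nat.lt_succ_self _) p q)
        (fun p q => subset_adjoinEntries (hZE i p q)) v.2.1 v.2.2
      shift_gen := fun i v => by
        have hmap : (U (e + i) * (Z.map σΩ^[i]).map (algebraMap Ω S)).map G =
            U (e + (i + 1)) * (Z.map σΩ^[i + 1]).map (algebraMap Ω S) := by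
          rw [Matrix.map_mul, h.shift_eq, h.map_shift, Matrix.map_map (f := σΩ^[i]),
            ← Function.iterate_succ', Nat.add_assoc]
        exact congrFun (congrFun hmap v.2.1) v.2.2
      exists_eval₂_eq := fun i x hx => exists_eval₂_eq_of_mem_adjoinEntries_succ
        (fun p q => subset_adjoinEntries (hZE i p q))
            (det_map_eq_one _ (det_map_iterate_eq_one _ hdet i)) hx }

theorem exists_relationsStabilizeFrom (h : IsUnimodularSystem φ σ σΩ F G A U) :
    ∃ e, RelationsStabilizeFrom K σΩ G U e := by
  have hshift : ∀ x ∈ (algebraMap Ω S).range, G x ∈ (algebraMap Ω S).range := by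
    rintro _ ⟨a, rfl⟩
    exact ⟨_, (RingHom.congr_fun h.shift_comp_algebraMap_const a).symm⟩
  obtain ⟨e, he⟩ := h.diffSimple.exists_relSpan_le h.fixed_mem_range h.shift_comp_algebraMap_const
    (T := fun i => (adjoinEntries K ((algebraMap Ω S).range : Set S) U i).toSubring)
    (fun i => h.map_mem_adjoinEntries subset_rfl) (fun i => h.shift_mem_adjoinEntries hshift)
    (A := fun i (_ : Unit) => (A i).map (algebraMap K S)) (U := fun i _ => U i)
    (fun i _ p q => Subalgebra.algebraMap_mem _ _)
    (fun i => ⟨fun _ => h.isFundamental.det_eq_one i, fun _ => h.isFundamental.map_eq i⟩)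
    fun i _ => h.shift_eq i
  refine ⟨e, fun i hi Z hZ => ?_⟩
  have hmem (Z : Matrix m m Ω) p q : Z.map (algebraMap Ω S) p q ∈
      (adjoinEntries K ((algebraMap Ω S).range : Set S) U i).toSubring :=
    subset_adjoinEntries ⟨_, rfl⟩
  rw [← h.map_shift]
  refine relSpan_mul_le_map (he i hi) (h.shift_mem_adjoinEntries hshift) (fun _ => hmem Z)
    (fun _ => hmem Z.adjugate) fun _ => ?_
  rw [← Matrix.map_mul, Matrix.mul_adjugate, hZ, one_smul,
    Matrix.map_one _ (map_zero _) (map_one _)]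

end IsUnimodularSystem

end UnimodularSystem

section Specialization

variable {k K Ω S m : Type*} [Field k] [Field K] [Field Ω] [CommRing S] [Algebra k K] [Algebra k S]
  [Algebra K S] [Algebra Ω S] [IsScalarTower k K S]

/-- An `F`-stable `k`-subalgebra which is `F`-simple and whose `F`-constants all lie in `k`, as in
the definition of a Picard-Vessiot ring. -/
structure IsPVSubalgebra (F : S →+* S) (P : Subalgebra k S) : Prop where
  map_mem : ∀ x ∈ P, F x ∈ P
  diffSimple : DiffSimple (F.restrict P P map_mem)
  fixed_mem_range : ∀ x ∈ P, F x = x → x ∈ (algebraMap k S).range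

theorem IsPVSubalgebra.linearDisjoint {F : S →+* S} {P B : Subalgebra k S}
    (h : IsPVSubalgebra F P) (hB : ∀ b ∈ B, F b = b) : P.LinearDisjoint B :=
  h.diffSimple.linearDisjoint h.fixed_mem_range hB

variable [Fintype m]

/-- The `K`-algebra generated by the entries of the solutions `U 0 * z 0, …, U (n - 1) * z (n - 1)`,
viewed as a `k`-algebra. -/
abbrev twistedAdjoin (k K : Type*) {Ω S m : Type*} [Field k] [Field K] [Field Ω] [CommRing S]
    [Algebra k K] [Algebra k S] [Algebra K S] [Algebra Ω S] [IsScalarTower k K S] [Fintype m]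
    (U : ℕ → Matrix m m S) (z : ℕ → Matrix m m Ω) (n : ℕ) : Subalgebra k S :=
  (adjoinEntries K ∅ (fun j => U j * (z j).map (algebraMap Ω S)) n).restrictScalars k

variable {F G : S →+* S} {U : ℕ → Matrix m m S} {z : ℕ → Matrix m m Ω} {n : ℕ}
  {B : Subalgebra k S}

theorem twistedAdjoin_mono : twistedAdjoin k K U z n ≤ twistedAdjoin k K U z (n + 1) := by
  have := adjoinEntries_mono (K := K) (U := fun j => U j * (z j).map (algebraMap Ω S))
    (subset_rfl : (∅ : Set S) ⊆ ∅) n.le_succ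
  exact this

theorem entry_mem_twistedAdjoin_succ (v : Unit × m × m) :
    entries (fun _ : Unit => U n * (z n).map (algebraMap Ω S)) v ∈
      twistedAdjoin k K U z (n + 1) := by
  have := entry_mem_adjoinEntries (K := K) (E := ∅)
    (U := fun j => U j * (z j).map (algebraMap Ω S)) n.lt_succ_self v.2.1 v.2.2
  exact this

variable [DecidableEq m]

theorem adjoinEntries_toSubring_eq_sup (hz : ∀ j, (z j).det = 1)
    (hzB : ∀ j < n, ∀ p q, algebraMap Ω S (z j p q) ∈ B) :
    (adjoinEntries K (B : Set S) U n).toSubring = (twistedAdjoin k K U z n ⊔ B).toSubring :=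
  congrArg Subalgebra.toSubring (adjoinEntries_eq_sup hzB fun j => det_map_eq_one _ (hz j))

theorem relSpan_adjoinEntries_le (hP : IsPVSubalgebra F (twistedAdjoin k K U z (n + 1)))
    (hB : ∀ b ∈ B, F b = b) (hz : ∀ j, (z j).det = 1)
    (hzB : ∀ j < n, ∀ p q, algebraMap Ω S (z j p q) ∈ B) :
    relSpan (adjoinEntries K (B : Set S) U n).toSubring
        (entries fun _ : Unit => U n * (z n).map (algebraMap Ω S)) ≤
      relSpan (twistedAdjoin k K U z n).toSubring
        (entries fun _ : Unit => U n * (z n).map (algebraMap Ω S)) := by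
  rw [adjoinEntries_toSubring_eq_sup hz hzB]
  exact relSpan_sup_le twistedAdjoin_mono (hP.linearDisjoint hB) entry_mem_twistedAdjoin_succ

theorem locallyRetract_relIdeal_adjoinEntries {A : ℕ → Matrix m m K}
    (hU : IsFundamental F (fun j => (A j).map (algebraMap K S))
      fun j => U j * (z j).map (algebraMap Ω S))
    (hP₀ : IsPVSubalgebra F (twistedAdjoin k K U z n))
    (hP₁ : IsPVSubalgebra F (twistedAdjoin k K U z (n + 1)))
    (hB : ∀ b ∈ B, F b = b) (hz : ∀ j, (z j).det = 1)
    (hzB : ∀ j < n, ∀ p q, algebraMap Ω S (z j p q) ∈ B) :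
    LocallyRetract (relIdeal (adjoinEntries K (B : Set S) U n).toSubring
      (entries fun _ : Unit => U n * (z n).map (algebraMap Ω S))) := by
  rw [adjoinEntries_toSubring_eq_sup hz hzB]
  have hP : LocallyRetract (relIdeal (twistedAdjoin k K U z n).toSubring
      (entries fun _ : Unit => U n * (z n).map (algebraMap Ω S))) :=
    IsFundamental.locallyRetract_relIdeal (D := fun _ => (A n).map (algebraMap K S))
      (hF := hP₀.map_mem) hP₀.diffSimple ⟨fun _ => hU.det_eq_one n, fun _ => hU.map_eq n⟩
      fun _ p q => (adjoinEntries K ∅ _ n).algebraMap_mem (A n p q)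
  exact hP.relIdeal_sup twistedAdjoin_mono (hP₁.linearDisjoint hB) entry_mem_twistedAdjoin_succ

theorem IsUnimodularSystem.relIdeal_adjoinEntries_succ [Algebra k Ω] [IsScalarTower k Ω S]
    {φ σ : K →+* K} {σΩ : Ω →+* Ω} {A : ℕ → Matrix m m K} (h : IsUnimodularSystem φ σ σΩ F G A U)
    {e : ℕ} (he : RelationsStabilizeFrom K σΩ G U e) (hz : ∀ j, (z j).det = 1)
    (hP₀ : IsPVSubalgebra F (twistedAdjoin k K U z e))
    (hP₁ : IsPVSubalgebra F (twistedAdjoin k K U z (e + 1)))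
    (hzB : ∀ j ≤ e, ∀ p q, algebraMap Ω S (z j p q) ∈ B)
    (hBΩ : (B : Set S) ⊆ (algebraMap Ω S).range) (hGB : ∀ x ∈ B, G x ∈ B) (i : ℕ) :
    relIdeal (adjoinEntries K (B : Set S) U (e + (i + 1))).toSubring
        (entries fun _ : Unit => U (e + (i + 1)) * ((z e).map σΩ^[i + 1]).map (algebraMap Ω S)) =
      (relIdeal (adjoinEntries K (B : Set S) U (e + i)).toSubring
        (entries fun _ : Unit => U (e + i) * ((z e).map σΩ^[i]).map (algebraMap Ω S))).map
          (MvPolynomial.map (G.restrict _ _ (h.shift_mem_adjoinEntries hGB))) := by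
  have hzB₀ : ∀ j < e, ∀ p q, algebraMap Ω S (z j p q) ∈ B := fun j hj => hzB j hj.le
  refine (h.isShiftTower hBΩ hGB (hzB e le_rfl) (hz e) e).relIdeal_succ_eq
    (r := fun i => relSpan (adjoinEntries K ((algebraMap Ω S).range : Set S) U (e + i)).toSubring
      (entries fun _ : Unit => U (e + i) * ((z e).map σΩ^[i]).map (algebraMap Ω S)))
    (fun i => relSpan_mono (adjoinEntries_mono hBΩ le_rfl) _) (fun i => ?_) ?_ ?_ i
  · have hi := he (e + i) (Nat.le_add_right e i) _ (det_map_iterate_eq_one σΩ (hz e) i)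
    rwa [Matrix.map_map (f := σΩ^[i]), ← Function.iterate_succ'] at hi
  · refine (relSpan_adjoinEntries_le (B := (IsScalarTower.toAlgHom k Ω S).range) hP₁
      h.map_eq_of_mem_range hz fun j _ p q => ⟨_, rfl⟩).trans (relSpan_mono ?_ _)
    exact (le_sup_left : twistedAdjoin k K U z e ≤ _).trans_eq
      (adjoinEntries_eq_sup hzB₀ fun j => det_map_eq_one _ (hz j)).symm
  · exact locallyRetract_relIdeal_adjoinEntries (h.isFundamental.mul_map h.comp_algebraMap_const hz)
      hP₀ hP₁ (fun b hb => h.map_eq_of_mem_range b (hBΩ hb)) hz hzB₀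

theorem IsUnimodularSystem.exists_ne_top [Algebra k Ω] [IsScalarTower k Ω S] {φ σ : K →+* K}
    {σΩ : Ω →+* Ω} {A : ℕ → Matrix m m K} (h : IsUnimodularSystem φ σ σΩ F G A U) {e : ℕ}
    (he : RelationsStabilizeFrom K σΩ G U e) (hz : ∀ j, (z j).det = 1)
    (hP₀ : IsPVSubalgebra F (twistedAdjoin k K U z e))
    (hP₁ : IsPVSubalgebra F (twistedAdjoin k K U z (e + 1)))
    (hzB : ∀ j ≤ e, ∀ p q, algebraMap Ω S (z j p q) ∈ B)
    (hBΩ : (B : Set S) ⊆ (algebraMap Ω S).range) (hGB : ∀ x ∈ B, G x ∈ B)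
    {τ : k →+* k} (hG : ∀ c, G (algebraMap k S c) = algebraMap k S (τ c))
    (g : B →ₐ[k] k) (hg : ∀ x : B, g ⟨G x, hGB x x.2⟩ = τ (g x)) (b : B) (n : ℕ) :
    ∃ M : Ideal (adjoinEntries K (B : Set S) U (e + n)).toSubring, M ≠ ⊤ ∧
      ∃ y ∈ M, (y : S) = b - algebraMap k S (g b) := by
  have hBF : ∀ b ∈ B, F b = b := fun b hb => h.map_eq_of_mem_range b (hBΩ hb)
  have tower := h.isShiftTower hBΩ hGB (hzB e le_rfl) (hz e) e
  obtain ⟨M₀, M₁, hM₀, hM₁, hiM, hsM, hM⟩ := exists_isDiffMaximal_pair (k := k)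
    (hF := hP₀.map_mem) (hF' := hP₁.map_mem) twistedAdjoin_mono hP₀.diffSimple hP₁.diffSimple hBF
    (hP₁.linearDisjoint hBF) hG hGB g hg
    (adjoinEntries_toSubring_eq_sup hz fun j hj => hzB j hj.le)
    (adjoinEntries_toSubring_eq_sup hz fun j hj => hzB j (Nat.lt_succ_iff.1 hj))
    (tower.map_mem 0) (tower.map_mem 1) (tower.le_succ 0) (tower.shift_mem 0)
  obtain ⟨x, hx, hxb⟩ := hM b
  rw [← hxb]
  exact tower.exists_ne_top_of_isDiffMaximal
    (h.relIdeal_adjoinEntries_succ he hz hP₀ hP₁ hzB hBΩ hGB) hM₀ hM₁ hiM hsM hx n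

end Specialization

theorem IsUnimodularSystem.exists_isPVSubalgebra_twistedAdjoin {K Ω S m : Type*} [Field K]
    [Field Ω] [IsAlgClosed Ω] [CommRing S] [Algebra K S] [Algebra Ω S] [Fintype m] [DecidableEq m]
    {φ σ : K →+* K} [IsAlgClosed (constSubfield K φ)] {σΩ : Ω →+* Ω} {F G : S →+* S}
    {A : ℕ → Matrix m m K} {U : ℕ → Matrix m m S}
    (h : IsUnimodularSystem φ σ σΩ F G A U) (e : ℕ) :
    ∃ z : ℕ → Matrix m m Ω, (∀ j, (z j).det = 1) ∧ ∀ n, n = e ∨ n = e + 1 →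
      IsPVSubalgebra F (twistedAdjoin (constSubfield K φ) K U z n) := by
  obtain ⟨z, hz, hmax⟩ := h.isFundamental.exists_isDiffMaximal_truncate h.comp_algebraMap
    h.diffSimple h.comp_algebraMap_const h.fixed_mem_range e
  refine ⟨z, hz, fun n hn => ?_⟩
  have hU := (h.isFundamental.mul_map h.comp_algebraMap_const hz).map_eq
  have hs := (hmax n hn).diffSimple_adjoinEntries h.comp_algebraMap hU
  have hF := map_mem_adjoinEntries_of_map_eq (n := n) h.comp_algebraMap hU
    fun x (hx : x ∈ (∅ : Set S)) => hx.elim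
  exact ⟨hF, hs, fun _ => hs.fixed_mem_adjoinEntries h.comp_algebraMap⟩

theorem SigmaClosed.exists_point_subalgebra {k Ω : Type u} {S : Type*} [Field k] [Field Ω]
    [CommRing S] [Nontrivial S] [Algebra k Ω] [Algebra k S] [Algebra Ω S] [IsScalarTower k Ω S]
    {τ : k →+* k} (hcl : SigmaClosed τ) {σΩ : Ω →+* Ω} {G : S →+* S}
    (hG : ∀ c, G (algebraMap k S c) = algebraMap k S (τ c))
    (hGΩ : G.comp (algebraMap Ω S) = (algebraMap Ω S).comp σΩ) (T : Finset Ω) :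
    ∃ (B : Subalgebra k S) (hGB : ∀ x ∈ B, G x ∈ B) (g : B →ₐ[k] k),
      (B : Set S) ⊆ (algebraMap Ω S).range ∧ (∀ t ∈ T, algebraMap Ω S t ∈ B) ∧
      ∀ x : B, g ⟨G x, hGB x x.2⟩ = τ (g x) := by
  let i := IsScalarTower.toAlgHom k Ω S
  have hi : Function.Injective i := (algebraMap Ω S).injective
  have hGi (x : Ω) : G (i x) = i (σΩ x) := RingHom.congr_fun hGΩ x
  have hσΩ (c : k) : σΩ (algebraMap k Ω c) = algebraMap k Ω (τ c) :=
    hi (by rw [← hGi, i.commutes, hG, i.commutes])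
  obtain ⟨B, hB, g, hT, hg⟩ := hcl.exists_point hσΩ T
  have hGB : ∀ x ∈ B.map i, G x ∈ B.map i := by
    rintro _ ⟨x, hx, rfl⟩
    exact ⟨σΩ x, hB x hx, (hGi x).symm⟩
  let j := (B.equivMapOfInjective i hi).symm
  have hj (x : B.map i) : i (j x) = x :=
    congrArg Subtype.val ((B.equivMapOfInjective i hi).apply_symm_apply x)
  refine ⟨B.map i, hGB, g.comp j, ?_, fun t ht => ⟨t, hT ht, rfl⟩, fun x => ?_⟩
  · rintro _ ⟨x, -, rfl⟩
    exact ⟨x, rfl⟩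
  · refine (congrArg g (Subtype.ext (hi ?_))).trans (hg (j x))
    exact (hj ⟨G x, hGB x x.2⟩).trans ((congrArg G (hj x)).symm.trans (hGi (j x)))

theorem IsUnimodularSystem.fixed_mem {K Ω : Type u} {S m : Type*} [Field K] [Field Ω]
    [IsAlgClosed Ω] [CommRing S] [Algebra K S] [Algebra Ω S] [Fintype m] [DecidableEq m]
    {φ σ : K →+* K} [Algebra (constSubfield K φ) Ω] [IsScalarTower (constSubfield K φ) Ω S]
    {σΩ : Ω →+* Ω} {F G : S →+* S} {A : ℕ → Matrix m m K} {U : ℕ → Matrix m m S}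
    {hcomm : ∀ a, φ (σ a) = σ (φ a)} (hcl : SigmaClosed (sigmaRes φ σ hcomm))
    (h : IsUnimodularSystem φ σ σΩ F G A U) {c : Ω}
    (hc : ∀ a, φ a = a → algebraMap K S a ≠ algebraMap Ω S c →
      ∃ n, ∃ d ∈ adjoinEntries K ∅ U n, (algebraMap Ω S c - algebraMap K S a) * d = 1) :
    ∃ a, φ a = a ∧ algebraMap K S a = algebraMap Ω S c := by
  classical
  have := h.diffSimple.nontrivial
  have := hcl.isAlgClosed
  have hG (a : constSubfield K φ) : G (algebraMap _ S a) =
      algebraMap _ S (sigmaRes φ σ hcomm a) :=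
    RingHom.congr_fun h.shift_comp_algebraMap a
  obtain ⟨e, he⟩ := h.exists_relationsStabilizeFrom
  obtain ⟨z, hz, hP⟩ := h.exists_isPVSubalgebra_twistedAdjoin e
  obtain ⟨B, hGB, g, hBΩ, hT, hg⟩ := hcl.exists_point_subalgebra hG h.shift_comp_algebraMap_const
    (insert c ((Finset.range (e + 1) ×ˢ Finset.univ).image fun v : ℕ × m × m =>
      z v.1 v.2.1 v.2.2))
  have hzB (j) (hj : j ≤ e) (p q) : algebraMap Ω S (z j p q) ∈ B :=
    hT _ (Finset.mem_insert_of_mem (Finset.mem_image.2 ⟨(j, p, q), by simpa using by omega, rfl⟩))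
  let b : B := ⟨algebraMap Ω S c, hT c (Finset.mem_insert_self ..)⟩
  refine ⟨g b, (g b).2, by_contra fun hne => ?_⟩
  obtain ⟨n, d, hd, hcd⟩ := hc (g b) (g b).2 hne
  obtain ⟨M, hM, y, hy, hyb⟩ := h.exists_ne_top he hz (hP e (.inl rfl)) (hP (e + 1) (.inr rfl))
      hzB hBΩ hGB hG g hg b n
  have hdC : d ∈ adjoinEntries K (B : Set S) U (e + n) :=
    adjoinEntries_mono (Set.empty_subset _) (Nat.le_add_left n e) hd
  refine hM (Ideal.eq_top_of_isUnit_mem M hy (IsUnit.of_mul_eq_one ⟨d, hdC⟩ (Subtype.ext ?_)))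
  exact (congrArg (· * d) hyb).trans hcd

theorem exists_ringHom_comp_eq {A B C : Type*} [CommRing A] [CommRing B] [CommRing C]
    {i : B →+* C} (hi : Function.Injective i) {f : A →+* C} (hf : f.range ≤ i.range) :
    ∃ g : A →+* B, i.comp g = f := by
  let j := RingEquiv.ofBijective i.rangeRestrict
    ⟨fun _ _ h => hi (congrArg Subtype.val h), i.rangeRestrict_surjective⟩
  refine ⟨j.symm.toRingHom.comp (f.codRestrict i.range fun a => hf ⟨a, rfl⟩),
    RingHom.ext fun a => ?_⟩
  exact congrArg Subtype.val (j.apply_symm_apply ⟨f a, hf ⟨a, rfl⟩⟩)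

section BaseChange

open scoped TensorProduct

attribute [local instance] Algebra.TensorProduct.rightAlgebra

variable {L R Ω : Type*} [Field L] [CommRing R] [Field Ω] [Algebra L R] [Algebra L Ω]
  {Φ : R →+* R} {F : R ⊗[L] Ω →+* R ⊗[L] Ω}

theorem repr_map_tensor (hΦ : ∀ l, Φ (algebraMap L R l) = algebraMap L R l)
    (hF : ∀ r ω, F (r ⊗ₜ ω) = Φ r ⊗ₜ ω) {κ : Type*} (b : Basis κ L Ω) (x : R ⊗[L] Ω) (i : κ) :
    (Algebra.TensorProduct.basis R b).repr (F x) i =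
      Φ ((Algebra.TensorProduct.basis R b).repr x i) := by
  induction x using TensorProduct.induction_on with
  | zero => simp
  | tmul r ω => simp [hF, hΦ]
  | add x y hx hy => simp [hx, hy]

theorem fixed_mem_range_tensor (hΦ : ∀ l, Φ (algebraMap L R l) = algebraMap L R l)
    (hconst : ∀ r, Φ r = r → r ∈ (algebraMap L R).range)
    (hF : ∀ r ω, F (r ⊗ₜ ω) = Φ r ⊗ₜ ω) {x : R ⊗[L] Ω} (hx : F x = x) :
    x ∈ (algebraMap Ω (R ⊗[L] Ω)).range := by
  let b := Basis.ofVectorSpace L Ω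
  have hrepr i : ∃ l, algebraMap L R l = (Algebra.TensorProduct.basis R b).repr x i :=
    hconst _ (by rw [← repr_map_tensor hΦ hF, hx])
  choose l hl using hrepr
  rw [← (Algebra.TensorProduct.basis R b).linearCombination_repr x,
    Finsupp.linearCombination_apply]
  refine sum_mem fun i _ => ⟨l i • b i, ?_⟩
  change 1 ⊗ₜ (l i • b i) = (Algebra.TensorProduct.basis R b).repr x i • _
  rw [Algebra.TensorProduct.basis_apply, ← hl, ← TensorProduct.smul_tmul, algebraMap_smul,
    TensorProduct.smul_tmul']

theorem DiffSimple.tensor (hs : DiffSimple Φ)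
    (hΦ : ∀ l, Φ (algebraMap L R l) = algebraMap L R l)
    (hconst : ∀ r, Φ r = r → r ∈ (algebraMap L R).range)
    (hF : ∀ r ω, F (r ⊗ₜ ω) = Φ r ⊗ₜ ω) : DiffSimple F := by
  have := hs.nontrivial
  have := (Algebra.TensorProduct.includeLeft_injective (S := L) (A := R)
    (algebraMap L Ω).injective).nontrivial
  refine ⟨bot_ne_top, fun I hI => or_iff_not_imp_left.2 fun hbot => ?_⟩
  have hle := hs.le_span_fixed (Algebra.TensorProduct.basis R (Basis.ofVectorSpace L Ω))
    (repr_map_tensor hΦ hF _) (N := I.restrictScalars R) hI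
  obtain ⟨y, ⟨hyI, hy⟩, hy0⟩ : ∃ y, (y ∈ I ∧ F y = y) ∧ y ≠ 0 := by
    by_contra! hzero
    exact hbot (eq_bot_iff.2 fun x hx =>
      Submodule.span_le (p := (⊥ : Submodule R (R ⊗[L] Ω))).2 hzero (hle hx))
  obtain ⟨ω, rfl⟩ := fixed_mem_range_tensor hΦ hconst hF hy
  have hω : ω ≠ 0 := fun h => hy0 (h ▸ map_zero _)
  exact Ideal.eq_top_of_isUnit_mem _ hyI ((IsUnit.mk0 ω hω).map _)

theorem IsUnimodularSystem.baseChange {K m : Type*} [Field K] [Algebra K R] [SMulCommClass L K R]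
    [Fintype m] [DecidableEq m] {φ σ : K →+* K} {τ : L →+* L} {σΩ : Ω →+* Ω} {Ψ : R →+* R}
    {A : ℕ → Matrix m m K} {U : ℕ → Matrix m m R} (h : IsUnimodularSystem φ σ τ Φ Ψ A U)
    (hσΩ : σΩ.comp (algebraMap L Ω) = (algebraMap L Ω).comp τ) :
    IsUnimodularSystem φ σ σΩ
      (Algebra.TensorProduct.mapRingHom (RingHom.id L) Φ (RingHom.id Ω) h.comp_algebraMap_const rfl)
      (Algebra.TensorProduct.mapRingHom τ Ψ σΩ h.shift_comp_algebraMap_const hσΩ) A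
      fun j => (U j).map (Algebra.TensorProduct.includeLeftRingHom : R →+* R ⊗[L] Ω) := by
  let F := Algebra.TensorProduct.mapRingHom (RingHom.id L) Φ (RingHom.id Ω)
    h.comp_algebraMap_const rfl
  let G := Algebra.TensorProduct.mapRingHom τ Ψ σΩ h.shift_comp_algebraMap_const hσΩ
  have hF (r ω) : F (r ⊗ₜ ω) = Φ r ⊗ₜ ω := Algebra.TensorProduct.mapRingHom_tmul ..
  have hG (r ω) : G (r ⊗ₜ ω) = Ψ r ⊗ₜ σΩ ω := Algebra.TensorProduct.mapRingHom_tmul ..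
  have hΦ := RingHom.congr_fun h.comp_algebraMap_const
  have hGι (r : R) : G (r ⊗ₜ 1) = Ψ r ⊗ₜ 1 := by rw [hG, map_one]
  have hcomm : F.comp G = G.comp F :=
    Algebra.TensorProduct.ringHom_ext
      (RingHom.ext fun r => by simp [hF, hG, h.comm]) (RingHom.ext fun ω => by simp [hF, hG])
  exact
    { comm := RingHom.congr_fun hcomm
      diffSimple := h.diffSimple.tensor hΦ h.fixed_mem_range hF
      fixed_mem_range := fun x => fixed_mem_range_tensor hΦ h.fixed_mem_range hF
      comp_algebraMap := RingHom.ext fun a =>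
        (hF _ 1).trans (congrArg (· ⊗ₜ 1) (RingHom.congr_fun h.comp_algebraMap a))
      shift_comp_algebraMap := RingHom.ext fun a =>
        (hGι _).trans (congrArg (· ⊗ₜ 1) (RingHom.congr_fun h.shift_comp_algebraMap a))
      comp_algebraMap_const := Algebra.TensorProduct.mapRingHom_comp_includeRight ..
      shift_comp_algebraMap_const := Algebra.TensorProduct.mapRingHom_comp_includeRight ..
      isFundamental :=
        { det_eq_one := fun j => det_map_eq_one _ (h.isFundamental.det_eq_one j)
          map_eq := fun j => by
            rw [show ((U j).map Algebra.TensorProduct.includeLeftRingHom).map F =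
              ((U j).map Φ).map Algebra.TensorProduct.includeLeftRingHom from
                Matrix.ext fun p q => hF _ 1, h.isFundamental.map_eq, Matrix.map_mul]
            rfl }
      shift_eq := fun j => by
        rw [← h.shift_eq]
        exact Matrix.ext fun p q => hGι _ }

-- A fixed element `r` of `R` stays fixed in `R ⊗ Ω`, and if it is not the image of `a` there then
-- `r - a` is already a unit of `R`, hence of one of the algebras `K[U₀, …, U_{n-1}]`.
theorem IsUnimodularSystem.fixed_mem_of_forall_mem_adjoinEntries {K L R : Type u} {m : Type*}
    [Field K] [Field L] [CommRing R] [Algebra K R] [Algebra L R] [Fintype m] [DecidableEq m]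
    {φ σ : K →+* K} {τ : L →+* L} {Φ Ψ : R →+* R} {A : ℕ → Matrix m m K} {U : ℕ → Matrix m m R}
    {hcomm : ∀ a, φ (σ a) = σ (φ a)} (hcl : SigmaClosed (sigmaRes φ σ hcomm))
    (h : IsUnimodularSystem φ σ τ Φ Ψ A U) (hgen : ∀ r, ∃ n, r ∈ adjoinEntries K ∅ U n) {r : R}
    (hr : Φ r = r) : ∃ a, φ a = a ∧ algebraMap K R a = r := by
  have := h.diffSimple.nontrivial
  let Ω := AlgebraicClosure L
  obtain ⟨σΩ, hσΩ⟩ := exists_ringHom_extension (E := Ω) ((algebraMap L Ω).comp τ)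
  have hfix (a : K) (ha : φ a = a) : Φ (algebraMap K R a) = algebraMap K R a := by
    rw [← RingHom.comp_apply, h.comp_algebraMap, RingHom.comp_apply, ha]
  obtain ⟨g, hg⟩ := exists_ringHom_comp_eq (algebraMap L R).injective
    (f := (algebraMap K R).comp (constSubfield K φ).subtype)
    (by rintro _ ⟨a, rfl⟩; exact h.fixed_mem_range _ (hfix a a.2))
  obtain ⟨l, rfl⟩ := h.fixed_mem_range r hr
  have : SMulCommClass L K R := ⟨fun l k r => by simp only [Algebra.smul_def]; ring⟩
  let ι : R →ₐ[K] R ⊗[L] Ω := Algebra.TensorProduct.includeLeft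
  have hι : Function.Injective ι := Algebra.TensorProduct.includeLeft_injective (S := L) (A := R)
    (algebraMap L Ω).injective
  have hιL (l : L) : ι (algebraMap L R l) = algebraMap Ω (R ⊗[L] Ω) (algebraMap L Ω l) :=
    Algebra.TensorProduct.tmul_one_eq_one_tmul l
  let _ : Algebra (constSubfield K φ) Ω := ((algebraMap L Ω).comp g).toAlgebra
  have : IsScalarTower (constSubfield K φ) Ω (R ⊗[L] Ω) := .of_algebraMap_eq fun a =>
    (congrArg ι (RingHom.congr_fun hg a)).symm.trans (hιL (g a))
  obtain ⟨a, ha, hac⟩ := (h.baseChange (RingHom.ext hσΩ)).fixed_mem hcl (c := algebraMap L Ω l)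
    fun a ha hac => by
      rw [← hιL, ← ι.commutes] at hac ⊢
      obtain ⟨d, hd⟩ := (h.diffSimple.isUnit_of_fixed (c := algebraMap L R l - algebraMap K R a)
        (by rw [map_sub, hr, hfix a ha])
        (sub_ne_zero.2 fun e => hac (congrArg ι e.symm))).exists_right_inv
      obtain ⟨n, hn⟩ := hgen d
      exact ⟨n, ι d, _root_.map_mem_adjoinEntries (τ := ι.toRingHom)
        (fun a => ι.commutes a ▸ Subalgebra.algebraMap_mem _ a) (by simp)
        (fun _ hj => entry_mem_adjoinEntries hj) d hn, by rw [← map_sub, ← map_mul, hd, map_one]⟩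
  exact ⟨a, ha, hι (((ι.commutes a).trans hac).trans (hιL l).symm)⟩

end BaseChange

theorem DiffSimple.exists_field {R : Type u} [CommRing R] {Φ : R →+* R} (hs : DiffSimple Φ) :
    ∃ (L : Type u) (_ : Field L) (_ : Algebra L R),
      (algebraMap L R).range = Φ.eqLocus (RingHom.id R) := by
  have := hs.nontrivial
  have hfield : IsField (Φ.eqLocus (RingHom.id R)) := by
    refine ⟨⟨0, 1, zero_ne_one⟩, mul_comm, fun {a} ha => ?_⟩
    have hΦa : Φ a = a := a.2
    obtain ⟨b, hb⟩ := (hs.isUnit_of_fixed hΦa (by simpa using ha)).exists_right_inv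
    have hΦb : Φ b = b := by
      refine (left_inv_eq_right_inv ((mul_comm b _).trans hb) ?_).symm
      rw [← hΦa, ← map_mul, hb, map_one]
    exact ⟨⟨b, hΦb⟩, Subtype.ext hb⟩
  let i := (Φ.eqLocus (RingHom.id R)).subtype
  exact ⟨_, hfield.toField, i.toAlgebra, (Φ.eqLocus (RingHom.id R)).range_subtype⟩

section Reduction

variable {K R n : Type*} [Field K] [CommRing R] [Algebra K R]

/-- The block diagonal matrix `diag(Y, w)`. It has determinant one when `w` is inverse to `det Y`,
which turns a fundamental solution matrix into a unimodular one. -/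
def unimodularBlock {R n : Type*} [Zero R] (Y : Matrix n n R) (w : R) :
    Matrix (n ⊕ Unit) (n ⊕ Unit) R :=
  Matrix.fromBlocks Y 0 0 (Matrix.of fun _ _ => w)

theorem unimodularBlock_map {R' : Type*} [CommRing R'] (Y : Matrix n n R) (w : R) (f : R →+* R') :
    (unimodularBlock Y w).map f = unimodularBlock (Y.map f) (f w) := by
  rw [unimodularBlock, Matrix.fromBlocks_map, Matrix.map_zero _ (map_zero f),
    Matrix.map_zero _ (map_zero f)]
  rfl

theorem exists_mem_adjoinEntries_of_adjoin_eq_top {Ψ : R →+* R} {Y : Matrix n n R} {w : ℕ → R}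
    (hgen : Algebra.adjoin K ({x : R | ∃ (i : ℕ) (p q : n), (Y.map Ψ^[i]) p q = x} ∪
      Set.range w) = ⊤) (r : R) :
    ∃ N, r ∈ adjoinEntries K ∅ (fun j => unimodularBlock (Y.map Ψ^[j]) (w j)) N := by
  let C := adjoinEntries K ∅ fun j => unimodularBlock (Y.map Ψ^[j]) (w j)
  have hmono : Monotone C := fun _ _ => adjoinEntries_mono subset_rfl
  have hC (j : ℕ) (p q) : unimodularBlock (Y.map Ψ^[j]) (w j) p q ∈ ⨆ N, C N :=
    le_iSup C (j + 1) (entry_mem_adjoinEntries (Nat.lt_succ_self j) p q)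
  have htop : ⊤ ≤ ⨆ N, C N := by
    rw [← hgen]
    refine Algebra.adjoin_le (Set.union_subset ?_ ?_)
    · rintro _ ⟨i, p, q, rfl⟩
      exact hC i (Sum.inl p) (Sum.inl q)
    · rintro _ ⟨i, rfl⟩
      exact hC i (Sum.inr ()) (Sum.inr ())
  have hr : r ∈ (↑(⨆ N, C N) : Set R) := htop Algebra.mem_top
  rw [Subalgebra.coe_iSup_of_directed hmono.directed_le] at hr
  exact Set.mem_iUnion.1 hr

variable [Fintype n]

theorem unimodularBlock_mul (Y Z : Matrix n n R) (w v : R) :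
    unimodularBlock (Y * Z) (w * v) = unimodularBlock Y w * unimodularBlock Z v := by
  simp only [unimodularBlock, Matrix.fromBlocks_multiply, Matrix.zero_mul, Matrix.mul_zero,
    add_zero, zero_add]
  congr 1
  ext
  simp [Matrix.mul_apply]

variable [DecidableEq n]

theorem det_unimodularBlock (Y : Matrix n n R) (w : R) :
    (unimodularBlock Y w).det = Y.det * w := by
  rw [unimodularBlock, Matrix.det_fromBlocks_zero₂₁, Matrix.det_unique (n := Unit), Matrix.of_apply]

theorem unimodularBlock_map_eq_mul [Nontrivial R] {Φ : R →+* R} {A : Matrix n n K}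
    {Y : Matrix n n R} {w : R} (hY : Y.map Φ = A.map (algebraMap K R) * Y) (hw : Y.det * w = 1) :
    (unimodularBlock Y w).map Φ =
      (unimodularBlock A A.det⁻¹).map (algebraMap K R) * unimodularBlock Y w := by
  have hdet : algebraMap K R A.det * Y.det * Φ w = 1 := by
    rw [RingHom.map_det, RingHom.mapMatrix_apply, ← Matrix.det_mul, ← hY, ← RingHom.mapMatrix_apply,
      ← RingHom.map_det, ← map_mul, hw, map_one]
  have hA : A.det ≠ 0 := fun h => by simp [h] at hdet
  have hwΦ : Φ w = algebraMap K R A.det⁻¹ * w := by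
    refine (left_inv_eq_right_inv ?_ hdet).symm
    calc algebraMap K R A.det⁻¹ * w * (algebraMap K R A.det * Y.det)
        = algebraMap K R (A.det⁻¹ * A.det) * (Y.det * w) := by rw [map_mul]; ring
      _ = 1 := by rw [inv_mul_cancel₀ hA, hw, map_one, one_mul]
  rw [unimodularBlock_map, unimodularBlock_map, ← unimodularBlock_mul, hY, hwΦ]

theorem isFundamental_unimodularBlock [Nontrivial R] {σ : K →+* K} {Φ Ψ : R →+* R}
    (hcomm : Φ.comp Ψ = Ψ.comp Φ) (hΨ : Ψ.comp (algebraMap K R) = (algebraMap K R).comp σ)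
    {A : Matrix n n K} {Y : Matrix n n R} {w : ℕ → R} (hY : Y.map Φ = A.map (algebraMap K R) * Y)
    (hw : ∀ i, (Y.map Ψ^[i]).det * w i = 1) :
    IsFundamental Φ
      (fun j => (unimodularBlock (A.map σ^[j]) (A.map σ^[j]).det⁻¹).map (algebraMap K R))
      fun j => unimodularBlock (Y.map Ψ^[j]) (w j) := by
  have hYj (j : ℕ) : (Y.map Ψ^[j]).map Φ = (A.map σ^[j]).map (algebraMap K R) * Y.map Ψ^[j] := by
    induction j with
    | zero => exact hY
    | succ j ih =>
      rw [Function.iterate_succ', Function.iterate_succ', ← Matrix.map_map, ← Matrix.map_map,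
        Matrix.map_map, ← RingHom.coe_comp, hcomm, RingHom.coe_comp, ← Matrix.map_map, ih,
        Matrix.map_mul, Matrix.map_map, ← RingHom.coe_comp, hΨ, RingHom.coe_comp, Matrix.map_map,
        Matrix.map_map]
      rfl
  exact ⟨fun j => (det_unimodularBlock _ _).trans (hw j),
    fun j => unimodularBlock_map_eq_mul (hYj j) (hw j)⟩

theorem unimodularBlock_map_iterate {Ψ : R →+* R} {Y : Matrix n n R} {w : ℕ → R}
    (hw : ∀ i, (Y.map Ψ^[i]).det * w i = 1) (j : ℕ) :
    (unimodularBlock (Y.map Ψ^[j]) (w j)).map Ψ =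
      unimodularBlock (Y.map Ψ^[j + 1]) (w (j + 1)) := by
  have hYj : (Y.map Ψ^[j]).map Ψ = Y.map Ψ^[j + 1] := by
    rw [Matrix.map_map, Function.iterate_succ']
  have hwj : Ψ (w j) = w (j + 1) := by
    refine left_inv_eq_right_inv ((mul_comm _ _).trans ?_) (hw (j + 1))
    rw [← hYj, ← RingHom.mapMatrix_apply, ← RingHom.map_det, ← map_mul, hw, map_one]
  rw [unimodularBlock_map, hYj, hwj]

end Reduction

theorem IsFundamental.exists_isUnimodularSystem {K R m : Type*} {L : Type*} [Field K] [Field L]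
    [CommRing R] [Algebra K R] [Algebra L R] [Fintype m] [DecidableEq m] {φ σ : K →+* K}
    {Φ Ψ : R →+* R} {A : ℕ → Matrix m m K} {U : ℕ → Matrix m m R}
    (h : IsFundamental Φ (fun j => (A j).map (algebraMap K R)) U) (hs : DiffSimple Φ)
    (hL : (algebraMap L R).range = Φ.eqLocus (RingHom.id R)) (hcomm : Φ.comp Ψ = Ψ.comp Φ)
    (hΦ : Φ.comp (algebraMap K R) = (algebraMap K R).comp φ)
    (hΨ : Ψ.comp (algebraMap K R) = (algebraMap K R).comp σ) (hU : ∀ j, (U j).map Ψ = U (j + 1)) :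
    ∃ τ : L →+* L, IsUnimodularSystem φ σ τ Φ Ψ A U := by
  have := hs.nontrivial
  have hΦL (l : L) : Φ (algebraMap L R l) = algebraMap L R l :=
    hL.le ⟨l, rfl⟩
  obtain ⟨τ, hτ⟩ := exists_ringHom_comp_eq (algebraMap L R).injective
    (f := Ψ.comp (algebraMap L R)) (by
      rw [hL]
      rintro _ ⟨l, rfl⟩
      exact (RingHom.congr_fun hcomm _).trans (congrArg Ψ (hΦL l)))
  exact ⟨τ,
    { comm := RingHom.congr_fun hcomm
      diffSimple := hs
      fixed_mem_range := fun _ hx => hL.ge hx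
      comp_algebraMap := hΦ
      shift_comp_algebraMap := hΨ
      comp_algebraMap_const := RingHom.ext hΦL
      shift_comp_algebraMap_const := hτ.symm
      isFundamental := h
      shift_eq := hU }⟩

theorem sigma_pv_ring_no_new_constants_general {K R : Type u} {n : Type*} [Field K] [CommRing R]
    [Algebra K R] [Fintype n] [DecidableEq n] {φ σ : K →+* K} {hcomm : ∀ a, φ (σ a) = σ (φ a)}
    (hclosed : SigmaClosed (sigmaRes φ σ hcomm)) {A : Matrix n n K} {Φ Ψ : R →+* R}
    (hcommR : Φ.comp Ψ = Ψ.comp Φ) (hΦ : ∀ a, Φ (algebraMap K R a) = algebraMap K R (φ a))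
    (hΨ : ∀ a, Ψ (algebraMap K R a) = algebraMap K R (σ a)) (hsimple : DiffSimple Φ)
    {Y : Matrix n n R} {w : ℕ → R} (hY : Y.map Φ = A.map (algebraMap K R) * Y)
    (hw : ∀ i, (Y.map Ψ^[i]).det * w i = 1)
    (hgen : Algebra.adjoin K ({x : R | ∃ (i : ℕ) (p q : n), (Y.map Ψ^[i]) p q = x} ∪
      Set.range w) = ⊤) {r : R} (hr : Φ r = r) : ∃ a, φ a = a ∧ algebraMap K R a = r := by
  have := hsimple.nontrivial
  obtain ⟨L, _, _, hL⟩ := hsimple.exists_field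
  obtain ⟨τ, hU⟩ := (isFundamental_unimodularBlock hcommR (RingHom.ext hΨ) hY
    hw).exists_isUnimodularSystem hsimple hL hcommR (RingHom.ext hΦ) (RingHom.ext hΨ)
    (unimodularBlock_map_iterate hw)
  exact hU.fixed_mem_of_forall_mem_adjoinEntries hclosed
    (exists_mem_adjoinEntries_of_adjoin_eq_top hgen) hr

end

/-- If `k = K^φ` is `σ`-closed, then a `σ`-PV ring `R` over `K` has no new `φ`-constants:
`R^Φ` equals the image of `k`. -/
theorem sigma_pv_ring_no_new_constants
    {K R : Type u} [Field K] [CommRing R] [Algebra K R] {n : ℕ}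
    (φ σ : K →+* K) (hcomm : ∀ a : K, φ (σ a) = σ (φ a))
    -- `k := K^φ` is `σ`-closed
    (hclosed : ∀ (B : Type u) (_ : CommRing B) (_ : IsDomain B)
      (_ : Algebra ↥(constSubfield K φ) B) (σB : B →+* B),
      (∀ c : ↥(constSubfield K φ),
        σB (algebraMap ↥(constSubfield K φ) B c)
          = algebraMap ↥(constSubfield K φ) B (sigmaRes φ σ hcomm c)) →
      Function.Injective σB →
      (∃ T : Finset B,
        Algebra.adjoin ↥(constSubfield K φ) {x : B | ∃ t ∈ T, ∃ m : ℕ, (⇑σB)^[m] t = x} = ⊤) →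
      ∃ g : B →ₐ[↥(constSubfield K φ)] ↥(constSubfield K φ),
        ∀ x : B, g (σB x) = sigmaRes φ σ hcomm (g x))
    -- `R` is a `σ`-PV ring over `K` for `φ(y) = Ay`
    (A : Matrix (Fin n) (Fin n) K) (hA : IsUnit A.det)
    (Φ σ' : R →+* R) (hcommR : Φ.comp σ' = σ'.comp Φ)
    (hΦ : ∀ a : K, Φ (algebraMap K R a) = algebraMap K R (φ a))
    (hσ : ∀ a : K, σ' (algebraMap K R a) = algebraMap K R (σ a))
    (hsimple : DiffSimple Φ) (hdom : PseudoDomain Φ)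
    (Y : Matrix (Fin n) (Fin n) R) (w : ℕ → R)
    (hY : Y.map ⇑Φ = A.map ⇑(algebraMap K R) * Y)
    (hw : ∀ i : ℕ, (Y.map ((⇑σ')^[i])).det * w i = 1)
    (hgen : Algebra.adjoin K
      ({x : R | ∃ (i : ℕ) (p q : Fin n), (Y.map ((⇑σ')^[i])) p q = x} ∪ Set.range w) = ⊤) :
    ∀ r : R, Φ r = r → ∃ a : K, φ a = a ∧ algebraMap K R a = r :=
  fun _ => sigma_pv_ring_no_new_constants_general hclosed hcommR hΦ hσ hsimple hY hw hgen
end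

section
/- Let F be a field with two commuting ring endomorphisms φ and σ, and let ι : ℂ(z) → F be an injective ring homomorphism from the field of rational functions RatFunc ℂ such that: φ(ι(C c)) = ι(C c) and σ(ι(C c)) = ι(C c) for every constant c ∈ ℂ; φ(ι(X)) = ι(C a₁ · X + C a₂) and σ(ι(X)) = ι(C b₁ · X + C b₂) with a₁, a₂, b₁, b₂ ∈ ℂ and a₁·b₁ ≠ 0; and φ^n(ι(X)) ≠ ι(X) for every n ≥ 1. Let 𝐤 := {x ∈ F | φ(x) = x} be the subfield of φ-constants. Let a ∈ RatFunc ℂ be nonzero and let f ∈ F be nonzero with φ(f) = ι(a) · f. Then the family (σ^n(f))_{n ≥ 0} is algebraically dependent over the subfield of F generated by 𝐤 and ι(X) if and only if there exist a nonzero b ∈ RatFunc ℂ, an integer t ≥ 1, and integers n₀, …, n_{t−1} not all zero, such that ∏_{i=0}^{t−1} (σ^i(ι(a)))^{n_i} = φ(ι(b)) · (ι(b))^{-1} in F. -/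
/-!
Let `K` be the field of constants of an endomorphism `φ` of `F` and let `E` be a `φ`-stable
subfield. The monomials in `φ`-eigenvectors are again `φ`-eigenvectors, so an algebraic relation
over `EK` is a linear relation between eigenvectors; uniqueness of coordinates forces two of the
eigenvalues involved to differ by a factor `φ c / c` with `c ∈ EK`.

Such a `c` satisfies `φ c = r * c` with `r ∈ E`. The elements `d` for which `d * c` lies in the
`E`-span of `K` form a `φ`-stable `E`-subspace `W`, nonzero because `c` is a quotient of elements
of the span. Take a shortest nonzero `E`-linear combination `w` of constants that lies in `W` and
normalise one coefficient to `1`: then `φ w - w` is shorter, so it vanishes and `w` is a constant.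
Hence `c` itself lies in the `E`-span of `K`, and its nonzero coordinates `b ∈ E` along constants
that are linearly independent over `E` satisfy `φ b = r * b`.
-/

/-- The field of constants of a field endomorphism `φ`, written `𝐤` in the theorem. -/
def constantSubfield {F : Type*} [Field F] (φ : F →+* F) : Subfield F :=
  φ.eqLocusField (RingHom.id F)

theorem mem_constantSubfield {F : Type*} [Field F] {φ : F →+* F} {x : F} :
    x ∈ constantSubfield φ ↔ φ x = x :=
  Iff.rfl

section LinearRelations

variable {F J : Type*} [Field F] {φ : F →+* F} {E : Subfield F}

/-- Any nonzero coordinate of `x` with respect to a maximal linearly independent subfamily of `m`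
serves as `c`. -/
theorem exists_mul_map_eq_mul_of_mem_span (hE : E ≤ E.comap φ) {m A : J → F} {x B : F}
    (hA : ∀ j, A j ∈ E) (hB : B ∈ E) (hm : ∀ j, φ (m j) = A j * m j) (hx : φ x = B * x)
    (hx₀ : x ≠ 0) (hxm : x ∈ Submodule.span E (Set.range m)) :
    ∃ j, ∃ c ∈ E, c ≠ 0 ∧ A j * φ c = B * c := by
  obtain ⟨κ, u, -, hspan, hli⟩ := exists_linearIndependent' E m
  rw [← hspan, Finsupp.mem_span_range_iff_exists_finsupp] at hxm
  obtain ⟨l, rfl⟩ := hxm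
  let d : κ → E := fun i => ⟨A (u i) * φ (l i) - B * l i,
    sub_mem (mul_mem (hA _) (hE (l i).2)) (mul_mem hB (l i).2)⟩
  have hd : ∑ i ∈ l.support, d i • (m ∘ u) i = 0 := by
    rw [Finsupp.sum, map_sum, Finset.mul_sum, ← sub_eq_zero, ← Finset.sum_sub_distrib] at hx
    rw [← hx]
    refine Finset.sum_congr rfl fun i _ => ?_
    simp only [d, Subfield.smul_def, Function.comp_apply, smul_eq_mul, map_mul, hm]
    ring
  have hd₀ := linearIndependent_iff'.mp hli _ d hd
  obtain ⟨i, hi⟩ : l.support.Nonempty := by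
    rw [Finsupp.support_nonempty_iff]
    rintro rfl
    exact hx₀ Finsupp.sum_zero_index
  refine ⟨u i, l i, (l i).2, ?_, ?_⟩
  · simpa using hi
  · exact sub_eq_zero.mp (congrArg Subtype.val (hd₀ i hi))

theorem exists_ne_mul_map_eq_mul_of_not_linearIndependent (hE : E ≤ E.comap φ) {m A : J → F}
    (hA : ∀ j, A j ∈ E) (hm₀ : ∀ j, m j ≠ 0) (hm : ∀ j, φ (m j) = A j * m j)
    (h : ¬ LinearIndependent E m) :
    ∃ i j, i ≠ j ∧ ∃ c ∈ E, c ≠ 0 ∧ A j * φ c = A i * c := by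
  obtain ⟨i, hi⟩ : ∃ i, m i ∈ Submodule.span E (m '' (Set.univ \ {i})) := by
    simpa only [linearIndependent_iff_notMem_span, not_forall, not_not] using h
  rw [Set.image_eq_range] at hi
  obtain ⟨⟨j, _, hji⟩, c, hc⟩ := exists_mul_map_eq_mul_of_mem_span hE
    (fun k : ↥(Set.univ \ {i}) => hA k) (hA i) (fun k => hm k) (hm i) (hm₀ i) hi
  exact ⟨i, j, fun hij => hji hij.symm, c, hc⟩

end LinearRelations

section Descent

variable {F : Type*} [Field F] {φ : F →+* F} {E : Subfield F}

theorem map_mem_span_of_subset_constantSubfield (hE : E ≤ E.comap φ) {S : Set F}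
    (hS : S ⊆ constantSubfield φ) {x : F} (hx : x ∈ Submodule.span E S) :
    φ x ∈ Submodule.span E S := by
  induction hx using Submodule.span_induction with
  | mem x hx =>
    rw [mem_constantSubfield.mp (hS hx)]
    exact Submodule.subset_span hx
  | zero => simp only [map_zero, zero_mem]
  | add x y _ _ hx hy => rw [map_add]; exact add_mem hx hy
  | smul e x _ hx =>
    rw [Subfield.smul_def, smul_eq_mul, map_mul]
    exact Submodule.smul_mem _ ⟨φ e, hE e.2⟩ hx

theorem exists_mem_constantSubfield_of_mem_span (hE : E ≤ E.comap φ) {W : Submodule E F}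
    (hW : ∀ x ∈ W, φ x ∈ W) {x : F} (hxW : x ∈ W) (hx₀ : x ≠ 0)
    (hx : x ∈ Submodule.span E (constantSubfield φ : Set F)) :
    ∃ κ ∈ W, κ ≠ 0 ∧ κ ∈ constantSubfield φ := by
  obtain ⟨S, hS, hxS⟩ := Submodule.mem_span_finite_of_mem_span hx
  clear hx
  induction S using Finset.cons_induction generalizing x with
  | empty =>
    rw [Finset.coe_empty, Submodule.span_empty, Submodule.mem_bot] at hxS
    exact absurd hxS hx₀
  | cons κ S _ ih =>
    rw [Finset.coe_cons] at hS hxS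
    obtain ⟨hκ, hS⟩ := Set.insert_subset_iff.mp hS
    obtain ⟨e, y, hy, rfl⟩ := Submodule.mem_span_insert.mp hxS
    obtain rfl | he := eq_or_ne e 0
    · rw [zero_smul, zero_add] at hxW hx₀
      exact ih hxW hx₀ hS hy
    have hnorm : e⁻¹ • (e • κ + y) = κ + e⁻¹ • y := by
      rw [smul_add, inv_smul_smul₀ he]
    have hyS : e⁻¹ • y ∈ Submodule.span E (S : Set F) := Submodule.smul_mem _ _ hy
    have hxW' : κ + e⁻¹ • y ∈ W := hnorm ▸ W.smul_mem e⁻¹ hxW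
    have hx₀' : κ + e⁻¹ • y ≠ 0 := hnorm ▸ smul_ne_zero (inv_ne_zero he) hx₀
    by_cases hfix : φ (κ + e⁻¹ • y) = κ + e⁻¹ • y
    · exact ⟨_, hxW', hx₀', hfix⟩
    · have hshort : φ (κ + e⁻¹ • y) - (κ + e⁻¹ • y) = φ (e⁻¹ • y) - e⁻¹ • y := by
        rw [map_add, mem_constantSubfield.mp hκ, add_sub_add_left_eq_sub]
      refine ih (sub_mem (hW _ hxW') hxW') (sub_ne_zero.mpr hfix) hS ?_
      rw [hshort]
      exact sub_mem (map_mem_span_of_subset_constantSubfield hE hS hyS) hyS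

theorem toSubmodule_adjoin_subfield_eq_span (R : Type*) [CommSemiring R] [Algebra R F]
    (K : Subfield F) :
    Subalgebra.toSubmodule (Algebra.adjoin R (K : Set F)) = Submodule.span R (K : Set F) := by
  rw [Algebra.adjoin_eq_span, ← K.coe_toSubmonoid, Submonoid.closure_eq]

theorem exists_div_of_mem_sup {K : Subfield F} {x : F} (hx : x ∈ E ⊔ K) :
    ∃ p ∈ Submodule.span E (K : Set F), ∃ q ∈ Submodule.span E (K : Set F), p / q = x := by
  have hle : E ⊔ K ≤ (IntermediateField.adjoin E (K : Set F)).toSubfield :=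
    sup_le (fun e he => IntermediateField.algebraMap_mem _ (⟨e, he⟩ : E))
      (IntermediateField.subset_adjoin E (K : Set F))
  obtain ⟨p, hp, q, hq, h⟩ := IntermediateField.mem_adjoin_iff_div.mp (hle hx)
  rw [← toSubmodule_adjoin_subfield_eq_span]
  exact ⟨p, hp, q, hq, h.symm⟩

theorem mem_span_constantSubfield_of_map_eq_mul (hE : E ≤ E.comap φ) {r c : F} (hr : r ∈ E)
    (hc₀ : c ≠ 0) (hc : c ∈ E ⊔ constantSubfield φ) (h : φ c = r * c) :
    c ∈ Submodule.span E (constantSubfield φ : Set F) := by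
  obtain ⟨p, hp, q, hq, hpq⟩ := exists_div_of_mem_sup hc
  have hq₀ : q ≠ 0 := by
    rintro rfl
    exact hc₀ (hpq ▸ div_zero p)
  have hr₀ : r ≠ 0 := left_ne_zero_of_mul (h ▸ (map_ne_zero φ).mpr hc₀)
  let W : Submodule E F := (Submodule.span E (constantSubfield φ : Set F)).comap
    (LinearMap.mulRight E c)
  have mem_W {d : F} : d ∈ W ↔ d * c ∈ Submodule.span E (constantSubfield φ : Set F) := Iff.rfl
  have hW (d : F) (hd : d ∈ W) : φ d ∈ W := by
    have hφd : φ d * c = r⁻¹ * φ (d * c) := by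
      rw [map_mul, h]
      field_simp
    rw [mem_W, hφd]
    exact Submodule.smul_mem _ (⟨r⁻¹, inv_mem hr⟩ : E)
      (map_mem_span_of_subset_constantSubfield hE subset_rfl (mem_W.mp hd))
  have hqW : q ∈ W := by
    rwa [mem_W, ← hpq, mul_div_cancel₀ _ hq₀]
  obtain ⟨κ, hκW, hκ₀, hκ⟩ := exists_mem_constantSubfield_of_mem_span hE hW hqW hq₀ hq
  rw [mem_W] at hκW
  rw [← toSubmodule_adjoin_subfield_eq_span, Subalgebra.mem_toSubmodule] at hκW ⊢
  rw [← inv_mul_cancel_left₀ hκ₀ c]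
  exact mul_mem (Algebra.subset_adjoin (inv_mem hκ)) hκW

theorem exists_mem_map_eq_mul_of_mem_sup (hE : E ≤ E.comap φ) {r c : F} (hr : r ∈ E)
    (hc₀ : c ≠ 0) (hc : c ∈ E ⊔ constantSubfield φ) (h : φ c = r * c) :
    ∃ b ∈ E, b ≠ 0 ∧ φ b = r * b := by
  have hspan := mem_span_constantSubfield_of_map_eq_mul hE hr hc₀ hc h
  rw [← Subtype.range_coe (s := (constantSubfield φ : Set F))] at hspan
  obtain ⟨-, b, hbE, hb₀, hb⟩ := exists_mul_map_eq_mul_of_mem_span hE (fun _ => one_mem E) hr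
    (fun κ => by rw [mem_constantSubfield.mp κ.2, one_mul]) h hc₀ hspan
  exact ⟨b, hbE, hb₀, by rwa [one_mul] at hb⟩

end Descent

section AlgebraicIndependence

variable {F J : Type*} [Field F]

theorem algebraicIndependent_iff_linearIndependent_monomials {L A : Type*} [CommRing L]
    [CommRing A] [Algebra L A] {g : J → A} :
    AlgebraicIndependent L g ↔
      LinearIndependent L fun d : J →₀ ℕ => d.prod fun j k => g j ^ k := by
  let e := (MvPolynomial.basisMonomials J L).repr
  have haeval : ⇑(MvPolynomial.aeval (R := L) g) =
      Finsupp.linearCombination L (fun d : J →₀ ℕ => d.prod fun j k => g j ^ k) ∘ e := by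
    have : (MvPolynomial.aeval (R := L) g).toLinearMap =
        Finsupp.linearCombination L (fun d : J →₀ ℕ => d.prod fun j k => g j ^ k) ∘ₗ
          e.toLinearMap := by
      refine (MvPolynomial.basisMonomials J L).ext fun d => ?_
      rw [LinearMap.comp_apply, LinearEquiv.coe_coe, Module.Basis.repr_self,
        Finsupp.linearCombination_single, one_smul, MvPolynomial.coe_basisMonomials,
        AlgHom.toLinearMap_apply, MvPolynomial.aeval_monomial, map_one, one_mul]
    exact congrArg DFunLike.coe this
  rw [AlgebraicIndependent, LinearIndependent, haeval, EquivLike.injective_comp]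

theorem prod_zpow_mul_prod_pow {G : Type*} [CommGroupWithZero G] {A : J → G}
    (hA : ∀ j, A j ≠ 0) {n : J →₀ ℤ} {d e : J →₀ ℕ} (h : ∀ j, n j + d j = e j) :
    (n.prod fun j k => A j ^ k) * (d.prod fun j k => A j ^ k) = e.prod fun j k => A j ^ k := by
  have hcast (c : J →₀ ℕ) : (c.prod fun j k => A j ^ k) =
      (c.mapRange (Nat.cast : ℕ → ℤ) Nat.cast_zero).prod fun j k => A j ^ k := by
    rw [Finsupp.prod_mapRange_index fun j => zpow_zero (A j)]
    simp only [zpow_natCast]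
  rw [hcast, hcast, ← Finsupp.prod_add_index' (fun j => zpow_zero (A j))
    fun j => zpow_add₀ (hA j)]
  congr 1
  ext j
  simpa using h j

theorem not_algebraicIndependent_of_prod_zpow_mem {L : Subfield F} {g : J → F}
    (hg : ∀ j, g j ≠ 0) {n : J →₀ ℤ} (hn : n ≠ 0) (h : (n.prod fun j k => g j ^ k) ∈ L) :
    ¬ AlgebraicIndependent L g := by
  let pos : J →₀ ℕ := n.mapRange Int.toNat rfl
  let neg : J →₀ ℕ := (-n).mapRange Int.toNat rfl
  have hsplit (j : J) : n j + neg j = pos j := by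
    simp only [pos, neg, Finsupp.mapRange_apply, Finsupp.neg_apply]
    lia
  have hne : neg ≠ pos := by
    intro heq
    refine hn (Finsupp.ext fun j => ?_)
    simpa [heq] using hsplit j
  rw [algebraicIndependent_iff_linearIndependent_monomials, linearIndependent_iff_notMem_span]
  intro hli
  apply hli pos
  rw [← prod_zpow_mul_prod_pow hg hsplit]
  exact Submodule.smul_mem _ (⟨_, h⟩ : L)
    (Submodule.subset_span (Set.mem_image_of_mem _ ⟨Set.mem_univ neg, hne⟩))

variable {φ : F →+* F} {E : Subfield F}

theorem exists_prod_zpow_mul_eq_map_of_not_algebraicIndependent (hE : E ≤ E.comap φ)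
    {g A : J → F} (hA : ∀ j, A j ∈ E) (hg₀ : ∀ j, g j ≠ 0) (hg : ∀ j, φ (g j) = A j * g j)
    (h : ¬ AlgebraicIndependent E g) :
    ∃ n : J →₀ ℤ, n ≠ 0 ∧ ∃ c ∈ E, c ≠ 0 ∧ φ c = (n.prod fun j k => A j ^ k) * c := by
  rw [algebraicIndependent_iff_linearIndependent_monomials] at h
  have hA₀ (j : J) : A j ≠ 0 := left_ne_zero_of_mul (hg j ▸ (map_ne_zero φ).mpr (hg₀ j))
  obtain ⟨e, d, hed, c, hcE, hc₀, hc⟩ := exists_ne_mul_map_eq_mul_of_not_linearIndependent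
    (m := fun d : J →₀ ℕ => d.prod fun j k => g j ^ k)
    (A := fun d : J →₀ ℕ => d.prod fun j k => A j ^ k) hE
    (fun d => prod_mem fun j _ => pow_mem (hA j) _)
    (fun d => Finset.prod_ne_zero_iff.mpr fun j _ => pow_ne_zero _ (hg₀ j))
    (fun d => by simp only [map_finsuppProd, map_pow, hg, mul_pow, Finsupp.prod_mul]) h
  let n : J →₀ ℤ := e.mapRange Nat.cast Nat.cast_zero - d.mapRange Nat.cast Nat.cast_zero
  have hsplit (j : J) : n j + d j = e j := by
    simp only [n, Finsupp.sub_apply, Finsupp.mapRange_apply, sub_add_cancel]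
  have hd₀ : (d.prod fun j k => A j ^ k) ≠ 0 :=
    Finset.prod_ne_zero_iff.mpr fun j _ => pow_ne_zero _ (hA₀ j)
  refine ⟨n, ?_, c, hcE, hc₀, mul_left_cancel₀ hd₀ ?_⟩
  · intro hn
    refine hed (Finsupp.ext fun j => ?_)
    simpa [hn, eq_comm] using hsplit j
  · rw [hc, ← prod_zpow_mul_prod_pow hA₀ hsplit]
    ring

theorem sup_constantSubfield_le_comap (hE : E ≤ E.comap φ) :
    E ⊔ constantSubfield φ ≤ (E ⊔ constantSubfield φ).comap φ :=
  sup_le (hE.trans fun _ hx => (le_sup_left : E ≤ E ⊔ constantSubfield φ) hx) fun x hx => by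
    rw [Subfield.mem_comap, mem_constantSubfield.mp hx]
    exact (le_sup_right : constantSubfield φ ≤ _) hx

/-- The difference analogue of the Kolchin–Ostrowski theorem for exponentials. -/
theorem not_algebraicIndependent_sup_constantSubfield_iff (hE : E ≤ E.comap φ) {g A : J → F}
    (hA : ∀ j, A j ∈ E) (hg₀ : ∀ j, g j ≠ 0) (hg : ∀ j, φ (g j) = A j * g j) :
    ¬ AlgebraicIndependent ↥(E ⊔ constantSubfield φ) g ↔
      ∃ b ∈ E, b ≠ 0 ∧ ∃ n : J →₀ ℤ, n ≠ 0 ∧ (n.prod fun j k => A j ^ k) = φ b * b⁻¹ := by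
  constructor
  · intro h
    obtain ⟨n, hn, c, hc, hc₀, hφc⟩ := exists_prod_zpow_mul_eq_map_of_not_algebraicIndependent
      (sup_constantSubfield_le_comap hE) (fun j => (le_sup_left : E ≤ _) (hA j)) hg₀ hg h
    obtain ⟨b, hb, hb₀, hφb⟩ := exists_mem_map_eq_mul_of_mem_sup hE
      (prod_mem fun j _ => zpow_mem (hA j) _) hc₀ hc hφc
    exact ⟨b, hb, hb₀, n, hn, (eq_mul_inv_iff_mul_eq₀ hb₀).mpr hφb.symm⟩
  · rintro ⟨b, hb, hb₀, n, hn, h⟩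
    refine not_algebraicIndependent_of_prod_zpow_mem hg₀ hn ?_
    have hφb₀ : φ b ≠ 0 := (map_ne_zero φ).mpr hb₀
    have hconst : (n.prod fun j k => g j ^ k) / b ∈ constantSubfield φ := by
      rw [mem_constantSubfield]
      simp only [map_div₀, map_finsuppProd, map_zpow₀, hg, mul_zpow, Finsupp.prod_mul, h]
      field_simp
    rw [← div_mul_cancel₀ (n.prod _) hb₀]
    exact mul_mem ((le_sup_right : constantSubfield φ ≤ _) hconst) ((le_sup_left : E ≤ _) hb)

end AlgebraicIndependence

theorem exists_finsupp_prod_zpow_eq_iff {G : Type*} [DivisionCommMonoid G] {A : ℕ → G} {x : G} :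
    (∃ n : ℕ →₀ ℤ, n ≠ 0 ∧ (n.prod fun i k => A i ^ k) = x) ↔
      ∃ t : ℕ, 1 ≤ t ∧ ∃ n : Fin t → ℤ, (∃ i, n i ≠ 0) ∧ ∏ i : Fin t, A i ^ n i = x := by
  constructor
  · rintro ⟨n, hn, rfl⟩
    obtain ⟨i₀, hi₀⟩ := DFunLike.ne_iff.mp hn
    obtain ⟨t, ht⟩ := n.support.exists_nat_subset_range
    have hi₀t : i₀ < t := Finset.mem_range.mp (ht (Finsupp.mem_support_iff.mpr hi₀))
    refine ⟨t, by lia, fun i => n i, ⟨⟨i₀, hi₀t⟩, hi₀⟩, ?_⟩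
    rw [← Finset.prod_range fun i => A i ^ n i]
    exact (n.prod_of_support_subset ht _ fun i _ => zpow_zero (A i)).symm
  · rintro ⟨t, -, n, ⟨i₀, hi₀⟩, rfl⟩
    refine ⟨(Finsupp.equivFunOnFinite.symm n).embDomain Fin.valEmbedding, ?_, ?_⟩
    · rw [Ne, Finsupp.embDomain_eq_zero]
      exact fun h => hi₀ (DFunLike.congr_fun h i₀)
    · rw [Finsupp.prod_embDomain, Finsupp.prod_fintype _ _ fun i => zpow_zero _]
      rfl

theorem sigma_algebraic_dependence_criterion_general {F : Type*} [Field F] {φ σ : F →+* F}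
    (hcomm : φ.comp σ = σ.comp φ) {E : Subfield F} (hφE : E ≤ E.comap φ) (hσE : E ≤ E.comap σ)
    {a f : F} (ha : a ∈ E) (hf : f ≠ 0) (heq : φ f = a * f) :
    ¬ AlgebraicIndependent ↥(E ⊔ constantSubfield φ) (fun n : ℕ => (⇑σ)^[n] f) ↔
      ∃ b ∈ E, b ≠ 0 ∧ ∃ t : ℕ, 1 ≤ t ∧ ∃ n : Fin t → ℤ, (∃ i, n i ≠ 0) ∧
        ∏ i : Fin t, (⇑σ)^[i] a ^ n i = φ b * b⁻¹ := by
  have hσa (n : ℕ) : (⇑σ)^[n] a ∈ E := Set.MapsTo.iterate (s := (E : Set F)) hσE n ha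
  have hσf (n : ℕ) : (⇑σ)^[n] f ≠ 0 := by
    rw [← RingHom.coe_pow]
    exact (map_ne_zero _).mpr hf
  have hφσf (n : ℕ) : φ ((⇑σ)^[n] f) = (⇑σ)^[n] a * (⇑σ)^[n] f := by
    have hcomm' : Function.Commute φ σ := DFunLike.congr_fun hcomm
    rw [hcomm'.iterate_right n f, heq, ← RingHom.coe_pow, map_mul]
  rw [not_algebraicIndependent_sup_constantSubfield_iff hφE hσa hσf hφσf]
  simp only [exists_finsupp_prod_zpow_eq_iff]

section RationalFunctions

variable {k F : Type*} [Field k] [Field F]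

theorem ratFunc_fieldRange_le_of_C_mem_of_X_mem {ψ : RatFunc k →+* F} {E : Subfield F}
    (hC : ∀ c, ψ (RatFunc.C c) ∈ E) (hX : ψ RatFunc.X ∈ E) : ψ.fieldRange ≤ E := by
  have hpoly (p : Polynomial k) : ψ (algebraMap (Polynomial k) (RatFunc k) p) ∈ E := by
    induction p using Polynomial.induction_on with
    | C c => simpa using hC c
    | add p q hp hq => simpa using add_mem hp hq
    | monomial n c _ => simpa using mul_mem (hC c) (pow_mem hX (n + 1))
  rintro _ ⟨r, rfl⟩
  rw [← RatFunc.num_div_denom r, map_div₀]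
  exact div_mem (hpoly _) (hpoly _)

theorem ratFunc_fieldRange_le_comap {ι : RatFunc k →+* F} {θ : F →+* F}
    (hC : ∀ c, θ (ι (RatFunc.C c)) = ι (RatFunc.C c)) (hX : θ (ι RatFunc.X) ∈ ι.fieldRange) :
    ι.fieldRange ≤ ι.fieldRange.comap θ :=
  ratFunc_fieldRange_le_of_C_mem_of_X_mem (fun c => ⟨RatFunc.C c, (hC c).symm⟩) hX

theorem closure_insert_X_eq_fieldRange_sup {ι : RatFunc k →+* F} {φ : F →+* F}
    (hC : ∀ c, φ (ι (RatFunc.C c)) = ι (RatFunc.C c)) :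
    Subfield.closure (insert (ι RatFunc.X) {x : F | φ x = x}) =
      ι.fieldRange ⊔ constantSubfield φ := by
  apply le_antisymm
  · rw [Subfield.closure_le, Set.insert_subset_iff]
    exact ⟨(le_sup_left : ι.fieldRange ≤ _) (ι.mem_fieldRange_self _),
      fun x hx => (le_sup_right : constantSubfield φ ≤ _) hx⟩
  · refine sup_le (ratFunc_fieldRange_le_of_C_mem_of_X_mem (fun c => ?_) ?_) fun x hx => ?_
    · exact Subfield.subset_closure (Set.mem_insert_of_mem _ (hC c))
    · exact Subfield.subset_closure (Set.mem_insert _ _)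
    · exact Subfield.subset_closure (Set.mem_insert_of_mem _ hx)

end RationalFunctions

/-- Criterion for `σ`-algebraic dependence of a solution of a first-order linear
`φ`-difference equation `φ(y) = a·y` over `ℂ(z)`: the solution `f` is `σ`-algebraically
dependent over `𝐤(z)` (the field generated by the `φ`-constants `𝐤` and `z`) if and only
if `φ(a)^{n₀} σ(a)^{n₁} ⋯ σ^{t-1}(a)^{n_{t-1}} = φ(b)/b` for some nonzero `b ∈ ℂ(z)` and
some integers `n₀, …, n_{t-1}` not all zero. -/
theorem sigma_algebraic_dependence_criterion
    {F : Type*} [Field F]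
    (φ σ : F →+* F) (hcomm : φ.comp σ = σ.comp φ)
    (ι : RatFunc ℂ →+* F) (hinj : Function.Injective ι)
    (hφC : ∀ c : ℂ, φ (ι (RatFunc.C c)) = ι (RatFunc.C c))
    (hσC : ∀ c : ℂ, σ (ι (RatFunc.C c)) = ι (RatFunc.C c))
    (a₁ a₂ b₁ b₂ : ℂ) (hne : a₁ * b₁ ≠ 0)
    (hφX : φ (ι RatFunc.X) = ι (RatFunc.C a₁ * RatFunc.X + RatFunc.C a₂))
    (hσX : σ (ι RatFunc.X) = ι (RatFunc.C b₁ * RatFunc.X + RatFunc.C b₂))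
    (hniter : ∀ n : ℕ, 1 ≤ n → (⇑φ)^[n] (ι RatFunc.X) ≠ ι RatFunc.X)
    (a : RatFunc ℂ) (ha : a ≠ 0) (f : F) (hf : f ≠ 0)
    (heq : φ f = ι a * f) :
    (¬ AlgebraicIndependent
        ↥(Subfield.closure (insert (ι RatFunc.X) {x : F | φ x = x}))
        (fun n : ℕ => (⇑σ)^[n] f)) ↔
    ∃ b : RatFunc ℂ, b ≠ 0 ∧ ∃ t : ℕ, 1 ≤ t ∧ ∃ nv : Fin t → ℤ, (∃ i, nv i ≠ 0) ∧
      (∏ i : Fin t, ((⇑σ)^[(i : ℕ)] (ι a)) ^ (nv i)) = φ (ι b) * (ι b)⁻¹ := by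
  rw [closure_insert_X_eq_fieldRange_sup hφC,
    sigma_algebraic_dependence_criterion_general hcomm
      (ratFunc_fieldRange_le_comap hφC ⟨_, hφX.symm⟩)
      (ratFunc_fieldRange_le_comap hσC ⟨_, hσX.symm⟩) (ι.mem_fieldRange_self a) hf heq]
  simp only [RingHom.mem_fieldRange, exists_exists_eq_and, map_ne_zero, ne_eq]
end
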